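/- arXiv:1611.02838 — 3 statements merged into one kernel-verified Lean document; each statement's English description precedes it below -/
import Mathlib

section
/- For 𝔽 ∈ {ℝ, ℂ} and integers n, m ≥ 3, the probability p^𝔽_{n,m} that a random positive map Φ : M_n(𝔽) → M_m(𝔽) is completely positive satisfies p^𝔽_{n,m} ≤ Vol S̃q_{𝒞_𝔽} / Vol P̃os_{𝒞_𝔽} < ( (2^{28−dim_ℝ𝔽})^{1/2} · 3^{−5/2} · 5² · 10^{2/9} / √(min(n,m) − 1/2) )^{D_{𝓜_{𝒞_𝔽}}}, where dim_ℝ𝔽 = 1 for 𝔽 = ℝ, dim_ℝ𝔽 = 2 for 𝔽 = ℂ, and D_{𝓜_{𝒞_𝔽}} = n²m² − 1 if 𝔽 = ℂ and nm(nm+1)/2 − 1 if 𝔽 = ℝ. -/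
open MeasureTheory MvPolynomial

noncomputable section

namespace BiformPaper

/-- The weight function on the variables: the `x`-variables get weight `(1,0)` and the
`y`-variables get weight `(0,1)`. -/
def bw (n m : ℕ) : Fin n ⊕ Fin m → ℕ × ℕ := Sum.elim (fun _ => (1, 0)) (fun _ => (0, 1))

/-- The set of biforms of bidegree `(k₁, k₂)`: real polynomials in
`x = (x₁, …, xₙ)` and `y = (y₁, …, y_m)`, homogeneous of degree `k₁` in `x` and of degree
`k₂` in `y`. -/
def Biform (n m k₁ k₂ : ℕ) : Set (MvPolynomial (Fin n ⊕ Fin m) ℝ) :=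
  {f | MvPolynomial.IsWeightedHomogeneous (bw n m) f (k₁, k₂)}

/-- Evaluation of a polynomial at a point `(x, y) ∈ ℝⁿ × ℝᵐ`. -/
def beval {n m : ℕ} (f : MvPolynomial (Fin n ⊕ Fin m) ℝ) (x : Fin n → ℝ) (y : Fin m → ℝ) : ℝ :=
  eval (Sum.elim x y) f

/-- The Euclidean unit sphere `S^{n-1}` in `ℝⁿ`. -/
def unitSphere (n : ℕ) : Set (Fin n → ℝ) := {x | ∑ i, x i ^ 2 = 1}

/-- `σ` is the normalized uniform measure on the unit sphere `S^{n-1} ⊆ ℝⁿ`, i.e., the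
unique rotation-invariant Borel probability measure concentrated on the sphere. -/
structure IsSphereMeasure (n : ℕ) (σ : Measure (Fin n → ℝ)) : Prop where
  prob : IsProbabilityMeasure σ
  onSphere : σ (unitSphere n)ᶜ = 0
  invariant : ∀ Q : Matrix (Fin n) (Fin n) ℝ, Q * Q.transpose = 1 → σ.map Q.mulVec = σ

/-- The average `∫_T f dσ` of `f` over `T = S^{n-1} × S^{m-1}` (with `σ` the product of the
normalized sphere measures `σ₁`, `σ₂`). -/
def bavg {n m : ℕ} (σ₁ : Measure (Fin n → ℝ)) (σ₂ : Measure (Fin m → ℝ))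
    (f : MvPolynomial (Fin n ⊕ Fin m) ℝ) : ℝ :=
  ∫ x, ∫ y, beval f x y ∂σ₂ ∂σ₁

/-- The `L²(σ)` inner product `⟨f, g⟩ = ∫_T f·g dσ` on biforms. -/
def bip {n m : ℕ} (σ₁ : Measure (Fin n → ℝ)) (σ₂ : Measure (Fin m → ℝ))
    (f g : MvPolynomial (Fin n ⊕ Fin m) ℝ) : ℝ :=
  ∫ x, ∫ y, beval f x y * beval g x y ∂σ₂ ∂σ₁

/-- The cone `Pos^{(n,m)}_{(2k₁,2k₂)}` of nonnegative biforms of bidegree `(2k₁, 2k₂)`. -/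
def PosSet (n m k₁ k₂ : ℕ) : Set (MvPolynomial (Fin n ⊕ Fin m) ℝ) :=
  {f | f ∈ Biform n m (2 * k₁) (2 * k₂) ∧ ∀ x y, 0 ≤ beval f x y}

/-- The cone `Sq^{(n,m)}_{(2k₁,2k₂)}` of finite sums of squares of biforms of bidegree
`(k₁, k₂)`. -/
def SqSet (n m k₁ k₂ : ℕ) : Set (MvPolynomial (Fin n ⊕ Fin m) ℝ) :=
  {f | ∃ (N : ℕ) (g : Fin N → MvPolynomial (Fin n ⊕ Fin m) ℝ),
      (∀ i, g i ∈ Biform n m k₁ k₂) ∧ f = ∑ i, g i ^ 2}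

/-- The cone `Lf^{(n,m)}_{(2k₁,2k₂)}` of finite sums of products
`ℓᵢ(x)^{2k₁} · ℓ′ᵢ(y)^{2k₂}` of even powers of linear forms. -/
def LfSet (n m k₁ k₂ : ℕ) : Set (MvPolynomial (Fin n ⊕ Fin m) ℝ) :=
  {f | ∃ (N : ℕ) (a : Fin N → Fin n → ℝ) (b : Fin N → Fin m → ℝ),
      f = ∑ r, (∑ i, C (a r i) * X (Sum.inl i)) ^ (2 * k₁) *
               (∑ j, C (b r j) * X (Sum.inr j)) ^ (2 * k₂)}

/-- The biform `q = (x₁² + ⋯ + xₙ²)^{k₁} · (y₁² + ⋯ + y_m²)^{k₂}`. -/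
def qpoly (n m k₁ k₂ : ℕ) : MvPolynomial (Fin n ⊕ Fin m) ℝ :=
  (∑ i : Fin n, X (Sum.inl i) ^ 2) ^ k₁ * (∑ j : Fin m, X (Sum.inr j) ^ 2) ^ k₂

/-- The hyperplane `𝓜` of biforms of bidegree `(2k₁, 2k₂)` with average `0` on `T`. -/
def MSet (n m k₁ k₂ : ℕ) (σ₁ : Measure (Fin n → ℝ)) (σ₂ : Measure (Fin m → ℝ)) :
    Set (MvPolynomial (Fin n ⊕ Fin m) ℝ) :=
  {f | f ∈ Biform n m (2 * k₁) (2 * k₂) ∧ bavg σ₁ σ₂ f = 0}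

/-- The translated section `K̃ = {f ∈ 𝓜 : f + q ∈ K}` of a cone `K`. -/
def tilde (n m k₁ k₂ : ℕ) (σ₁ : Measure (Fin n → ℝ)) (σ₂ : Measure (Fin m → ℝ))
    (K : Set (MvPolynomial (Fin n ⊕ Fin m) ℝ)) : Set (MvPolynomial (Fin n ⊕ Fin m) ℝ) :=
  {f | f ∈ MSet n m k₁ k₂ σ₁ σ₂ ∧ f + qpoly n m k₁ k₂ ∈ K}

/-- The unit ball `B_𝓜` of `𝓜` in the `L²(σ)` norm. -/
def bball (n m k₁ k₂ : ℕ) (σ₁ : Measure (Fin n → ℝ)) (σ₂ : Measure (Fin m → ℝ)) :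
    Set (MvPolynomial (Fin n ⊕ Fin m) ℝ) :=
  {f | f ∈ MSet n m k₁ k₂ σ₁ σ₂ ∧ bip σ₁ σ₂ f f ≤ 1}

/-- `ψ : ℝ^D → Mset` is a unitary isomorphism: an injective linear map with range `Mset`
carrying the standard inner product of `ℝ^D` to the `L²(σ)` inner product.  Volumes of
Borel subsets `E` of `Mset` are computed as the Lebesgue measure of `ψ ⁻¹' E`
(by Lemma 1.1 of the paper this does not depend on the choice of `ψ`). -/
structure IsUnitaryParam (n m D : ℕ) (σ₁ : Measure (Fin n → ℝ)) (σ₂ : Measure (Fin m → ℝ))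
    (Mset : Set (MvPolynomial (Fin n ⊕ Fin m) ℝ))
    (ψ : (Fin D → ℝ) →ₗ[ℝ] MvPolynomial (Fin n ⊕ Fin m) ℝ) : Prop where
  inj : Function.Injective ψ
  range : Set.range ψ = Mset
  ip : ∀ a b : Fin D → ℝ, bip σ₁ σ₂ (ψ a) (ψ b) = ∑ i, a i * b i

/-- The apolar inner product `⟨r, s⟩_d = D_r(s)` on biforms, where `D_r` is the
differential operator obtained from `r` by replacing each variable by the corresponding
partial derivative; its value on a pair of forms of the same bidegree is
`∑_α r_α · s_α · α!`. -/
def apolar {n m : ℕ} (r s : MvPolynomial (Fin n ⊕ Fin m) ℝ) : ℝ :=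
  ∑ α ∈ r.support, coeff α r * coeff α s * α.prod fun _ k => (k.factorial : ℝ)

end BiformPaper

namespace BiformPaper

/-! ### The complex/real multiform setting

Complex variables `z_j = x_j + i·x_{n+j}` (`1 ≤ j ≤ n`) and `w_k = y_k + i·y_{m+k}`
(`1 ≤ k ≤ m`) inside polynomials in the real variables `x = (x₁,…,x_{2n})`,
`y = (y₁,…,y_{2m})`. -/

/-- The real part `x_j` of the complex variable `z_j`. -/
def zRe (n m : ℕ) (i : Fin n) : MvPolynomial (Fin (2 * n) ⊕ Fin (2 * m)) ℂ :=
  X (Sum.inl ⟨i.1, by have := i.2; omega⟩)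

/-- The imaginary part `x_{n+j}` of the complex variable `z_j`. -/
def zIm (n m : ℕ) (i : Fin n) : MvPolynomial (Fin (2 * n) ⊕ Fin (2 * m)) ℂ :=
  X (Sum.inl ⟨n + i.1, by have := i.2; omega⟩)

/-- The real part `y_k` of the complex variable `w_k`. -/
def wRe (n m : ℕ) (k : Fin m) : MvPolynomial (Fin (2 * n) ⊕ Fin (2 * m)) ℂ :=
  X (Sum.inr ⟨k.1, by have := k.2; omega⟩)

/-- The imaginary part `y_{m+k}` of the complex variable `w_k`. -/
def wIm (n m : ℕ) (k : Fin m) : MvPolynomial (Fin (2 * n) ⊕ Fin (2 * m)) ℂ :=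
  X (Sum.inr ⟨m + k.1, by have := k.2; omega⟩)

/-- The complex variable `z_j = x_j + i·x_{n+j}` as a complex polynomial. -/
def Zv (n m : ℕ) (i : Fin n) : MvPolynomial (Fin (2 * n) ⊕ Fin (2 * m)) ℂ :=
  zRe n m i + C Complex.I * zIm n m i

/-- The conjugate variable `z̄_j = x_j − i·x_{n+j}`. -/
def Zc (n m : ℕ) (i : Fin n) : MvPolynomial (Fin (2 * n) ⊕ Fin (2 * m)) ℂ :=
  zRe n m i - C Complex.I * zIm n m i

/-- The complex variable `w_k = y_k + i·y_{m+k}`. -/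
def Wv (n m : ℕ) (k : Fin m) : MvPolynomial (Fin (2 * n) ⊕ Fin (2 * m)) ℂ :=
  wRe n m k + C Complex.I * wIm n m k

/-- The conjugate variable `w̄_k = y_k − i·y_{m+k}`. -/
def Wc (n m : ℕ) (k : Fin m) : MvPolynomial (Fin (2 * n) ⊕ Fin (2 * m)) ℂ :=
  wRe n m k - C Complex.I * wIm n m k

/-- The multiform `∑ a_{ijkl}·z̄ᵢ·zⱼ·w̄ₖ·w_l` determined by coefficients `a`. -/
def herm (n m : ℕ) (a : Fin n → Fin n → Fin m → Fin m → ℂ) :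
    MvPolynomial (Fin (2 * n) ⊕ Fin (2 * m)) ℂ :=
  ∑ i, ∑ j, ∑ k, ∑ l, C (a i j k l) * Zc n m i * Zv n m j * Wc n m k * Wv n m l

/-- The subspace `𝒞_𝔽 ⊆ ℝ[x,y]_{2,2}`: the image under the substitution
`z_j = x_j + i·x_{n+j}`, `w_k = y_k + i·y_{m+k}` of the real vector space
`Symm𝔽[z,z̄,w,w̄]_{1,1,1,1}` of symmetric multiforms of multidegree `(1,1,1,1)`
(`𝔽 = ℝ` corresponds to `isR = true`, `𝔽 = ℂ` to `isR = false`). -/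
def CF (n m : ℕ) (isR : Bool) : Set (MvPolynomial (Fin (2 * n) ⊕ Fin (2 * m)) ℝ) :=
  {f | ∃ a : Fin n → Fin n → Fin m → Fin m → ℂ,
    (∀ i j k l, a i j k l = (starRingEnd ℂ) (a j i l k)) ∧
    (isR = true → ∀ i j k l, (a i j k l).im = 0) ∧
    MvPolynomial.map (algebraMap ℝ ℂ) f = herm n m a}

/-- The cone `Pos_{𝒞_𝔽}` of nonnegative multiforms. -/
def PosCF (n m : ℕ) (isR : Bool) : Set (MvPolynomial (Fin (2 * n) ⊕ Fin (2 * m)) ℝ) :=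
  {f | f ∈ CF n m isR ∧ ∀ x y, 0 ≤ beval f x y}

/-- The cone `Sq_{𝒞_𝔽}`: images of finite sums `∑ f_r*·f_r` of hermitian squares with
`f_r ∈ 𝔽[z,w]_{1,1}` bilinear in `z` and `w`. -/
def SqCF (n m : ℕ) (isR : Bool) : Set (MvPolynomial (Fin (2 * n) ⊕ Fin (2 * m)) ℝ) :=
  {f | ∃ (N : ℕ) (b : Fin N → Fin n → Fin m → ℂ),
    (isR = true → ∀ r i j, (b r i j).im = 0) ∧
    MvPolynomial.map (algebraMap ℝ ℂ) f =
      ∑ r, (∑ i, ∑ j, C ((starRingEnd ℂ) (b r i j)) * Zc n m i * Wc n m j) *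
           (∑ i, ∑ j, C (b r i j) * Zv n m i * Wv n m j)}

/-- The cone `𝒫_{𝒞_ℝ}` of multiforms (for `𝔽 = ℝ`) that are nonnegative on the real
points `z ∈ ℝⁿ`, `w ∈ ℝᵐ`. -/
def PRSet (n m : ℕ) : Set (MvPolynomial (Fin (2 * n) ⊕ Fin (2 * m)) ℝ) :=
  {f | f ∈ CF n m true ∧ ∀ (z : Fin n → ℝ) (w : Fin m → ℝ),
    0 ≤ beval f (fun i => if h : (i : ℕ) < n then z ⟨i, h⟩ else 0)
                (fun j => if h : (j : ℕ) < m then w ⟨j, h⟩ else 0)}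

/-- The hyperplane `𝓜_{𝒞_𝔽}` of elements of `𝒞_𝔽` with average `0` on
`T = S^{2n−1} × S^{2m−1}`. -/
def MCF (n m : ℕ) (isR : Bool) (σ₁ : Measure (Fin (2 * n) → ℝ))
    (σ₂ : Measure (Fin (2 * m) → ℝ)) : Set (MvPolynomial (Fin (2 * n) ⊕ Fin (2 * m)) ℝ) :=
  {f | f ∈ CF n m isR ∧ bavg σ₁ σ₂ f = 0}

/-- The translated section `K̃ = {f ∈ 𝓜_{𝒞_𝔽} : f + q ∈ K}` where
`q = (x₁²+⋯+x_{2n}²)(y₁²+⋯+y_{2m}²)`. -/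
def tildeCF (n m : ℕ) (isR : Bool) (σ₁ : Measure (Fin (2 * n) → ℝ))
    (σ₂ : Measure (Fin (2 * m) → ℝ)) (K : Set (MvPolynomial (Fin (2 * n) ⊕ Fin (2 * m)) ℝ)) :
    Set (MvPolynomial (Fin (2 * n) ⊕ Fin (2 * m)) ℝ) :=
  {f | f ∈ MCF n m isR σ₁ σ₂ ∧ f + qpoly (2 * n) (2 * m) 1 1 ∈ K}

/-- The unit ball `B_{𝓜_{𝒞_𝔽}}` of `𝓜_{𝒞_𝔽}` in the `L²(σ)` norm. -/
def ballCF (n m : ℕ) (isR : Bool) (σ₁ : Measure (Fin (2 * n) → ℝ))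
    (σ₂ : Measure (Fin (2 * m) → ℝ)) : Set (MvPolynomial (Fin (2 * n) ⊕ Fin (2 * m)) ℝ) :=
  {f | f ∈ MCF n m isR σ₁ σ₂ ∧ bip σ₁ σ₂ f f ≤ 1}

/-- `D_{𝓜_{𝒞_𝔽}}`. -/
def DCF (n m : ℕ) (isR : Bool) : ℕ :=
  if isR then n * m * (n * m + 1) / 2 - 1 else n ^ 2 * m ^ 2 - 1

end BiformPaper

namespace PositiveMaps

open Metric Set

/-! ### Gaussian measures attached to injective linear maps -/

section Gaussian

variable {D : ℕ} {H : Type*} [NormedAddCommGroup H] [InnerProductSpace ℝ H]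

/-- The unnormalized Gaussian measure with density `exp (-‖A x‖² / 2)`. -/
def gaussMeasure (A : (Fin D → ℝ) →ₗ[ℝ] H) : Measure (Fin D → ℝ) :=
  volume.withDensity fun x => ENNReal.ofReal (Real.exp (-‖A x‖ ^ 2 / 2))

lemma continuous_linear (A : (Fin D → ℝ) →ₗ[ℝ] H) : Continuous A :=
  A.continuous_of_finiteDimensional

lemma measurable_gaussDensity (A : (Fin D → ℝ) →ₗ[ℝ] H) :
    Measurable fun x => ENNReal.ofReal (Real.exp (-‖A x‖ ^ 2 / 2)) := by
  have := continuous_linear A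
  exact (by fun_prop : Continuous fun x => Real.exp (-‖A x‖ ^ 2 / 2)).measurable.ennreal_ofReal

lemma gaussMeasure_univ_ne_zero (A : (Fin D → ℝ) →ₗ[ℝ] H) : gaussMeasure A univ ≠ 0 := by
  rw [gaussMeasure, withDensity_apply _ MeasurableSet.univ, Measure.restrict_univ]
  refine ((lintegral_pos_iff_support (measurable_gaussDensity A)).2 ?_).ne'
  have : Function.support (fun x => ENNReal.ofReal (Real.exp (-‖A x‖ ^ 2 / 2))) = univ := by
    ext x
    simp [Real.exp_pos]
  rw [this]
  exact (isOpen_univ.measure_pos volume univ_nonempty)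

lemma gaussMeasure_univ_ne_top (A : (Fin D → ℝ) →ₗ[ℝ] H) (hA : Function.Injective A) :
    gaussMeasure A univ ≠ ⊤ := by
  rw [gaussMeasure, withDensity_apply _ MeasurableSet.univ, Measure.restrict_univ]
  obtain ⟨K, hK, hanti⟩ := A.exists_antilipschitzWith (LinearMap.ker_eq_bot.2 hA)
  have hK' : (0 : ℝ) < K := hK
  set c : ℝ := 1 / (2 * K ^ 2 * (D + 1)) with hc
  have hcpos : 0 < c := by positivity
  have hprod : Integrable (fun x : Fin D → ℝ => ∏ i, Real.exp (-c * x i ^ 2)) volume :=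
    Integrable.fintype_prod fun _ => integrable_exp_neg_mul_sq hcpos
  refine (lt_of_le_of_lt (lintegral_mono fun x => ?_) hprod.lintegral_lt_top).ne
  apply ENNReal.ofReal_le_ofReal
  rw [← Real.exp_sum]
  apply Real.exp_le_exp.2
  have h1 : ‖x‖ ≤ K * ‖A x‖ := by
    have := hanti.le_mul_dist x 0
    simpa [dist_zero_right] using this
  have h2 : ∑ i, x i ^ 2 ≤ D * ‖x‖ ^ 2 := by
    have : ∀ i ∈ (Finset.univ : Finset (Fin D)), x i ^ 2 ≤ ‖x‖ ^ 2 := fun i _ => by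
      rw [← sq_abs]
      exact pow_le_pow_left₀ (abs_nonneg _) (norm_le_pi_norm x i) 2
    simpa using Finset.sum_le_card_nsmul _ _ _ this
  have h3 : ‖x‖ ^ 2 ≤ K ^ 2 * ‖A x‖ ^ 2 := by
    rw [← mul_pow]
    exact pow_le_pow_left₀ (norm_nonneg _) h1 2
  rw [← Finset.mul_sum]
  have h4 : c * ∑ i, x i ^ 2 ≤ ‖A x‖ ^ 2 / 2 := by
    rw [hc, one_div, inv_mul_le_iff₀ (by positivity)]
    calc ∑ i, x i ^ 2 ≤ D * ‖x‖ ^ 2 := h2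
      _ ≤ (D + 1) * (K ^ 2 * ‖A x‖ ^ 2) := by gcongr; linarith
      _ = _ := by ring
  linarith

lemma gaussMeasure_translate_le (A : (Fin D → ℝ) →ₗ[ℝ] H) (x₀ : Fin D → ℝ)
    {L : Set (Fin D → ℝ)} (hL : MeasurableSet L) (hsymm : ∀ x, x ∈ L → -x ∈ L) :
    ENNReal.ofReal (Real.exp (-‖A x₀‖ ^ 2 / 2)) * gaussMeasure A L ≤
      gaussMeasure A {x | x - x₀ ∈ L} := by
  have hmeas := measurable_gaussDensity A
  set w : (Fin D → ℝ) → ENNReal := fun x => ENNReal.ofReal (Real.exp (-‖A x‖ ^ 2 / 2)) with hw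
  have hL' : MeasurableSet {x | x - x₀ ∈ L} := (measurable_id.sub_const x₀) hL
  have e1 : gaussMeasure A {x | x - x₀ ∈ L} = ∫⁻ x, L.indicator (fun x => w (x + x₀)) x := by
    rw [gaussMeasure, withDensity_apply _ hL', ← lintegral_indicator hL',
      ← lintegral_add_right_eq_self _ x₀]
    refine lintegral_congr fun x => ?_
    by_cases h : x ∈ L <;> simp [Set.indicator, h, hw]
  have e2 : gaussMeasure A {x | x - x₀ ∈ L} = ∫⁻ x, L.indicator (fun x => w (-x + x₀)) x := by
    rw [e1, ← lintegral_neg_eq_self]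
    refine lintegral_congr fun x => ?_
    have : -x ∈ L ↔ x ∈ L := ⟨fun h => by simpa using hsymm _ h, hsymm x⟩
    by_cases h : x ∈ L <;> simp [Set.indicator, h, this, hw]
  have hm1 : Measurable (L.indicator fun x => w (x + x₀)) :=
    (hmeas.comp (measurable_id.add_const x₀)).indicator hL
  have key : ∫⁻ x, L.indicator (fun x => 2 * (w x₀ * w x)) x ≤
      ∫⁻ x, (L.indicator (fun x => w (x + x₀)) x + L.indicator (fun x => w (-x + x₀)) x) := by
    refine lintegral_mono fun x => ?_
    by_cases h : x ∈ L
    · simp only [Set.indicator, h, if_true, hw]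
      rw [← ENNReal.ofReal_mul (Real.exp_nonneg _), ← ENNReal.ofReal_add (Real.exp_nonneg _)
        (Real.exp_nonneg _), ← ENNReal.ofReal_ofNat, ← ENNReal.ofReal_mul (by norm_num)]
      apply ENNReal.ofReal_le_ofReal
      set t : ℝ := inner ℝ (A x) (A x₀) with ht
      have p1 : ‖A (x + x₀)‖ ^ 2 = ‖A x‖ ^ 2 + 2 * t + ‖A x₀‖ ^ 2 := by
        rw [map_add, norm_add_sq_real]
      have p2 : ‖A (-x + x₀)‖ ^ 2 = ‖A x‖ ^ 2 - 2 * t + ‖A x₀‖ ^ 2 := by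
        rw [map_add, norm_add_sq_real, map_neg, norm_neg, inner_neg_left]
        ring
      rw [p1, p2, ← Real.exp_add]
      have q1 : Real.exp (-(‖A x‖ ^ 2 + 2 * t + ‖A x₀‖ ^ 2) / 2) =
          Real.exp (-‖A x₀‖ ^ 2 / 2 + -‖A x‖ ^ 2 / 2) * Real.exp (-t) := by
        rw [← Real.exp_add]; congr 1; ring
      have q2 : Real.exp (-(‖A x‖ ^ 2 - 2 * t + ‖A x₀‖ ^ 2) / 2) =
          Real.exp (-‖A x₀‖ ^ 2 / 2 + -‖A x‖ ^ 2 / 2) * Real.exp t := by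
        rw [← Real.exp_add]; congr 1; ring
      rw [q1, q2]
      nlinarith [Real.exp_pos (-‖A x₀‖ ^ 2 / 2 + -‖A x‖ ^ 2 / 2), Real.add_one_le_exp t,
        Real.add_one_le_exp (-t)]
    · simp [Set.indicator, h]
  rw [lintegral_add_left hm1, ← e1, ← e2, ← two_mul, lintegral_indicator hL,
    lintegral_const_mul _ (hmeas.const_mul _), lintegral_const_mul _ hmeas,
    ← withDensity_apply _ hL] at key
  exact (ENNReal.mul_le_mul_iff_right (by norm_num) (by norm_num)).1 key

lemma gaussMeasure_halfspace_le (A : (Fin D → ℝ) →ₗ[ℝ] H) (h : H) {s t : ℝ} (hs : 0 < s)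
    (ht : 0 ≤ t) (hh : ‖h‖ ≤ s) :
    gaussMeasure A {x | t < inner ℝ (A x) h} ≤
      ENNReal.ofReal (Real.exp (-t ^ 2 / (2 * s ^ 2))) * gaussMeasure A univ := by
  have hmeas := measurable_gaussDensity A
  have hAc := continuous_linear A
  obtain ⟨u, hu⟩ : ∃ u, A u = (LinearMap.range A).starProjection h :=
    LinearMap.mem_range.1 ((LinearMap.range A).starProjection_apply_mem h)
  have hus : ‖A u‖ ≤ s := by
    rw [hu]
    exact ((LinearMap.range A).norm_starProjection_apply_le h).trans hh
  have hin : ∀ x, inner ℝ (A x) h = inner ℝ (A x) (A u) := fun x => by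
    have := (LinearMap.range A).starProjection_inner_eq_zero h (A x) ⟨x, rfl⟩
    rw [real_inner_comm, inner_sub_right, sub_eq_zero] at this
    rw [this, hu]
  have hset : MeasurableSet {x | t < inner ℝ (A x) h} :=
    (isOpen_lt continuous_const (by fun_prop)).measurableSet
  set r : ℝ := t / s ^ 2 with hr
  have hr0 : 0 ≤ r := by positivity
  set w : (Fin D → ℝ) → ENNReal := fun x => ENNReal.ofReal (Real.exp (-‖A x‖ ^ 2 / 2)) with hw
  calc gaussMeasure A {x | t < inner ℝ (A x) h}
      = ∫⁻ x in {x | t < inner ℝ (A x) h}, w x := by rw [gaussMeasure, withDensity_apply _ hset]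
    _ ≤ ∫⁻ x in {x | t < inner ℝ (A x) h},
          ENNReal.ofReal (Real.exp (-t ^ 2 / (2 * s ^ 2))) * w (x + -(r • u)) := by
        refine setLIntegral_mono' hset fun x hx => ?_
        simp only [hw]
        rw [← ENNReal.ofReal_mul (Real.exp_nonneg _), ← Real.exp_add]
        apply ENNReal.ofReal_le_ofReal (Real.exp_le_exp.2 _)
        have hx' : t < inner ℝ (A x) (A u) := by rw [← hin]; exact hx
        rw [← sub_eq_add_neg, map_sub, map_smul, norm_sub_sq_real, inner_smul_right, norm_smul,
          Real.norm_of_nonneg hr0]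
        have h1 : r * t ≤ r * inner ℝ (A x) (A u) := by gcongr
        have h2 : (r * ‖A u‖) ^ 2 ≤ (r * s) ^ 2 := by gcongr
        have h3 : r * t = t ^ 2 / s ^ 2 := by rw [hr]; ring
        have h4 : (r * s) ^ 2 = t ^ 2 / s ^ 2 := by rw [hr]; field_simp
        have h5 : -t ^ 2 / (2 * s ^ 2) = -(t ^ 2 / s ^ 2) / 2 := by field_simp
        rw [h5]
        linarith
    _ ≤ ∫⁻ x, ENNReal.ofReal (Real.exp (-t ^ 2 / (2 * s ^ 2))) * w (x + -(r • u)) :=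
        setLIntegral_le_lintegral _ _
    _ = _ := by
        have hm : Measurable fun x => w (x + -(r • u)) :=
          hmeas.comp (measurable_id.add_const _)
        rw [lintegral_const_mul _ hm,
          lintegral_add_right_eq_self w, gaussMeasure, withDensity_apply _ MeasurableSet.univ,
          Measure.restrict_univ]

lemma gaussMeasure_abs_inner_le (A : (Fin D → ℝ) →ₗ[ℝ] H) (h : H) {s t : ℝ} (hs : 0 < s)
    (ht : 0 ≤ t) (hh : ‖h‖ ≤ s) :
    gaussMeasure A {x | t < |inner ℝ (A x) h|} ≤
      2 * ENNReal.ofReal (Real.exp (-t ^ 2 / (2 * s ^ 2))) * gaussMeasure A univ := by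
  have hsub : {x | t < |inner ℝ (A x) h|} ⊆
      {x | t < inner ℝ (A x) h} ∪ {x | t < inner ℝ (A x) (-h)} := fun x hx => by
    simpa [lt_abs, inner_neg_right] using hx
  calc _ ≤ _ := measure_mono hsub
    _ ≤ _ := measure_union_le _ _
    _ ≤ _ := add_le_add (gaussMeasure_halfspace_le A h hs ht hh)
        (gaussMeasure_halfspace_le A (-h) hs ht (by rwa [norm_neg]))
    _ = _ := by ring

lemma exists_volume_inter_translate_ge (A : (Fin D → ℝ) →ₗ[ℝ] H) (hA : Function.Injective A)
    {T L : Set (Fin D → ℝ)} (hT : MeasurableSet T) (hTfin : volume T ≠ ⊤) (hL : MeasurableSet L)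
    (hsymm : ∀ x, x ∈ L → -x ∈ L)
    (hγ : gaussMeasure A univ ≤ 2 * gaussMeasure A L) (x₀ : Fin D → ℝ) {R : ℝ}
    (hR : ∀ x ∈ T, ‖A (x - x₀)‖ ≤ R) :
    ∃ y, volume T ≤ ENNReal.ofReal (2 * Real.exp (R ^ 2 / 2)) * volume (T ∩ {x | x - y ∈ L}) := by
  have hZ0 := gaussMeasure_univ_ne_zero A
  have hZ := gaussMeasure_univ_ne_top A hA
  have : IsFiniteMeasure (gaussMeasure A) := ⟨hZ.lt_top⟩
  set S : Set ((Fin D → ℝ) × (Fin D → ℝ)) := {p | p.1 ∈ T ∧ p.2 - (p.1 - x₀) ∈ L} with hS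
  have hSm : MeasurableSet S :=
    (measurable_fst hT).inter ((measurable_snd.sub (measurable_fst.sub_const x₀)) hL)
  set κ : ENNReal := ENNReal.ofReal (Real.exp (-R ^ 2 / 2)) with hκ
  have h1 : κ * gaussMeasure A L * volume T ≤ (volume.prod (gaussMeasure A)) S := by
    rw [Measure.prod_apply hSm, ← setLIntegral_const]
    calc _ ≤ ∫⁻ x in T, gaussMeasure A (Prod.mk x ⁻¹' S) := by
          refine setLIntegral_mono' hT fun x hx => ?_
          have := gaussMeasure_translate_le A (x - x₀) hL hsymm
          have hs : Prod.mk x ⁻¹' S = {y | y - (x - x₀) ∈ L} := by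
            ext y; simp [hS, hx]
          rw [hs]
          refine le_trans ?_ this
          gcongr
          apply ENNReal.ofReal_le_ofReal (Real.exp_le_exp.2 _)
          have : ‖A (x - x₀)‖ ^ 2 ≤ R ^ 2 := by
            gcongr
            exact hR x hx
          linarith
      _ ≤ _ := setLIntegral_le_lintegral _ _
  rw [Measure.prod_apply_symm hSm] at h1
  have hslice : ∀ y, (fun x => (x, y)) ⁻¹' S = T ∩ {x | x - (y + x₀) ∈ L} := fun y => by
    ext x
    have e : y - (x - x₀) = -(x - (y + x₀)) := by abel
    have : y - (x - x₀) ∈ L ↔ x - (y + x₀) ∈ L :=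
      ⟨fun h => by simpa [e] using hsymm _ h, fun h => by rw [e]; exact hsymm _ h⟩
    simp [hS, this]
  simp only [hslice] at h1
  have htop : ∫⁻ y, volume (T ∩ {x | x - (y + x₀) ∈ L}) ∂gaussMeasure A ≠ ⊤ := by
    refine ne_top_of_le_ne_top ?_ (lintegral_mono fun y => measure_mono inter_subset_left)
    rw [lintegral_const]
    exact ENNReal.mul_ne_top hTfin hZ
  have hne : gaussMeasure A ≠ 0 := fun h => hZ0 (by simp [h])
  obtain ⟨y, hy⟩ := exists_laverage_le hne htop
  refine ⟨y + x₀, ?_⟩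
  rw [laverage_eq, ENNReal.div_le_iff hZ0 hZ] at hy
  have h2 := h1.trans hy
  set V := volume (T ∩ {x | x - (y + x₀) ∈ L})
  set e : ENNReal := ENNReal.ofReal (Real.exp (R ^ 2 / 2)) with he
  have hek : e * κ = 1 := by
    rw [he, hκ, ← ENNReal.ofReal_mul (Real.exp_nonneg _), ← Real.exp_add]
    simp [neg_div]
  have h3 : gaussMeasure A univ * volume T ≤ gaussMeasure A univ * (2 * e * V) :=
    calc gaussMeasure A univ * volume T
        ≤ 2 * gaussMeasure A L * volume T := by gcongr
      _ = 2 * e * (κ * gaussMeasure A L * volume T) := by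
          calc _ = (e * κ) * (2 * gaussMeasure A L * volume T) := by rw [hek, one_mul]
            _ = _ := by ring
      _ ≤ 2 * e * (V * gaussMeasure A univ) := by gcongr
      _ = _ := by ring
  rw [ENNReal.ofReal_mul (by norm_num), ENNReal.ofReal_ofNat]
  exact (ENNReal.mul_le_mul_iff_right hZ0 hZ).1 h3

end Gaussian

end PositiveMaps

namespace PositiveMaps

open Metric Set

/-! ### Suprema of Gaussian processes -/

section Supremum

variable {D : ℕ} {H : Type*} [NormedAddCommGroup H] [InnerProductSpace ℝ H]
  {V : Type*} [NormedAddCommGroup V] [NormedSpace ℝ V]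

/-- A continuous family of vectors indexed by a normed space whose pairings with any fixed
vector vary slowly relative to their supremum over the unit ball. -/
structure IsTameFamily (h : V → H) : Prop where
  cont : Continuous h
  bound : ∀ v, ‖v‖ ≤ 11 / 10 → ‖h v‖ ≤ (11 / 10) ^ 4
  stable : ∀ (g : H) (M : ℝ), (∀ v, ‖v‖ ≤ 1 → |inner ℝ g (h v)| ≤ M) → ∀ v₀ v, ‖v₀‖ ≤ 1 →
    ‖v - v₀‖ ≤ 1 / 10 → |inner ℝ g (h v) - inner ℝ g (h v₀)| ≤ M / 2

/-- The set where the process `⟨A x, h v⟩` is bounded by `M` on the unit ball. -/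
def boundedSet (A : (Fin D → ℝ) →ₗ[ℝ] H) (h : V → H) (M : ℝ) : Set (Fin D → ℝ) :=
  {x | ∀ v, ‖v‖ ≤ 1 → |inner ℝ (A x) (h v)| ≤ M}

omit [NormedSpace ℝ V] in
lemma isClosed_boundedSet (A : (Fin D → ℝ) →ₗ[ℝ] H) (h : V → H) (M : ℝ) :
    IsClosed (boundedSet A h M) := by
  have := continuous_linear A
  simp only [boundedSet, ofPred_forall]
  exact isClosed_iInter fun v => isClosed_iInter fun _ =>
    isClosed_le (by fun_prop) continuous_const

omit [NormedSpace ℝ V] in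
lemma neg_mem_boundedSet (A : (Fin D → ℝ) →ₗ[ℝ] H) (h : V → H) (M : ℝ) (x : Fin D → ℝ)
    (hx : x ∈ boundedSet A h M) : -x ∈ boundedSet A h M := fun v hv => by
  rw [map_neg, inner_neg_left, abs_neg]
  exact hx v hv

omit [NormedSpace ℝ V] in
lemma smul_mem_boundedSet_iff (A : (Fin D → ℝ) →ₗ[ℝ] H) (h : V → H) {M c : ℝ} (hc : 0 < c)
    (x : Fin D → ℝ) : x ∈ boundedSet (c • A) h M ↔ x ∈ boundedSet A h (M / c) := by
  simp only [boundedSet, mem_ofPred_eq, LinearMap.smul_apply, inner_smul_left, abs_mul,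
    le_div_iff₀' hc]
  simp [abs_of_pos hc]

lemma eleven_pow_mul_exp_le {d : ℕ} (hd : 12 ≤ d) {M : ℝ} (hM : M ^ 2 = 45 * d) :
    4 * 11 ^ d * Real.exp (-(M / 2) ^ 2 / (2 * ((11 / 10) ^ 4) ^ 2)) ≤ 1 := by
  have hd' : (12 : ℝ) ≤ d := by exact_mod_cast hd
  have he := Real.exp_one_gt_d9
  have h11 : (11 : ℝ) ≤ Real.exp (12 / 5) := by
    refine le_of_pow_le_pow_left₀ (n := 5) (by norm_num) (Real.exp_nonneg _) ?_
    rw [← Real.exp_nat_mul]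
    have : ((5 : ℕ) : ℝ) * (12 / 5) = ((12 : ℕ) : ℝ) * 1 := by norm_num
    rw [this, Real.exp_nat_mul]
    calc (11 : ℝ) ^ 5 ≤ 2.7182818283 ^ 12 := by norm_num
      _ ≤ _ := by gcongr
  have h4 : (4 : ℝ) ≤ Real.exp 2 := by
    have : (2 : ℝ) = ((2 : ℕ) : ℝ) * 1 := by norm_num
    rw [this, Real.exp_nat_mul]
    calc _ ≤ (2.7182818283 : ℝ) ^ 2 := by norm_num
      _ ≤ _ := by gcongr
  have h11d : (11 : ℝ) ^ d ≤ Real.exp (d * (12 / 5)) := by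
    rw [Real.exp_nat_mul]
    gcongr
  calc _ ≤ Real.exp 2 * Real.exp (d * (12 / 5)) *
        Real.exp (-(M / 2) ^ 2 / (2 * ((11 / 10) ^ 4) ^ 2)) := by gcongr
    _ ≤ 1 := by
      rw [← Real.exp_add, ← Real.exp_add, Real.exp_le_one_iff]
      have : -(M / 2) ^ 2 / (2 * ((11 / 10 : ℝ) ^ 4) ^ 2) =
          -(45 / (8 * ((11 / 10 : ℝ) ^ 4) ^ 2)) * d := by
        rw [div_pow, hM]; ring
      rw [this]
      have : (2.6 : ℝ) ≤ 45 / (8 * ((11 / 10 : ℝ) ^ 4) ^ 2) := by norm_num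
      nlinarith

variable [FiniteDimensional ℝ V]

/-- The supremum over the unit ball of a tame Gaussian process is, with probability at least one
half, of the order of the square root of the dimension of the index space. -/
lemma gaussMeasure_boundedSet_ge (A : (Fin D → ℝ) →ₗ[ℝ] H) (hA : Function.Injective A)
    {h : V → H} (hh : IsTameFamily h) (hd : 12 ≤ Module.finrank ℝ V) {M : ℝ} (hM0 : 0 ≤ M)
    (hM : M ^ 2 = 45 * Module.finrank ℝ V) :
    gaussMeasure A univ ≤ 2 * gaussMeasure A (boundedSet A h M) := by
  have hZ := gaussMeasure_univ_ne_top A hA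
  have hZ0 := gaussMeasure_univ_ne_zero A
  have : IsFiniteMeasure (gaussMeasure A) := ⟨hZ.lt_top⟩
  have hAc := continuous_linear A
  have hhc := hh.cont
  let _ : MeasurableSpace V := borel V
  have : BorelSpace V := ⟨rfl⟩
  set d := Module.finrank ℝ V with hdd
  set ν : Measure V := Measure.addHaar with hν
  set s : ℝ := (11 / 10) ^ 4 with hs
  have hLm : MeasurableSet (boundedSet A h M) := (isClosed_boundedSet A h M).measurableSet
  set S : Set ((Fin D → ℝ) × V) := {p | M / 2 < |inner ℝ (A p.1) (h p.2)|} with hS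
  have hSm : MeasurableSet S := (isOpen_lt continuous_const (by fun_prop)).measurableSet
  set B : Set V := closedBall 0 (11 / 10) with hB
  have hBm : MeasurableSet B := measurableSet_closedBall
  set c := ν (ball (0 : V) 1) with hc
  have hc0 : c ≠ 0 := (measure_ball_pos ν 0 one_pos).ne'
  have hct : c ≠ ⊤ := measure_ball_lt_top.ne
  have hnt : Nontrivial V := Module.nontrivial_of_finrank_pos (R := ℝ) (by omega)
  have low : ENNReal.ofReal ((1 / 10) ^ d) * c * gaussMeasure A (boundedSet A h M)ᶜ ≤
      ((gaussMeasure A).prod (ν.restrict B)) S := by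
    rw [Measure.prod_apply hSm, ← setLIntegral_const]
    refine le_trans (setLIntegral_mono' hLm.compl fun x hx => ?_) (setLIntegral_le_lintegral _ _)
    have hx' : ∃ v, ‖v‖ ≤ 1 ∧ M < |inner ℝ (A x) (h v)| := by
      simpa [boundedSet] using hx
    obtain ⟨v₁, hv₁, hv₁M⟩ := hx'
    obtain ⟨v₀, hv₀, hmax⟩ := (isCompact_closedBall (0 : V) 1).exists_isMaxOn
      ⟨v₁, by simpa using hv₁⟩
      (by fun_prop : Continuous fun v => |inner ℝ (A x) (h v)|).continuousOn
    have hv₀' : ‖v₀‖ ≤ 1 := by simpa using hv₀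
    have hb : ∀ v, ‖v‖ ≤ 1 → |inner ℝ (A x) (h v)| ≤ |inner ℝ (A x) (h v₀)| := fun v hv =>
      hmax (by simpa using hv)
    have hM' := hv₁M.trans_le (hb v₁ hv₁)
    rw [hc, ← Measure.addHaar_closedBall ν v₀ (by norm_num : (0 : ℝ) ≤ 1 / 10),
      Measure.restrict_apply (measurable_prodMk_left hSm)]
    refine measure_mono fun v hv => ?_
    have hv' : ‖v - v₀‖ ≤ 1 / 10 := by simpa [dist_eq_norm] using hv
    refine ⟨?_, ?_⟩
    · have h1 := hh.stable (A x) _ hb v₀ v hv₀' hv'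
      have h2 := abs_sub_abs_le_abs_sub (inner ℝ (A x) (h v₀)) (inner ℝ (A x) (h v))
      rw [abs_sub_comm] at h2
      simp only [hS, mem_preimage, mem_ofPred_eq]
      linarith
    · have : ‖v‖ ≤ ‖v - v₀‖ + ‖v₀‖ := by
        simpa using norm_add_le (v - v₀) v₀
      simp only [hB, mem_closedBall, dist_zero_right]
      linarith
  have up : ((gaussMeasure A).prod (ν.restrict B)) S ≤
      2 * ENNReal.ofReal (Real.exp (-(M / 2) ^ 2 / (2 * s ^ 2))) * gaussMeasure A univ *
        (ENNReal.ofReal ((11 / 10) ^ d) * c) := by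
    rw [Measure.prod_apply_symm hSm, hc, ← Measure.addHaar_closedBall ν 0
      (by norm_num : (0 : ℝ) ≤ 11 / 10), ← setLIntegral_const]
    refine setLIntegral_mono' hBm fun v hv => ?_
    exact gaussMeasure_abs_inner_le A (h v) (by positivity) (by positivity)
      (hh.bound v (by simpa [hB] using hv))
  have hkey := low.trans up
  have hbad : gaussMeasure A (boundedSet A h M)ᶜ * 2 ≤ gaussMeasure A univ := by
    have e1 : ENNReal.ofReal ((11 / 10) ^ d) =
        ENNReal.ofReal (11 ^ d) * ENNReal.ofReal ((1 / 10) ^ d) := by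
      rw [← ENNReal.ofReal_mul (by positivity), ← mul_pow]
      norm_num
    have hu0 : ENNReal.ofReal ((1 / 10 : ℝ) ^ d) * c ≠ 0 :=
      mul_ne_zero (by simp) hc0
    have hut : ENNReal.ofReal ((1 / 10 : ℝ) ^ d) * c ≠ ⊤ :=
      ENNReal.mul_ne_top ENNReal.ofReal_ne_top hct
    refine (ENNReal.mul_le_mul_iff_right hu0 hut).1 ?_
    calc _ = ENNReal.ofReal ((1 / 10) ^ d) * c * gaussMeasure A (boundedSet A h M)ᶜ * 2 := by ring
      _ ≤ 2 * ENNReal.ofReal (Real.exp (-(M / 2) ^ 2 / (2 * s ^ 2))) * gaussMeasure A univ *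
          (ENNReal.ofReal ((11 / 10) ^ d) * c) * 2 := by gcongr
      _ = ENNReal.ofReal ((1 / 10) ^ d) * c * ((4 * ENNReal.ofReal (11 ^ d) *
          ENNReal.ofReal (Real.exp (-(M / 2) ^ 2 / (2 * s ^ 2)))) * gaussMeasure A univ) := by
        rw [e1]; ring
      _ ≤ ENNReal.ofReal ((1 / 10) ^ d) * c * (1 * gaussMeasure A univ) := by
        gcongr
        rw [← ENNReal.ofReal_ofNat, ← ENNReal.ofReal_mul (by norm_num),
          ← ENNReal.ofReal_mul (by positivity), ← ENNReal.ofReal_one]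
        exact ENNReal.ofReal_le_ofReal (eleven_pow_mul_exp_le hd hM)
      _ = _ := by ring
  have hsplit := measure_add_measure_compl (μ := gaussMeasure A) hLm
  have h2 : gaussMeasure A univ + gaussMeasure A univ ≤
      2 * gaussMeasure A (boundedSet A h M) + gaussMeasure A univ := by
    calc _ = 2 * gaussMeasure A (boundedSet A h M) +
          gaussMeasure A (boundedSet A h M)ᶜ * 2 := by rw [← hsplit]; ring
      _ ≤ _ := by gcongr
  exact (ENNReal.add_le_add_iff_right hZ).1 h2

/-- A set of small diameter loses little volume when intersected with a suitable translate of a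
set where a tame process is bounded. -/
lemma exists_volume_inter_boundedSet_ge (A : (Fin D → ℝ) →ₗ[ℝ] H) (hA : Function.Injective A)
    {h : V → H} (hh : IsTameFamily h) (hd : 12 ≤ Module.finrank ℝ V) {M : ℝ} (hM0 : 0 ≤ M)
    (hM : M ^ 2 = 45 * Module.finrank ℝ V) {T : Set (Fin D → ℝ)} (hT : MeasurableSet T)
    (hTfin : volume T ≠ ⊤) (x₀ : Fin D → ℝ) {R c : ℝ} (hc : 0 < c)
    (hR : ∀ x ∈ T, ‖A (x - x₀)‖ ≤ R) :
    ∃ y, volume T ≤ ENNReal.ofReal (2 * Real.exp ((c * R) ^ 2 / 2)) *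
      volume (T ∩ {x | x - y ∈ boundedSet A h (M / c)}) := by
  have hcA : Function.Injective (c • A) := fun x y hxy => by
    simp only [LinearMap.smul_apply] at hxy
    exact hA (smul_right_injective H hc.ne' hxy)
  obtain ⟨y, hy⟩ := exists_volume_inter_translate_ge (c • A) hcA hT hTfin
    (isClosed_boundedSet (c • A) h M).measurableSet (neg_mem_boundedSet (c • A) h M)
    (gaussMeasure_boundedSet_ge (c • A) hcA hh hd hM0 hM) x₀ (R := c * R) fun x hx => by
      rw [LinearMap.smul_apply, norm_smul, Real.norm_of_nonneg hc.le]
      gcongr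
      exact hR x hx
  refine ⟨y, ?_⟩
  simpa only [smul_mem_boundedSet_iff A h hc] using hy

end Supremum

end PositiveMaps

namespace PositiveMaps

open Metric Set Pointwise

/-! ### Volume comparison -/

section Comparison

variable {D : ℕ} {H : Type*} [NormedAddCommGroup H] [InnerProductSpace ℝ H]
  {V W : Type*} [NormedAddCommGroup V] [NormedSpace ℝ V] [NormedAddCommGroup W] [NormedSpace ℝ W]

/-- A set of points `x` such that `A x + e` is a combination of the vectors `h v`, `‖v‖ ≤ 1`,
with total weight at most `N`. -/
def IsDominated (A : (Fin D → ℝ) →ₗ[ℝ] H) (h : V → H) (e : H) (N : ℝ) (S : Set (Fin D → ℝ)) :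
    Prop :=
  ∀ y M, (∀ v, ‖v‖ ≤ 1 → |inner ℝ (A y) (h v)| ≤ M) → ∀ x ∈ S, |inner ℝ (A y) (A x + e)| ≤ N * M

variable {A : (Fin D → ℝ) →ₗ[ℝ] H} {h : V → H} {e : H} {N : ℝ} {S : Set (Fin D → ℝ)}

omit [NormedSpace ℝ V] in
lemma IsDominated.norm_sq_le (hS : IsDominated A h e N S) {x x' : Fin D → ℝ} (hx : x ∈ S)
    (hx' : x' ∈ S) {M : ℝ} (hM : ∀ v, ‖v‖ ≤ 1 → |inner ℝ (A (x - x')) (h v)| ≤ M) :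
    ‖A (x - x')‖ ^ 2 ≤ 2 * N * M := by
  have h1 := abs_le.1 (hS _ M hM x hx)
  have h2 := abs_le.1 (hS _ M hM x' hx')
  have : ‖A (x - x')‖ ^ 2 =
      inner ℝ (A (x - x')) (A x + e) - inner ℝ (A (x - x')) (A x' + e) := by
    rw [← inner_sub_right, add_sub_add_right_eq_sub, ← map_sub, real_inner_self_eq_norm_sq]
  linarith [h1.2, h2.1]

omit [NormedSpace ℝ V] in
lemma IsDominated.norm_le (hS : IsDominated A h e N S) (hN : 0 ≤ N)
    (hb : ∀ v, ‖v‖ ≤ 1 → ‖h v‖ ≤ 1) {x x' : Fin D → ℝ} (hx : x ∈ S)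
    (hx' : x' ∈ S) : ‖A (x - x')‖ ≤ 2 * N := by
  have := hS.norm_sq_le hx hx' (M := ‖A (x - x')‖) fun v hv =>
    (abs_real_inner_le_norm _ _).trans (mul_le_of_le_one_right (norm_nonneg _) (hb v hv))
  rcases (norm_nonneg (A (x - x'))).eq_or_lt with h0 | h0
  · rw [← h0]; positivity
  · rw [sq] at this
    exact le_of_mul_le_mul_right this h0

omit [NormedSpace ℝ V] in
lemma IsDominated.volume_ne_top (hS : IsDominated A h e N S) (hN : 0 ≤ N)
    (hb : ∀ v, ‖v‖ ≤ 1 → ‖h v‖ ≤ 1) (hA : Function.Injective A) : volume S ≠ ⊤ := by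
  obtain ⟨K, hK, hanti⟩ := A.exists_antilipschitzWith (LinearMap.ker_eq_bot.2 hA)
  refine (Bornology.IsBounded.measure_lt_top (isBounded_iff.2 ⟨K * (2 * N), fun x hx x' hx' => ?_⟩)).ne
  refine (hanti.le_mul_dist x x').trans ?_
  rw [dist_eq_norm, ← map_sub]
  gcongr
  exact hS.norm_le hN hb hx hx'

variable [FiniteDimensional ℝ V]

lemma IsDominated.exists_subset (hS : IsDominated A h e N S) (hN : 1 ≤ N)
    (hb : ∀ v, ‖v‖ ≤ 1 → ‖h v‖ ≤ 1) (hA : Function.Injective A) (hh : IsTameFamily h)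
    (hd : 12 ≤ Module.finrank ℝ V) (hdN : (Module.finrank ℝ V : ℝ) = 2 * N)
    (hSm : MeasurableSet S) (j : ℕ) :
    ∃ T ⊆ S, MeasurableSet T ∧
      volume S ≤ ENNReal.ofReal (Real.exp (721 * N * (2 ^ j - 1))) * volume T ∧
      ∀ x ∈ T, ∀ x' ∈ T, ‖A (x - x')‖ ^ 2 ≤ 4 * N ^ 2 / 2 ^ j := by
  have hN0 : 0 < N := by linarith
  induction j with
  | zero =>
    refine ⟨S, subset_rfl, hSm, by simp, fun x hx x' hx' => ?_⟩
    calc ‖A (x - x')‖ ^ 2 ≤ (2 * N) ^ 2 := by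
          gcongr
          exact hS.norm_le hN0.le hb hx hx'
      _ = _ := by ring
  | succ j ih =>
    obtain ⟨T, hTS, hTm, hTvol, hTd⟩ := ih
    rcases T.eq_empty_or_nonempty with rfl | ⟨x₀, hx₀⟩
    · refine ⟨∅, hTS, hTm, ?_, by simp⟩
      simpa using hTvol
    set M : ℝ := √(90 * N) with hM
    have hM2 : M ^ 2 = 45 * Module.finrank ℝ V := by
      rw [hM, Real.sq_sqrt (by positivity), hdN]; ring
    have hM0 : 0 < M := Real.sqrt_pos.2 (by positivity)
    set P : ℝ := 2 ^ j with hP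
    have hP1 : 1 ≤ P := one_le_pow₀ (by norm_num)
    set R : ℝ := √(4 * N ^ 2 / P) with hR
    have hR2 : R ^ 2 = 4 * N ^ 2 / P := Real.sq_sqrt (by positivity)
    have hR0 : 0 < R := Real.sqrt_pos.2 (by positivity)
    set c : ℝ := 8 * N * M / R ^ 2 with hc
    have hc0 : 0 < c := by positivity
    have hTfin : volume T ≠ ⊤ :=
      ne_top_of_le_ne_top (hS.volume_ne_top hN0.le hb hA) (measure_mono hTS)
    obtain ⟨y, hy⟩ := exists_volume_inter_boundedSet_ge A hA hh hd hM0.le hM2 hTm hTfin x₀ hc0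
      (R := R) fun x hx => Real.le_sqrt_of_sq_le (hTd x hx x₀ hx₀)
    refine ⟨_, inter_subset_left.trans hTS, hTm.inter
      ((measurable_id.sub_const y) (isClosed_boundedSet A h (M / c)).measurableSet), ?_, ?_⟩
    · refine hTvol.trans ((mul_le_mul_right hy _).trans ?_)
      rw [← mul_assoc, ← ENNReal.ofReal_mul (Real.exp_nonneg _)]
      refine mul_le_mul_left (ENNReal.ofReal_le_ofReal ?_) _
      have e1 : (c * R) ^ 2 / 2 = 720 * N * P := by
        have : c * R = 8 * N * M / R := by rw [hc]; field_simp
        rw [this, div_pow, hR2, mul_pow, hM2, hdN]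
        field_simp
        ring
      have h2 : (2 : ℝ) ≤ Real.exp (N * P) := by
        have := Real.add_one_le_exp (N * P)
        have : 1 ≤ N * P := one_le_mul_of_one_le_of_one_le hN hP1
        linarith
      calc _ ≤ Real.exp (721 * N * (P - 1)) *
            (Real.exp (N * P) * Real.exp ((c * R) ^ 2 / 2)) := by gcongr
        _ = _ := by
          rw [← Real.exp_add, ← Real.exp_add, e1, pow_succ, ← hP]
          congr 1
          ring
    · rintro x ⟨hx, hxb⟩ x' ⟨hx', hxb'⟩
      have hb2 : ∀ v, ‖v‖ ≤ 1 → |inner ℝ (A (x - x')) (h v)| ≤ 2 * (M / c) := fun v hv => by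
        have e : x - x' = (x - y) - (x' - y) := by abel
        rw [e, map_sub, inner_sub_left]
        have := abs_sub (inner ℝ (A (x - y)) (h v)) (inner ℝ (A (x' - y)) (h v))
        have h1 : |inner ℝ (A (x - y)) (h v)| ≤ M / c := hxb v hv
        have h2 : |inner ℝ (A (x' - y)) (h v)| ≤ M / c := hxb' v hv
        linarith
      refine (hS.norm_sq_le (hTS hx) (hTS hx') hb2).trans (le_of_eq ?_)
      have : M / c = R ^ 2 / (8 * N) := by
        rw [hc]
        field_simp
      rw [this, hR2, pow_succ (2 : ℝ), ← hP]
      field_simp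
      ring

lemma exists_two_pow_near (N : ℕ) :
    ∃ j : ℕ, (2 : ℝ) ^ j - 1 ≤ N / 4096 ∧ (N : ℝ) ≤ 8192 * 2 ^ j := by
  refine ⟨Nat.log 2 (N / 4096), ?_, ?_⟩
  · have h1 : 2 ^ Nat.log 2 (N / 4096) ≤ N / 4096 + 1 := by
      rcases Nat.eq_zero_or_pos (N / 4096) with h | h
      · simp [h]
      · exact (Nat.pow_log_le_self 2 h.ne').trans (Nat.le_succ _)
    have h2 : ((2 ^ Nat.log 2 (N / 4096) : ℕ) : ℝ) ≤ ((N / 4096 : ℕ) : ℝ) + 1 := by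
      exact_mod_cast h1
    have h3 : ((N / 4096 : ℕ) : ℝ) ≤ N / 4096 := by
      simpa using Nat.cast_div_le (α := ℝ) (m := N) (n := 4096)
    push_cast at h2
    linarith
  · have h1 := Nat.lt_pow_succ_log_self (b := 2) (by norm_num) (N / 4096)
    have h2 : N ≤ 8192 * 2 ^ Nat.log 2 (N / 4096) := by
      rw [pow_succ] at h1
      omega
    exact_mod_cast h2

omit [NormedSpace ℝ V] [FiniteDimensional ℝ V] in
lemma volume_boundedSet_le (A : (Fin D → ℝ) →ₗ[ℝ] H) (h : V → H) {ε ε' : ℝ} (hε : 0 < ε)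
    (hle : ε' ≤ ε) :
    volume (boundedSet A h ε') ≤ ENNReal.ofReal (ε ^ D) * volume (boundedSet A h 1) := by
  have hsub : boundedSet A h ε' ⊆ ε • boundedSet A h 1 := fun x hx => by
    rw [mem_smul_set_iff_inv_smul_mem₀ hε.ne']
    intro v hv
    rw [map_smul, inner_smul_left, abs_mul]
    have := hx v hv
    simp only [map_inv₀, conj_trivial, abs_inv, abs_of_pos hε]
    rw [inv_mul_le_iff₀ hε]
    linarith
  refine (measure_mono hsub).trans ?_
  rw [Measure.addHaar_smul, Module.finrank_fin_fun, abs_of_pos (by positivity)]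

variable [FiniteDimensional ℝ W]

/-- Comparison of the volume of a dominated set with the volume of the unit ball of a tame
family indexed by a space of small dimension. -/
theorem IsDominated.volume_le {N : ℕ} (hS : IsDominated A h e N S) (hN : 1 ≤ N)
    (hb : ∀ v, ‖v‖ ≤ 1 → ‖h v‖ ≤ 1) (hA : Function.Injective A) (hh : IsTameFamily h)
    (hd : 12 ≤ Module.finrank ℝ V) (hdN : Module.finrank ℝ V = 2 * N) (hSm : MeasurableSet S)
    {k : W → H} (hk : IsTameFamily k) (hdW : 12 ≤ Module.finrank ℝ W) {μ : ℝ} (hμ : 0 < μ)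
    (hWμ : Module.finrank ℝ W * μ ≤ 4 * N) (hD : 44 ≤ D) (hND : (N : ℝ) ^ 2 ≤ 2 * D) :
    volume S ≤ ENNReal.ofReal ((12800 / √μ) ^ D) * volume (boundedSet A k 1) := by
  have hN1 : (1 : ℝ) ≤ N := by exact_mod_cast hN
  have hD1 : (44 : ℝ) ≤ D := by exact_mod_cast hD
  obtain ⟨j, hj1, hj2⟩ := exists_two_pow_near N
  obtain ⟨T, hTS, hTm, hTvol, hTd⟩ := hS.exists_subset hN1 hb hA hh hd
    (by rw [hdN]; push_cast; ring) hSm j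
  rcases T.eq_empty_or_nonempty with rfl | ⟨x₀, hx₀⟩
  · refine hTvol.trans ?_
    simp
  set R : ℝ := √(32768 * N) with hR
  have hR0 : 0 < R := Real.sqrt_pos.2 (by positivity)
  have hR2 : R ^ 2 = 32768 * N := Real.sq_sqrt (by positivity)
  have hTR : ∀ x ∈ T, ‖A (x - x₀)‖ ≤ R := fun x hx => by
    refine Real.le_sqrt_of_sq_le ((hTd x hx x₀ hx₀).trans ?_)
    rw [div_le_iff₀ (by positivity)]
    nlinarith
  set d : ℝ := (Module.finrank ℝ W : ℝ) with hd'
  set M : ℝ := √(45 * d) with hM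
  have hM2 : M ^ 2 = 45 * d := Real.sq_sqrt (by positivity)
  set c : ℝ := √D / R with hc
  have hsD : 0 < √(D : ℝ) := Real.sqrt_pos.2 (by linarith)
  have hc0 : 0 < c := by positivity
  have hTfin : volume T ≠ ⊤ :=
    ne_top_of_le_ne_top (hS.volume_ne_top (by linarith) hb hA) (measure_mono hTS)
  obtain ⟨y, hy⟩ := exists_volume_inter_boundedSet_ge A hA hk hdW (M := M) (Real.sqrt_nonneg _)
    hM2 hTm hTfin x₀ hc0 hTR
  have hcR : (c * R) ^ 2 / 2 = D / 2 := by
    have : c * R = √D := by rw [hc]; field_simp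
    rw [this, Real.sq_sqrt (by positivity)]
  set ε : ℝ := 3435 / √μ with hε
  have hε0 : 0 < ε := by positivity
  have hεM : M / c ≤ ε := by
    refine le_of_pow_le_pow_left₀ two_ne_zero hε0.le ?_
    have e1 : (M / c) ^ 2 = 45 * d * (32768 * N) / D := by
      rw [div_pow, hc, div_pow, hM2, hR2, Real.sq_sqrt (by positivity)]
      field_simp
    rw [e1, hε, div_pow, Real.sq_sqrt hμ.le, div_le_div_iff₀ (by linarith) hμ]
    nlinarith
  have hvol : volume (T ∩ {x | x - y ∈ boundedSet A k (M / c)}) ≤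
      ENNReal.ofReal (ε ^ D) * volume (boundedSet A k 1) := by
    refine (measure_mono inter_subset_right).trans ?_
    have : volume {x | x - y ∈ boundedSet A k (M / c)} = volume (boundedSet A k (M / c)) := by
      simpa only [sub_eq_add_neg] using! measure_preimage_add_right volume (-y) _
    rw [this]
    exact volume_boundedSet_le A k hε0 hεM
  calc volume S ≤ ENNReal.ofReal (Real.exp (721 * N * (2 ^ j - 1))) *
        (ENNReal.ofReal (2 * Real.exp (D / 2)) *
          (ENNReal.ofReal (ε ^ D) * volume (boundedSet A k 1))) := by
        rw [hcR] at hy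
        exact hTvol.trans (by gcongr; exact hy.trans (by gcongr))
    _ = ENNReal.ofReal (Real.exp (721 * N * (2 ^ j - 1)) * (2 * Real.exp (D / 2)) * ε ^ D) *
          volume (boundedSet A k 1) := by
        rw [← mul_assoc, ← mul_assoc, ← ENNReal.ofReal_mul (by positivity),
          ← ENNReal.ofReal_mul (by positivity)]
    _ ≤ _ := by
        gcongr
        have h2 : (2 : ℝ) ≤ Real.exp (0.14 * D) := by
          have := Real.add_one_le_exp (0.14 * D : ℝ)
          linarith
        have h3 : 721 * N * ((2 : ℝ) ^ j - 1) ≤ 0.36 * D := by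
          have : 721 * N * ((2 : ℝ) ^ j - 1) ≤ 721 * N * (N / 4096) := by gcongr
          nlinarith
        have he := Real.exp_one_lt_d9
        calc _ ≤ Real.exp (0.36 * D) * (Real.exp (0.14 * D) * Real.exp (D / 2)) * ε ^ D := by
              gcongr
          _ = (Real.exp 1 * ε) ^ D := by
              rw [mul_pow, ← Real.exp_nat_mul, ← Real.exp_add, ← Real.exp_add]
              congr 2
              ring
          _ ≤ _ := by
              have : Real.exp 1 * ε ≤ 12800 / √μ := by
                rw [hε, ← mul_div_assoc]
                gcongr
                linarith
              gcongr

end Comparison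

end PositiveMaps

namespace PositiveMaps

/-! ### Rank one tensors -/

section Tensor

lemma abs_quadratic_sub_le {V : Type*} [NormedAddCommGroup V] [InnerProductSpace ℝ V]
    {Q : V → ℝ} {M : ℝ} (hsmul : ∀ (t : ℝ) v, Q (t • v) = t ^ 2 * Q v)
    (hadd : ∀ (t : ℝ) v u, Q (v + t • u) = Q v + t / 2 * (Q (v + u) - Q (v - u)) + t ^ 2 * Q u)
    (hM : ∀ v, ‖v‖ ≤ 1 → |Q v| ≤ M) {v₀ v : V} (hv₀ : ‖v₀‖ ≤ 1) (hv : ‖v - v₀‖ ≤ 1 / 10) :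
    |Q v - Q v₀| ≤ 21 / 100 * M := by
  have hM' : ∀ v, |Q v| ≤ M * ‖v‖ ^ 2 := fun v => by
    rcases eq_or_ne v 0 with rfl | h
    · have := hsmul 0 0
      simp at this
      simp [this]
    · have hpos : 0 < ‖v‖ := norm_pos_iff.2 h
      have h1 := hM ((‖v‖⁻¹ : ℝ) • v) (by
        rw [norm_smul, norm_inv, norm_norm, inv_mul_cancel₀ hpos.ne'])
      rw [hsmul, abs_mul, abs_of_nonneg (by positivity), inv_pow,
        inv_mul_le_iff₀ (by positivity)] at h1
      linarith
  have hM0 : 0 ≤ M := (abs_nonneg _).trans (hM 0 (by simp))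
  set u : V := (10 : ℝ) • (v - v₀) with hu
  have hu1 : ‖u‖ ≤ 1 := by
    rw [hu, norm_smul, Real.norm_of_nonneg (by norm_num)]
    linarith
  have hvu : v = v₀ + (1 / 10 : ℝ) • u := by
    rw [hu, smul_smul]
    norm_num
  have h1 := hadd (1 / 10) v₀ u
  rw [← hvu] at h1
  have h2 := abs_le.1 (hM' (v₀ + u))
  have h3 := abs_le.1 (hM' (v₀ - u))
  have h4 := abs_le.1 (hM u hu1)
  have h5 := parallelogram_law_with_norm ℝ v₀ u
  have h6 : M * ‖v₀ + u‖ ^ 2 + M * ‖v₀ - u‖ ^ 2 ≤ 4 * M := by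
    have : ‖v₀‖ * ‖v₀‖ + ‖u‖ * ‖u‖ ≤ 2 := by nlinarith [norm_nonneg v₀, norm_nonneg u]
    nlinarith
  rw [abs_le]
  constructor <;> linarith [h2.1, h2.2, h3.1, h3.2, h4.1, h4.2]

/-- The space of coefficient tensors `a_{ijkl}`, as a real inner product space. -/
abbrev Coeffs (n m : ℕ) : Type := EuclideanSpace ℂ (Fin n × Fin n × Fin m × Fin m)

/-- The rank one coefficient tensor `v_{ik} * conj v_{jl}`. -/
def rankOne {n m : ℕ} (v : EuclideanSpace ℂ (Fin n × Fin m)) : Coeffs n m :=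
  WithLp.toLp 2 fun p => v (p.1, p.2.2.1) * (starRingEnd ℂ) (v (p.2.1, p.2.2.2))

/-- The product vector `z_i * w_k`. -/
def tensor {n m : ℕ} (p : EuclideanSpace ℂ (Fin n) × EuclideanSpace ℂ (Fin m)) :
    EuclideanSpace ℂ (Fin n × Fin m) :=
  WithLp.toLp 2 fun q => p.1 q.1 * p.2 q.2

variable {n m : ℕ}

lemma sum_four {M : Type*} [AddCommMonoid M] (f : Fin n → Fin n → Fin m → Fin m → M) :
    ∑ p : Fin n × Fin n × Fin m × Fin m, f p.1 p.2.1 p.2.2.1 p.2.2.2 =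
      ∑ i, ∑ j, ∑ k, ∑ l, f i j k l := by
  simp only [Fintype.sum_prod_type]

lemma norm_rankOne (v : EuclideanSpace ℂ (Fin n × Fin m)) : ‖rankOne v‖ = ‖v‖ ^ 2 := by
  rw [← Real.sqrt_sq (sq_nonneg ‖v‖), EuclideanSpace.norm_eq, EuclideanSpace.norm_sq_eq]
  congr 1
  have h1 : ∀ p : Fin n × Fin n × Fin m × Fin m, ‖rankOne v p‖ ^ 2 =
      ‖v (p.1, p.2.2.1)‖ ^ 2 * ‖v (p.2.1, p.2.2.2)‖ ^ 2 := fun p => by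
    simp [rankOne, mul_pow]
  simp only [h1]
  rw [sum_four fun i j k l => ‖v (i, k)‖ ^ 2 * ‖v (j, l)‖ ^ 2, sq, Fintype.sum_prod_type,
    Finset.sum_mul_sum]
  refine Finset.sum_congr rfl fun i _ => Finset.sum_congr rfl fun j _ => ?_
  rw [Finset.sum_mul_sum]

lemma rankOne_smul (t : ℝ) (v : EuclideanSpace ℂ (Fin n × Fin m)) :
    rankOne (t • v) = t ^ 2 • rankOne v := by
  ext p
  simp [rankOne]
  ring

lemma rankOne_add_smul (t : ℝ) (v u : EuclideanSpace ℂ (Fin n × Fin m)) :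
    rankOne (v + t • u) =
      rankOne v + (t / 2) • (rankOne (v + u) - rankOne (v - u)) + t ^ 2 • rankOne u := by
  ext p
  simp [rankOne]
  ring

lemma continuous_rankOne : Continuous (rankOne : EuclideanSpace ℂ (Fin n × Fin m) → Coeffs n m) := by
  unfold rankOne
  fun_prop

lemma norm_tensor (p : EuclideanSpace ℂ (Fin n) × EuclideanSpace ℂ (Fin m)) :
    ‖tensor p‖ = ‖p.1‖ * ‖p.2‖ := by
  rw [← Real.sqrt_sq (mul_nonneg (norm_nonneg p.1) (norm_nonneg p.2)), EuclideanSpace.norm_eq,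
    mul_pow, EuclideanSpace.norm_sq_eq, EuclideanSpace.norm_sq_eq, Finset.sum_mul_sum,
    Fintype.sum_prod_type]
  simp [tensor, mul_pow]

lemma continuous_tensor : Continuous (tensor : _ → EuclideanSpace ℂ (Fin n × Fin m)) := by
  unfold tensor
  fun_prop

lemma tensor_smul_fst (t : ℝ) (z : EuclideanSpace ℂ (Fin n)) (w : EuclideanSpace ℂ (Fin m)) :
    tensor (t • z, w) = t • tensor (z, w) := by
  ext q
  simp [tensor, mul_assoc]

lemma tensor_smul_snd (t : ℝ) (z : EuclideanSpace ℂ (Fin n)) (w : EuclideanSpace ℂ (Fin m)) :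
    tensor (z, t • w) = t • tensor (z, w) := by
  ext q
  simp [tensor]
  ring

lemma tensor_add_fst (z z' : EuclideanSpace ℂ (Fin n)) (w : EuclideanSpace ℂ (Fin m)) :
    tensor (z + z', w) = tensor (z, w) + tensor (z', w) := by
  ext q
  simp [tensor, add_mul]

lemma tensor_sub_fst (z z' : EuclideanSpace ℂ (Fin n)) (w : EuclideanSpace ℂ (Fin m)) :
    tensor (z - z', w) = tensor (z, w) - tensor (z', w) := by
  ext q
  simp [tensor, sub_mul]

lemma tensor_add_snd (z : EuclideanSpace ℂ (Fin n)) (w w' : EuclideanSpace ℂ (Fin m)) :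
    tensor (z, w + w') = tensor (z, w) + tensor (z, w') := by
  ext q
  simp [tensor, mul_add]

lemma tensor_sub_snd (z : EuclideanSpace ℂ (Fin n)) (w w' : EuclideanSpace ℂ (Fin m)) :
    tensor (z, w - w') = tensor (z, w) - tensor (z, w') := by
  ext q
  simp [tensor, mul_sub]

lemma isTameFamily_rankOne :
    IsTameFamily (rankOne : EuclideanSpace ℂ (Fin n × Fin m) → Coeffs n m) where
  cont := continuous_rankOne
  bound v hv := by
    rw [norm_rankOne]
    calc ‖v‖ ^ 2 ≤ (11 / 10) ^ 2 := by gcongr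
      _ ≤ _ := by norm_num
  stable g M hM v₀ v hv₀ hv := by
    have hM0 : 0 ≤ M := (abs_nonneg _).trans (hM 0 (by simp))
    have := abs_quadratic_sub_le (Q := fun v => inner ℝ g (rankOne v)) (M := M)
      (fun t v => by simp only [rankOne_smul, inner_smul_right])
      (fun t v u => by
        simp only [rankOne_add_smul t v u, inner_smul_right, inner_add_right, inner_sub_right])
      hM hv₀ hv
    linarith

lemma isTameFamily_rankOne_tensor :
    IsTameFamily fun p : EuclideanSpace ℂ (Fin n) × EuclideanSpace ℂ (Fin m) =>
      rankOne (tensor p) where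
  cont := continuous_rankOne.comp continuous_tensor
  bound p hp := by
    rw [norm_rankOne, norm_tensor, mul_pow]
    have h1 : ‖p.1‖ ≤ 11 / 10 := (norm_fst_le p).trans hp
    have h2 : ‖p.2‖ ≤ 11 / 10 := (norm_snd_le p).trans hp
    calc _ ≤ (11 / 10 : ℝ) ^ 2 * (11 / 10) ^ 2 := by gcongr
      _ = _ := by norm_num
  stable g M hM p₀ p hp₀ hp := by
    obtain ⟨z₀, w₀⟩ := p₀
    obtain ⟨z, w⟩ := p
    have hM0 : 0 ≤ M := (abs_nonneg _).trans (hM 0 (by simp))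
    have hz₀ : ‖z₀‖ ≤ 1 := (norm_fst_le (z₀, w₀)).trans hp₀
    have hw₀ : ‖w₀‖ ≤ 1 := (norm_snd_le (z₀, w₀)).trans hp₀
    have hz : ‖z - z₀‖ ≤ 1 / 10 := (norm_fst_le ((z, w) - (z₀, w₀))).trans hp
    have hw : ‖w - w₀‖ ≤ 1 / 10 := (norm_snd_le ((z, w) - (z₀, w₀))).trans hp
    have hw' : ‖w‖ ≤ 11 / 10 := by
      have : ‖w‖ ≤ ‖w - w₀‖ + ‖w₀‖ := by simpa using norm_add_le (w - w₀) w₀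
      linarith
    have h1 := abs_quadratic_sub_le (Q := fun w => inner ℝ g (rankOne (tensor (z₀, w)))) (M := M)
      (fun t w => by simp only [tensor_smul_snd, rankOne_smul, inner_smul_right])
      (fun t v u => by
        simp only [tensor_add_snd, tensor_sub_snd, tensor_smul_snd,
          rankOne_add_smul t, inner_smul_right, inner_add_right, inner_sub_right])
      (fun w hw => hM (z₀, w) (by rw [Prod.norm_mk]; exact max_le hz₀ hw)) hw₀ hw
    have h2 := abs_quadratic_sub_le (Q := fun z => inner ℝ g (rankOne (tensor (z, w))))
      (M := (11 / 10) ^ 2 * M)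
      (fun t w => by simp only [tensor_smul_fst, rankOne_smul, inner_smul_right])
      (fun t v u => by
        simp only [tensor_add_fst, tensor_sub_fst, tensor_smul_fst,
          rankOne_add_smul t, inner_smul_right, inner_add_right, inner_sub_right])
      (fun z hz => by
        have hs : w = (11 / 10 : ℝ) • ((10 / 11 : ℝ) • w) := by
          rw [smul_smul]; norm_num
        rw [hs, tensor_smul_snd, rankOne_smul, inner_smul_right, abs_mul,
          abs_of_nonneg (by positivity)]
        refine mul_le_mul_of_nonneg_left (hM (z, (10 / 11 : ℝ) • w) ?_) (by positivity)
        rw [Prod.norm_mk]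
        refine max_le hz ?_
        rw [norm_smul, Real.norm_of_nonneg (by norm_num)]
        linarith) hz₀ hz
    have h3 := abs_sub_le (inner ℝ g (rankOne (tensor (z, w))))
      (inner ℝ g (rankOne (tensor (z₀, w)))) (inner ℝ g (rankOne (tensor (z₀, w₀))))
    linarith

lemma finrank_real_euclideanSpace (ι : Type*) [Fintype ι] :
    Module.finrank ℝ (EuclideanSpace ℂ ι) = 2 * Fintype.card ι := by
  rw [(WithLp.linearEquiv 2 ℝ (ι → ℂ)).finrank_eq, Module.finrank_pi_fintype]
  simp [Complex.finrank_real_complex, mul_comm]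

lemma inner_rankOne (g : Coeffs n m) (v : EuclideanSpace ℂ (Fin n × Fin m)) :
    inner ℝ g (rankOne v) = (∑ i, ∑ j, ∑ k, ∑ l,
      g (i, j, k, l) * (starRingEnd ℂ) (v (i, k)) * v (j, l)).re := by
  rw [PiLp.inner_apply, ← sum_four fun i j k l =>
    g (i, j, k, l) * (starRingEnd ℂ) (v (i, k)) * v (j, l), Complex.re_sum]
  refine Finset.sum_congr rfl fun p _ => ?_
  rw [Complex.inner]
  simp [rankOne]
  ring

end Tensor

end PositiveMaps

namespace PositiveMaps

open BiformPaper

/-! ### Coefficients of multiforms -/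

section Polynomials

variable {n m : ℕ}

lemma sum_fin_two_mul {M : Type*} [AddCommMonoid M] (f : Fin (2 * n) → M) :
    ∑ p, f p = ∑ i : Fin n, (f ⟨i, by omega⟩ + f ⟨n + i, by omega⟩) := by
  rw [← Fin.sum_congr' f (two_mul n).symm, Fin.sum_univ_add, ← Finset.sum_add_distrib]
  rfl

/-- The point of `ℂ²ⁿ` at which the variables `z̄` and `z` take prescribed independent values. -/
def cpoint (c v : Fin n → ℂ) (p : Fin (2 * n)) : ℂ :=
  if h : (p : ℕ) < n then (v ⟨p, h⟩ + c ⟨p, h⟩) / 2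
  else -Complex.I * (v ⟨p - n, by omega⟩ - c ⟨p - n, by omega⟩) / 2

lemma cpoint_left (c v : Fin n → ℂ) (i : Fin n) :
    cpoint c v ⟨i, by omega⟩ = (v i + c i) / 2 := by
  simp [cpoint]

lemma cpoint_right (c v : Fin n → ℂ) (i : Fin n) :
    cpoint c v ⟨n + i, by omega⟩ = -Complex.I * (v i - c i) / 2 := by
  simp [cpoint]

section Eval

variable (zc zv : Fin n → ℂ) (wc wv : Fin m → ℂ)

lemma eval_Zv (i : Fin n) :
    eval (Sum.elim (cpoint zc zv) (cpoint wc wv)) (Zv n m i) = zv i := by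
  simp only [Zv, zRe, zIm, map_add, map_mul, eval_X, eval_C, Sum.elim_inl, cpoint_left,
    cpoint_right]
  linear_combination (-(zv i - zc i) / 2) * Complex.I_mul_I

lemma eval_Zc (i : Fin n) :
    eval (Sum.elim (cpoint zc zv) (cpoint wc wv)) (Zc n m i) = zc i := by
  simp only [Zc, zRe, zIm, map_sub, map_mul, eval_X, eval_C, Sum.elim_inl, cpoint_left,
    cpoint_right]
  linear_combination ((zv i - zc i) / 2) * Complex.I_mul_I

lemma eval_Wv (i : Fin m) :
    eval (Sum.elim (cpoint zc zv) (cpoint wc wv)) (Wv n m i) = wv i := by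
  simp only [Wv, wRe, wIm, map_add, map_mul, eval_X, eval_C, Sum.elim_inr, cpoint_left,
    cpoint_right]
  linear_combination (-(wv i - wc i) / 2) * Complex.I_mul_I

lemma eval_Wc (i : Fin m) :
    eval (Sum.elim (cpoint zc zv) (cpoint wc wv)) (Wc n m i) = wc i := by
  simp only [Wc, wRe, wIm, map_sub, map_mul, eval_X, eval_C, Sum.elim_inr, cpoint_left,
    cpoint_right]
  linear_combination ((wv i - wc i) / 2) * Complex.I_mul_I

end Eval

/-- The complex vector `z` with real part the first half and imaginary part the second half of a
real vector. -/
def toComplex (x : Fin (2 * n) → ℝ) (i : Fin n) : ℂ :=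
  x ⟨i, by omega⟩ + Complex.I * x ⟨n + i, by omega⟩

lemma cpoint_toComplex (x : Fin (2 * n) → ℝ) :
    cpoint (fun i => (starRingEnd ℂ) (toComplex x i)) (toComplex x) = fun p => (x p : ℂ) := by
  funext p
  by_cases h : (p : ℕ) < n
  · simp only [cpoint, h, toComplex, dif_pos, map_add, map_mul, Complex.conj_ofReal,
      Complex.conj_I]
    ring
  · have hp : (⟨n + (p - n), by omega⟩ : Fin (2 * n)) = p := Fin.ext (by simp; omega)
    simp only [cpoint, h, toComplex, hp, dif_neg, not_false_iff, map_add, map_mul,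
      Complex.conj_ofReal, Complex.conj_I]
    linear_combination (-(x p : ℂ)) * Complex.I_mul_I

lemma norm_sq_toComplex (x : Fin (2 * n) → ℝ) (i : Fin n) :
    ‖toComplex x i‖ ^ 2 = x ⟨i, by omega⟩ ^ 2 + x ⟨n + i, by omega⟩ ^ 2 := by
  rw [← Complex.normSq_eq_norm_sq, Complex.normSq_apply]
  simp [toComplex]
  ring

lemma ofReal_beval (f : MvPolynomial (Fin (2 * n) ⊕ Fin (2 * m)) ℝ) (x : Fin (2 * n) → ℝ)
    (y : Fin (2 * m) → ℝ) :
    (beval f x y : ℂ) = eval (Sum.elim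
      (cpoint (fun i => (starRingEnd ℂ) (toComplex x i)) (toComplex x))
      (cpoint (fun i => (starRingEnd ℂ) (toComplex y i)) (toComplex y)))
      (MvPolynomial.map (algebraMap ℝ ℂ) f) := by
  rw [cpoint_toComplex, cpoint_toComplex, eval_map]
  have : (Sum.elim (fun p => (x p : ℂ)) fun p => (y p : ℂ)) =
      fun s => algebraMap ℝ ℂ (Sum.elim x y s) := by
    funext s
    cases s <;> rfl
  rw [this]
  exact eval₂_comp_left (algebraMap ℝ ℂ) (RingHom.id ℝ) (Sum.elim x y) f

lemma ofReal_beval_of_map_eq_herm {f : MvPolynomial (Fin (2 * n) ⊕ Fin (2 * m)) ℝ}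
    {a : Fin n → Fin n → Fin m → Fin m → ℂ}
    (h : MvPolynomial.map (algebraMap ℝ ℂ) f = herm n m a)
    (x : Fin (2 * n) → ℝ) (y : Fin (2 * m) → ℝ) :
    (beval f x y : ℂ) = ∑ i, ∑ j, ∑ k, ∑ l, a i j k l * (starRingEnd ℂ) (toComplex x i) *
      toComplex x j * (starRingEnd ℂ) (toComplex y k) * toComplex y l := by
  rw [ofReal_beval, h, herm]
  simp only [map_sum, map_mul, eval_C, eval_Zc, eval_Zv, eval_Wc, eval_Wv]

/-- The linear map reading off the coefficients of a multiform. -/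
def coeffMap (n m : ℕ) : MvPolynomial (Fin (2 * n) ⊕ Fin (2 * m)) ℝ →ₗ[ℝ] Coeffs n m where
  toFun f := WithLp.toLp 2 fun p => eval (Sum.elim
    (cpoint (Pi.single p.1 1) (Pi.single p.2.1 1))
    (cpoint (Pi.single p.2.2.1 1) (Pi.single p.2.2.2 1))) (MvPolynomial.map (algebraMap ℝ ℂ) f)
  map_add' f g := by
    ext p
    simp
  map_smul' t f := by
    ext p
    simp [smul_eq_C_mul]

lemma coeffMap_apply (f : MvPolynomial (Fin (2 * n) ⊕ Fin (2 * m)) ℝ)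
    (p : Fin n × Fin n × Fin m × Fin m) : coeffMap n m f p = eval (Sum.elim
    (cpoint (Pi.single p.1 1) (Pi.single p.2.1 1))
    (cpoint (Pi.single p.2.2.1 1) (Pi.single p.2.2.2 1)))
    (MvPolynomial.map (algebraMap ℝ ℂ) f) := rfl

lemma coeffMap_of_map_eq_herm {f : MvPolynomial (Fin (2 * n) ⊕ Fin (2 * m)) ℝ}
    {a : Fin n → Fin n → Fin m → Fin m → ℂ}
    (h : MvPolynomial.map (algebraMap ℝ ℂ) f = herm n m a) (i j : Fin n) (k l : Fin m) :
    coeffMap n m f (i, j, k, l) = a i j k l := by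
  rw [coeffMap_apply, h, herm]
  simp only [map_sum, map_mul, eval_C, eval_Zc, eval_Zv, eval_Wc, eval_Wv, Pi.single_apply]
  simp

lemma coeffMap_of_map_eq_sum {f : MvPolynomial (Fin (2 * n) ⊕ Fin (2 * m)) ℝ} {N : ℕ}
    {b : Fin N → Fin n → Fin m → ℂ}
    (h : MvPolynomial.map (algebraMap ℝ ℂ) f =
      ∑ r, (∑ i, ∑ j, C ((starRingEnd ℂ) (b r i j)) * Zc n m i * Wc n m j) *
           (∑ i, ∑ j, C (b r i j) * Zv n m i * Wv n m j)) :
    coeffMap n m f =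
      ∑ r, rankOne (WithLp.toLp 2 fun q : Fin n × Fin m => (starRingEnd ℂ) (b r q.1 q.2)) := by
  ext p
  rw [coeffMap_apply, h]
  simp only [map_sum, map_mul, eval_C, eval_Zc, eval_Zv, eval_Wc, eval_Wv, Pi.single_apply]
  simp [rankOne]

lemma map_eq_herm_coeffMap {f : MvPolynomial (Fin (2 * n) ⊕ Fin (2 * m)) ℝ} {isR : Bool}
    (hf : f ∈ CF n m isR) : MvPolynomial.map (algebraMap ℝ ℂ) f =
      herm n m fun i j k l => coeffMap n m f (i, j, k, l) := by
  obtain ⟨a, -, -, h⟩ := hf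
  simp only [coeffMap_of_map_eq_herm h, h]

lemma coeffMap_injOn (isR : Bool) : Set.InjOn (coeffMap n m) (CF n m isR) := fun f hf g hg h =>
  map_injective _ (algebraMap ℝ ℂ).injective <| by
    rw [map_eq_herm_coeffMap hf, map_eq_herm_coeffMap hg, h]

lemma add_mem_CF {f g : MvPolynomial (Fin (2 * n) ⊕ Fin (2 * m)) ℝ} {isR : Bool}
    (hf : f ∈ CF n m isR) (hg : g ∈ CF n m isR) : f + g ∈ CF n m isR := by
  obtain ⟨a, ha, haR, hfa⟩ := hf
  obtain ⟨b, hb, hbR, hgb⟩ := hg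
  refine ⟨fun i j k l => a i j k l + b i j k l, fun i j k l => ?_, fun h i j k l => ?_, ?_⟩
  · simp only [ha i, hb i, map_add]
  · rw [Complex.add_im, haR h, hbR h, add_zero]
  · rw [map_add, hfa, hgb]
    simp only [herm, ← Finset.sum_add_distrib, map_add, add_mul]

lemma Zc_mul_Zv (i : Fin n) : Zc n m i * Zv n m i = zRe n m i ^ 2 + zIm n m i ^ 2 := by
  have : (C Complex.I : MvPolynomial (Fin (2 * n) ⊕ Fin (2 * m)) ℂ) * C Complex.I = -1 := by
    rw [← map_mul, Complex.I_mul_I, map_neg, map_one]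
  rw [Zc, Zv]
  linear_combination (-zIm n m i ^ 2) * this

lemma Wc_mul_Wv (i : Fin m) : Wc n m i * Wv n m i = wRe n m i ^ 2 + wIm n m i ^ 2 := by
  have : (C Complex.I : MvPolynomial (Fin (2 * n) ⊕ Fin (2 * m)) ℂ) * C Complex.I = -1 := by
    rw [← map_mul, Complex.I_mul_I, map_neg, map_one]
  rw [Wc, Wv]
  linear_combination (-wIm n m i ^ 2) * this

lemma map_qpoly : MvPolynomial.map (algebraMap ℝ ℂ) (qpoly (2 * n) (2 * m) 1 1) =
    herm n m fun i j k l => if i = j ∧ k = l then 1 else 0 := by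
  have h : ∀ (i j : Fin n) (k l : Fin m),
      (C (if i = j ∧ k = l then 1 else 0) * Zc n m i * Zv n m j * Wc n m k * Wv n m l :
        MvPolynomial (Fin (2 * n) ⊕ Fin (2 * m)) ℂ) =
      if i = j then (if k = l then (Zc n m i * Zv n m i) * (Wc n m k * Wv n m k) else 0) else 0 :=
    fun i j k l => by
      by_cases h1 : i = j <;> by_cases h2 : k = l
      · subst h1 h2
        simp
        ring
      all_goals simp [h1, h2]
  simp only [herm, h]
  have h' : ∀ i : Fin n, ∀ g : MvPolynomial (Fin (2 * n) ⊕ Fin (2 * m)) ℂ, ∀ j : Fin n,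
      (∑ k : Fin m, ∑ l : Fin m, if i = j then (if k = l then g * (Wc n m k * Wv n m k) else 0)
        else 0) = if i = j then g * ∑ k, Wc n m k * Wv n m k else 0 := fun i g j => by
    split_ifs <;> simp [Finset.mul_sum]
  simp only [h', Finset.sum_ite_eq, Finset.mem_univ, if_true, ← Finset.sum_mul]
  simp only [qpoly, pow_one, sum_fin_two_mul, Zc_mul_Zv, Wc_mul_Wv, map_mul, map_sum, map_add,
    map_pow, map_X]
  rfl

lemma qpoly_mem_CF (isR : Bool) : qpoly (2 * n) (2 * m) 1 1 ∈ CF n m isR := by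
  refine ⟨_, fun i j k l => ?_, fun _ i j k l => ?_, map_qpoly⟩
  · simp only [eq_comm (a := i), eq_comm (a := k)]
    split_ifs <;> simp
  · split_ifs <;> simp

lemma beval_qpoly (x : Fin (2 * n) → ℝ) (y : Fin (2 * m) → ℝ) :
    beval (qpoly (2 * n) (2 * m) 1 1) x y = (∑ p, x p ^ 2) * ∑ p, y p ^ 2 := by
  simp [beval, qpoly]

lemma beval_eq_inner {f : MvPolynomial (Fin (2 * n) ⊕ Fin (2 * m)) ℝ} {isR : Bool}
    (hf : f ∈ CF n m isR) (x : Fin (2 * n) → ℝ) (y : Fin (2 * m) → ℝ) :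
    beval f x y = inner ℝ (coeffMap n m f)
      (rankOne (tensor (WithLp.toLp 2 (toComplex x), WithLp.toLp 2 (toComplex y)))) := by
  rw [inner_rankOne, ← Complex.ofReal_re (beval f x y),
    ofReal_beval_of_map_eq_herm (map_eq_herm_coeffMap hf)]
  simp only [tensor, map_mul]
  refine congrArg Complex.re (Finset.sum_congr rfl fun i _ => Finset.sum_congr rfl fun j _ =>
    Finset.sum_congr rfl fun k _ => Finset.sum_congr rfl fun l _ => ?_)
  ring

lemma norm_toLp_toComplex_sq (x : Fin (2 * n) → ℝ) :
    ‖(WithLp.toLp 2 (toComplex x) : EuclideanSpace ℂ (Fin n))‖ ^ 2 = ∑ p, x p ^ 2 := by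
  rw [EuclideanSpace.norm_sq_eq, sum_fin_two_mul]
  exact Finset.sum_congr rfl fun i _ => norm_sq_toComplex x i

lemma coeffMap_qpoly (i j : Fin n) (k l : Fin m) :
    coeffMap n m (qpoly (2 * n) (2 * m) 1 1) (i, j, k, l) = if i = j ∧ k = l then 1 else 0 :=
  coeffMap_of_map_eq_herm map_qpoly i j k l

end Polynomials

end PositiveMaps

namespace PositiveMaps

open BiformPaper

/-! ### Second moments of the uniform measure on the sphere -/

section Moments

variable {n : ℕ} {σ : Measure (Fin n → ℝ)}

lemma ae_sum_sq_eq_one (hσ : IsSphereMeasure n σ) : ∀ᵐ x ∂σ, ∑ i, x i ^ 2 = 1 :=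
  hσ.onSphere

lemma integrable_mul_coord (hσ : IsSphereMeasure n σ) (p q : Fin n) :
    Integrable (fun x => x p * x q) σ := by
  have := hσ.prob
  refine Integrable.of_bound (by fun_prop) 1 ?_
  filter_upwards [ae_sum_sq_eq_one hσ] with x hx
  have h : ∀ i, |x i| ≤ 1 := fun i => by
    rw [← sq_le_one_iff_abs_le_one, ← hx]
    exact Finset.single_le_sum (f := fun i => x i ^ 2) (fun _ _ => sq_nonneg _) (Finset.mem_univ i)
  rw [norm_mul, Real.norm_eq_abs, Real.norm_eq_abs]
  exact mul_le_one₀ (h p) (abs_nonneg _) (h q)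

lemma integral_mulVec (hσ : IsSphereMeasure n σ) {Q : Matrix (Fin n) (Fin n) ℝ}
    (hQ : Q * Q.transpose = 1) (p q : Fin n) :
    ∫ x, Q.mulVec x p * Q.mulVec x q ∂σ = ∫ x, x p * x q ∂σ := by
  have hc : Continuous Q.mulVec := continuous_const.matrix_mulVec continuous_id
  conv_rhs => rw [← hσ.invariant Q hQ]
  rw [integral_map hc.aemeasurable (by fun_prop)]

lemma integral_mul_coord_of_ne (hσ : IsSphereMeasure n σ) {p q : Fin n} (h : p ≠ q) :
    ∫ x, x p * x q ∂σ = 0 := by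
  have h1 := integral_mulVec hσ (Q := Matrix.diagonal fun i => if i = p then -1 else 1) (by
    rw [Matrix.diagonal_transpose, Matrix.diagonal_mul_diagonal, ← Matrix.diagonal_one]
    congr 1
    funext i
    split_ifs <;> norm_num) p q
  simp only [Matrix.mulVec_diagonal, if_true, if_neg h.symm, one_mul, neg_mul, integral_neg] at h1
  linarith

lemma integral_sq_coord_eq (hσ : IsSphereMeasure n σ) (p q : Fin n) :
    ∫ x, x p * x p ∂σ = ∫ x, x q * x q ∂σ := by
  have h1 := integral_mulVec hσ (Q := (Equiv.swap p q).permMatrix ℝ) (by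
    rw [Matrix.transpose_permMatrix, ← Matrix.permMatrix_mul, inv_mul_cancel, Matrix.permMatrix_one])
    q q
  simpa [Matrix.permMatrix_mulVec] using h1

lemma integral_mul_coord (hσ : IsSphereMeasure n σ) (p q : Fin n) :
    ∫ x, x p * x q ∂σ = if p = q then (n : ℝ)⁻¹ else 0 := by
  split_ifs with h
  · subst h
    have := hσ.prob
    have h1 : ∑ i, ∫ x, x i * x i ∂σ = 1 := by
      rw [← integral_finsetSum _ fun i _ => integrable_mul_coord hσ i i]
      have : (fun x : Fin n → ℝ => ∑ i, x i * x i) =ᵐ[σ] fun _ => 1 := by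
        filter_upwards [ae_sum_sq_eq_one hσ] with x hx
        simpa [sq] using hx
      rw [integral_congr_ae this]
      simp
    rw [Finset.sum_congr rfl fun i _ => integral_sq_coord_eq hσ i p] at h1
    simp only [Finset.sum_const, Finset.card_univ, Fintype.card_fin, nsmul_eq_mul] at h1
    exact eq_inv_of_mul_eq_one_right h1
  · exact integral_mul_coord_of_ne hσ h

end Moments

section Trace

variable {n m : ℕ}

lemma conj_toComplex_mul (x : Fin (2 * n) → ℝ) (i j : Fin n) :
    (starRingEnd ℂ) (toComplex x i) * toComplex x j =
      ((x ⟨i, by omega⟩ * x ⟨j, by omega⟩ + x ⟨n + i, by omega⟩ * x ⟨n + j, by omega⟩ : ℝ) : ℂ) +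
      Complex.I * ((x ⟨i, by omega⟩ * x ⟨n + j, by omega⟩ -
        x ⟨n + i, by omega⟩ * x ⟨j, by omega⟩ : ℝ) : ℂ) := by
  simp only [toComplex, map_add, map_mul, Complex.conj_ofReal, Complex.conj_I]
  push_cast
  linear_combination (-(x ⟨n + i, by omega⟩ : ℂ) * x ⟨n + j, by omega⟩) * Complex.I_mul_I

lemma integrable_conj_toComplex_mul {σ : Measure (Fin (2 * n) → ℝ)}
    (hσ : IsSphereMeasure (2 * n) σ) (i j : Fin n) :
    Integrable (fun x => (starRingEnd ℂ) (toComplex x i) * toComplex x j) σ := by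
  simp only [conj_toComplex_mul]
  exact ((integrable_mul_coord hσ _ _).add (integrable_mul_coord hσ _ _)).ofReal.add
    (((integrable_mul_coord hσ _ _).sub (integrable_mul_coord hσ _ _)).ofReal.const_mul _)

lemma integral_conj_toComplex_mul {σ : Measure (Fin (2 * n) → ℝ)}
    (hσ : IsSphereMeasure (2 * n) σ) (i j : Fin n) :
    ∫ x, (starRingEnd ℂ) (toComplex x i) * toComplex x j ∂σ = if i = j then (n : ℂ)⁻¹ else 0 := by
  have h1 := (integrable_mul_coord hσ ⟨i, by omega⟩ ⟨j, by omega⟩).add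
    (integrable_mul_coord hσ ⟨n + i, by omega⟩ ⟨n + j, by omega⟩)
  have h2 := (integrable_mul_coord hσ ⟨i, by omega⟩ ⟨n + j, by omega⟩).sub
    (integrable_mul_coord hσ ⟨n + i, by omega⟩ ⟨j, by omega⟩)
  have e1 : ¬ (i : ℕ) = n + j := by omega
  have e2 : ¬ n + (i : ℕ) = j := by omega
  simp only [conj_toComplex_mul]
  rw [integral_add h1.ofReal (h2.ofReal.const_mul _), integral_const_mul, integral_complex_ofReal,
    integral_complex_ofReal, integral_add (integrable_mul_coord hσ _ _)
      (integrable_mul_coord hσ _ _), integral_sub (integrable_mul_coord hσ _ _)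
      (integrable_mul_coord hσ _ _)]
  simp only [integral_mul_coord hσ, if_neg e1, if_neg e2, Fin.mk.injEq, Nat.add_left_cancel_iff,
    ← Fin.ext_iff]
  split_ifs
  · push_cast
    ring
  · simp

lemma ofReal_bavg {σ₁ : Measure (Fin (2 * n) → ℝ)} {σ₂ : Measure (Fin (2 * m) → ℝ)}
    (hσ₁ : IsSphereMeasure (2 * n) σ₁) (hσ₂ : IsSphereMeasure (2 * m) σ₂)
    {f : MvPolynomial (Fin (2 * n) ⊕ Fin (2 * m)) ℝ} {isR : Bool} (hf : f ∈ CF n m isR) :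
    (bavg σ₁ σ₂ f : ℂ) =
      (n : ℂ)⁻¹ * (m : ℂ)⁻¹ * ∑ i, ∑ k, coeffMap n m f (i, i, k, k) := by
  set a := fun i j k l => coeffMap n m f (i, j, k, l) with ha
  set u : Fin n → Fin n → (Fin (2 * n) → ℝ) → ℂ :=
    fun i j x => (starRingEnd ℂ) (toComplex x i) * toComplex x j with hu
  set v : Fin m → Fin m → (Fin (2 * m) → ℝ) → ℂ :=
    fun k l y => (starRingEnd ℂ) (toComplex y k) * toComplex y l with hv
  have hui : ∀ i j, Integrable (u i j) σ₁ := integrable_conj_toComplex_mul hσ₁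
  have hvi : ∀ k l, Integrable (v k l) σ₂ := integrable_conj_toComplex_mul hσ₂
  have h1 : ∀ x y, (beval f x y : ℂ) =
      ∑ p : Fin n × Fin n × Fin m × Fin m, a p.1 p.2.1 p.2.2.1 p.2.2.2 * u p.1 p.2.1 x *
        v p.2.2.1 p.2.2.2 y := fun x y => by
    rw [ofReal_beval_of_map_eq_herm (map_eq_herm_coeffMap hf),
      sum_four fun i j k l => a i j k l * u i j x * v k l y]
    simp only [hu, hv, ha, mul_assoc]
  simp only [bavg, ← integral_complex_ofReal, h1]
  simp only [integral_finsetSum _ fun (p : Fin n × Fin n × Fin m × Fin m) _ =>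
    (hvi p.2.2.1 p.2.2.2).const_mul _, integral_const_mul]
  rw [integral_finsetSum _ fun (p : Fin n × Fin n × Fin m × Fin m) _ =>
    ((hui p.1 p.2.1).const_mul _).mul_const _]
  simp only [integral_const_mul, integral_mul_const, hu, hv, integral_conj_toComplex_mul hσ₁,
    integral_conj_toComplex_mul hσ₂]
  rw [sum_four fun i j k l => a i j k l * (if i = j then (n : ℂ)⁻¹ else 0) *
    (if k = l then (m : ℂ)⁻¹ else 0)]
  simp only [mul_ite, mul_zero, Finset.sum_ite_eq, Finset.mem_univ, if_true, ite_mul, zero_mul]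
  simp only [Finset.sum_ite_irrel, Finset.sum_const_zero, Finset.sum_ite_eq, Finset.mem_univ,
    if_true, Finset.mul_sum, ha]
  refine Finset.sum_congr rfl fun i _ => Finset.sum_congr rfl fun k _ => ?_
  ring

end Trace

end PositiveMaps

namespace PositiveMaps

open BiformPaper

/-! ### Sections of the cones -/

section Cones

variable {n m : ℕ}

lemma abs_inner_rankOne_le {g : Coeffs n m} {M : ℝ}
    (hg : ∀ v : EuclideanSpace ℂ (Fin n × Fin m), ‖v‖ ≤ 1 → |inner ℝ g (rankOne v)| ≤ M)
    (u : EuclideanSpace ℂ (Fin n × Fin m)) : |inner ℝ g (rankOne u)| ≤ ‖u‖ ^ 2 * M := by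
  rcases eq_or_ne u 0 with rfl | hu
  · have h := norm_rankOne (0 : EuclideanSpace ℂ (Fin n × Fin m))
    rw [norm_zero, zero_pow two_ne_zero, norm_eq_zero] at h
    simp [h]
  · have hpos : 0 < ‖u‖ := norm_pos_iff.2 hu
    have h := hg (‖u‖⁻¹ • u) (by rw [norm_smul, norm_inv, norm_norm, inv_mul_cancel₀ hpos.ne'])
    rwa [rankOne_smul, inner_smul_right, abs_mul, abs_of_nonneg (by positivity), inv_pow,
      inv_mul_le_iff₀ (by positivity)] at h

lemma abs_inner_rankOne_tensor_le {g : Coeffs n m} {M : ℝ}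
    (hg : ∀ p : EuclideanSpace ℂ (Fin n) × EuclideanSpace ℂ (Fin m), ‖p‖ ≤ 1 →
      |inner ℝ g (rankOne (tensor p))| ≤ M)
    (z : EuclideanSpace ℂ (Fin n)) (w : EuclideanSpace ℂ (Fin m)) :
    |inner ℝ g (rankOne (tensor (z, w)))| ≤ ‖z‖ ^ 2 * ‖w‖ ^ 2 * M := by
  by_cases h0 : z = 0 ∨ w = 0
  · have ht : ‖rankOne (tensor (z, w))‖ = 0 := by
      rw [norm_rankOne, norm_tensor]
      rcases h0 with rfl | rfl <;> simp
    rw [norm_eq_zero] at ht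
    rcases h0 with rfl | rfl <;> simp [ht]
  · push Not at h0
    have hz : 0 < ‖z‖ := norm_pos_iff.2 h0.1
    have hw : 0 < ‖w‖ := norm_pos_iff.2 h0.2
    have h := hg (‖z‖⁻¹ • z, ‖w‖⁻¹ • w) (by
      rw [Prod.norm_mk, norm_smul, norm_inv, norm_norm, inv_mul_cancel₀ hz.ne', norm_smul,
        norm_inv, norm_norm, inv_mul_cancel₀ hw.ne', max_self])
    rw [tensor_smul_fst, tensor_smul_snd, rankOne_smul, rankOne_smul, inner_smul_right,
      inner_smul_right, abs_mul, abs_mul, abs_of_nonneg (by positivity),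
      abs_of_nonneg (by positivity), inv_pow, inv_pow, inv_mul_le_iff₀ (by positivity),
      inv_mul_le_iff₀ (by positivity)] at h
    linarith

lemma sum_rankOne_diag (v : EuclideanSpace ℂ (Fin n × Fin m)) :
    ∑ i, ∑ k, rankOne v (i, i, k, k) = (‖v‖ ^ 2 : ℝ) := by
  rw [EuclideanSpace.norm_sq_eq, Fintype.sum_prod_type]
  push_cast
  refine Finset.sum_congr rfl fun i _ => Finset.sum_congr rfl fun k _ => ?_
  simp [rankOne, ← Complex.mul_conj']

variable {D : ℕ} {isR : Bool} {σ₁ : Measure (Fin (2 * n) → ℝ)} {σ₂ : Measure (Fin (2 * m) → ℝ)}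
  {ψ : (Fin D → ℝ) →ₗ[ℝ] MvPolynomial (Fin (2 * n) ⊕ Fin (2 * m)) ℝ}

lemma abs_inner_coeffMap_le {f : MvPolynomial (Fin (2 * n) ⊕ Fin (2 * m)) ℝ}
    (hn : n ≠ 0) (hm : m ≠ 0) (hσ₁ : IsSphereMeasure (2 * n) σ₁) (hσ₂ : IsSphereMeasure (2 * m) σ₂)
    (hf : f ∈ tildeCF n m isR σ₁ σ₂ (SqCF n m isR)) {g : Coeffs n m} {M : ℝ}
    (hg : ∀ v : EuclideanSpace ℂ (Fin n × Fin m), ‖v‖ ≤ 1 → |inner ℝ g (rankOne v)| ≤ M) :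
    |inner ℝ g (coeffMap n m f + coeffMap n m (qpoly (2 * n) (2 * m) 1 1))| ≤
      ((n * m : ℕ) : ℝ) * M := by
  obtain ⟨⟨hfC, hf0⟩, N, b, -, hb⟩ := hf
  have hsum := coeffMap_of_map_eq_sum hb
  set u : Fin N → EuclideanSpace ℂ (Fin n × Fin m) :=
    fun r => WithLp.toLp 2 fun q => (starRingEnd ℂ) (b r q.1 q.2) with hu
  have htr : ∑ i, ∑ k, coeffMap n m f (i, i, k, k) = 0 := by
    have h := ofReal_bavg hσ₁ hσ₂ hfC
    rw [hf0, Complex.ofReal_zero, eq_comm, mul_eq_zero] at h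
    refine h.resolve_left ?_
    simp [hn, hm]
  have hnorm : ∑ r, ‖u r‖ ^ 2 = ((n * m : ℕ) : ℝ) := by
    have h1 : ∑ i, ∑ k, coeffMap n m (f + qpoly (2 * n) (2 * m) 1 1) (i, i, k, k) =
        ((n * m : ℕ) : ℂ) := by
      simp only [map_add, PiLp.add_apply, Finset.sum_add_distrib, htr, coeffMap_qpoly]
      simp
    have h2 : ∑ i, ∑ k, (∑ r, rankOne (u r)) (i, i, k, k) = ((∑ r, ‖u r‖ ^ 2 : ℝ) : ℂ) := by
      simp only [WithLp.ofLp_sum, Finset.sum_apply]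
      push_cast
      rw [Finset.sum_congr rfl fun i _ => Finset.sum_comm, Finset.sum_comm]
      refine Finset.sum_congr rfl fun r _ => ?_
      rw [sum_rankOne_diag]
      push_cast
      rfl
    rw [hsum, h2] at h1
    exact_mod_cast h1
  rw [← map_add, hsum, inner_sum, ← hnorm, Finset.sum_mul]
  exact (Finset.abs_sum_le_sum_abs _ _).trans
    (Finset.sum_le_sum fun r _ => abs_inner_rankOne_le hg (u r))

lemma add_qpoly_mem_PosCF {f : MvPolynomial (Fin (2 * n) ⊕ Fin (2 * m)) ℝ} (hf : f ∈ CF n m isR)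
    (hb : ∀ p : EuclideanSpace ℂ (Fin n) × EuclideanSpace ℂ (Fin m), ‖p‖ ≤ 1 →
      |inner ℝ (coeffMap n m f) (rankOne (tensor p))| ≤ 1) :
    f + qpoly (2 * n) (2 * m) 1 1 ∈ PosCF n m isR := by
  refine ⟨add_mem_CF hf (qpoly_mem_CF isR), fun x y => ?_⟩
  have h := abs_inner_rankOne_tensor_le hb (WithLp.toLp 2 (toComplex x))
    (WithLp.toLp 2 (toComplex y))
  rw [← beval_eq_inner hf, norm_toLp_toComplex_sq, norm_toLp_toComplex_sq, mul_one,
    ← beval_qpoly] at h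
  have h2 : beval (f + qpoly (2 * n) (2 * m) 1 1) x y =
      beval f x y + beval (qpoly (2 * n) (2 * m) 1 1) x y := map_add _ _ _
  rw [h2]
  linarith [neg_le_of_abs_le h]

theorem volume_preimage_SqCF_le (hn : 3 ≤ n) (hm : 3 ≤ m) (hσ₁ : IsSphereMeasure (2 * n) σ₁)
    (hσ₂ : IsSphereMeasure (2 * m) σ₂)
    (hψ : IsUnitaryParam (2 * n) (2 * m) D σ₁ σ₂ (MCF n m isR σ₁ σ₂) ψ) (hD : 44 ≤ D)
    (hND : ((n * m : ℕ) : ℝ) ^ 2 ≤ 2 * D) :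
    volume (⇑ψ ⁻¹' tildeCF n m isR σ₁ σ₂ (SqCF n m isR)) ≤
      ENNReal.ofReal ((12800 / √(min n m : ℕ)) ^ D) *
        volume (⇑ψ ⁻¹' tildeCF n m isR σ₁ σ₂ (PosCF n m isR)) := by
  have hM : ∀ c, ψ c ∈ MCF n m isR σ₁ σ₂ := fun c => hψ.range ▸ ⟨c, rfl⟩
  set A : (Fin D → ℝ) →ₗ[ℝ] Coeffs n m := coeffMap n m ∘ₗ ψ with hA
  set e := coeffMap n m (qpoly (2 * n) (2 * m) 1 1) with he
  have hinj : Function.Injective A := fun a b hab =>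
    hψ.inj (coeffMap_injOn isR (hM a).1 (hM b).1 hab)
  set S : Set (Fin D → ℝ) := {x | ∀ y M, (∀ v : EuclideanSpace ℂ (Fin n × Fin m), ‖v‖ ≤ 1 →
    |inner ℝ (A y) (rankOne v)| ≤ M) → |inner ℝ (A y) (A x + e)| ≤ ((n * m : ℕ) : ℝ) * M} with hS
  have hAc : Continuous A := A.continuous_of_finiteDimensional
  have hSc : IsClosed S := by
    simp only [hS, Set.ofPred_forall]
    refine isClosed_iInter fun y => isClosed_iInter fun M => isClosed_iInter fun _ => ?_
    exact isClosed_le (by fun_prop) continuous_const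
  have hdom : IsDominated A rankOne e ((n * m : ℕ) : ℝ) S := fun y M hy x hx => hx y M hy
  have hsub : ⇑ψ ⁻¹' tildeCF n m isR σ₁ σ₂ (SqCF n m isR) ⊆ S := fun x hx y M hy =>
    abs_inner_coeffMap_le (by omega) (by omega) hσ₁ hσ₂ hx hy
  have hsup : boundedSet A (fun p : EuclideanSpace ℂ (Fin n) × EuclideanSpace ℂ (Fin m) =>
      rankOne (tensor p)) 1 ⊆ ⇑ψ ⁻¹' tildeCF n m isR σ₁ σ₂ (PosCF n m isR) := fun x hx =>
    ⟨hM x, add_qpoly_mem_PosCF (hM x).1 hx⟩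
  have hnm : 9 ≤ n * m := Nat.mul_le_mul hn hm
  have hV : Module.finrank ℝ (EuclideanSpace ℂ (Fin n × Fin m)) = 2 * (n * m) := by
    simp [finrank_real_euclideanSpace]
  have hW : Module.finrank ℝ (EuclideanSpace ℂ (Fin n) × EuclideanSpace ℂ (Fin m)) =
      2 * n + 2 * m := by
    simp [Module.finrank_prod, finrank_real_euclideanSpace]
  have hmin : (2 * n + 2 * m) * min n m ≤ 4 * (n * m) := by
    have h1 := Nat.mul_le_mul_left n (min_le_right n m)
    have h2 := Nat.mul_le_mul_left m (min_le_left n m)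
    rw [mul_comm m n] at h2
    calc _ = 2 * (n * min n m) + 2 * (m * min n m) := by ring
      _ ≤ _ := by omega
  have hmain := hdom.volume_le (by omega) (fun v hv => by
      rw [norm_rankOne]; exact pow_le_one₀ (norm_nonneg _) hv) hinj isTameFamily_rankOne
    (by rw [hV]; omega) hV hSc.measurableSet isTameFamily_rankOne_tensor
    (by rw [hW]; omega) (μ := ((min n m : ℕ) : ℝ)) (by
      have : 0 < min n m := by omega
      exact_mod_cast this) (by rw [hW]; exact_mod_cast hmin) hD hND
  exact (measure_mono hsub).trans (hmain.trans (by gcongr))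

lemma DCF_bounds (hn : 3 ≤ n) (hm : 3 ≤ m) :
    44 ≤ DCF n m isR ∧ (n * m) ^ 2 ≤ 2 * DCF n m isR := by
  have hnm : 9 ≤ n * m := Nat.mul_le_mul hn hm
  rw [DCF, ← mul_pow]
  generalize n * m = N at hnm
  have h2 : 9 * N ≤ N ^ 2 := by nlinarith
  cases isR
  · simp only [Bool.false_eq_true, if_false]
    omega
  · have h3 : N * (N + 1) = N ^ 2 + N := by ring
    have h4 : (N * (N + 1)) % 2 = 0 := Nat.even_iff.1 (Nat.even_mul_succ_self N)
    simp only [if_true]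
    omega

lemma const_lt {d μ : ℝ} (hd : d ≤ 2) (hμ : 1 ≤ μ) :
    12800 / √μ < √((2 : ℝ) ^ ((28 : ℝ) - d)) * (3 : ℝ) ^ (-(5 : ℝ) / 2) * (5 : ℝ) ^ 2 *
      (10 : ℝ) ^ ((2 : ℝ) / 9) / √(μ - 1 / 2) := by
  have h1 : (8192 : ℝ) ≤ √((2 : ℝ) ^ ((28 : ℝ) - d)) := by
    refine Real.le_sqrt_of_sq_le ?_
    calc (8192 : ℝ) ^ 2 = (2 : ℝ) ^ (26 : ℝ) := by norm_num
      _ ≤ _ := Real.rpow_le_rpow_of_exponent_le (by norm_num) (by linarith)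
  have h2 : (1 / 16 : ℝ) ≤ (3 : ℝ) ^ (-(5 : ℝ) / 2) := by
    rw [neg_div, Real.rpow_neg (by norm_num), one_div]
    refine inv_anti₀ (by positivity) ?_
    rw [show (5 : ℝ) / 2 = 5 * (1 / 2) by norm_num, Real.rpow_mul (by norm_num),
      ← Real.sqrt_eq_rpow]
    exact (Real.sqrt_le_left (by norm_num)).2 (by norm_num)
  have h3 : (1 : ℝ) ≤ (10 : ℝ) ^ ((2 : ℝ) / 9) :=
    Real.one_le_rpow (by norm_num) (by norm_num)
  have h4 : (12800 : ℝ) ≤ √((2 : ℝ) ^ ((28 : ℝ) - d)) * (3 : ℝ) ^ (-(5 : ℝ) / 2) * (5 : ℝ) ^ 2 *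
      (10 : ℝ) ^ ((2 : ℝ) / 9) := by
    calc (12800 : ℝ) = 8192 * (1 / 16) * 5 ^ 2 * 1 := by norm_num
      _ ≤ _ := by gcongr
  have h5 : 0 < √(μ - 1 / 2) := Real.sqrt_pos.2 (by linarith)
  calc 12800 / √μ < 12800 / √(μ - 1 / 2) :=
        div_lt_div_of_pos_left (by norm_num) h5 (Real.sqrt_lt_sqrt (by linarith) (by linarith))
    _ ≤ _ := by gcongr

lemma tildeCF_mono {K L : Set (MvPolynomial (Fin (2 * n) ⊕ Fin (2 * m)) ℝ)} (h : K ⊆ L) :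
    tildeCF n m isR σ₁ σ₂ K ⊆ tildeCF n m isR σ₁ σ₂ L := fun _ hf => ⟨hf.1, h hf.2⟩

lemma PosCF_subset_PRSet : PosCF n m true ⊆ PRSet n m := fun _ hf => ⟨hf.1, fun _ _ => hf.2 _ _⟩

end Cones

end PositiveMaps

open BiformPaper in
/-- **Theorem (probability that a positive map `Φ : M_n(𝔽) → M_m(𝔽)` is completely
positive).**  For `𝔽 ∈ {ℝ, ℂ}` (`isR = true` for `𝔽 = ℝ`, `isR = false` for `𝔽 = ℂ`)
and integers `n, m ≥ 3`, the probability `p^𝔽_{n,m}` (equal to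
`Vol S̃q_{𝒞_ℝ} / Vol 𝒫̃_{𝒞_ℝ}` for `𝔽 = ℝ`, and to `Vol S̃q_{𝒞_ℂ} / Vol P̃os_{𝒞_ℂ}` for
`𝔽 = ℂ`) satisfies
`p^𝔽_{n,m} ≤ Vol S̃q_{𝒞_𝔽} / Vol P̃os_{𝒞_𝔽}
  < ((2^{28−dim_ℝ𝔽})^{1/2}·3^{−5/2}·5²·10^{2/9}/√(min(n,m)−1/2))^{D_{𝓜_{𝒞_𝔽}}}`. -/
theorem statement8 (isR : Bool) (n m : ℕ) (hn : 3 ≤ n) (hm : 3 ≤ m)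
    (D : ℕ) (hD : D = DCF n m isR)
    (σ₁ : Measure (Fin (2 * n) → ℝ)) (σ₂ : Measure (Fin (2 * m) → ℝ))
    (hσ₁ : IsSphereMeasure (2 * n) σ₁) (hσ₂ : IsSphereMeasure (2 * m) σ₂)
    (ψ : (Fin D → ℝ) →ₗ[ℝ] MvPolynomial (Fin (2 * n) ⊕ Fin (2 * m)) ℝ)
    (hψ : IsUnitaryParam (2 * n) (2 * m) D σ₁ σ₂ (MCF n m isR σ₁ σ₂) ψ) :
    (if isR then
        volume (⇑ψ ⁻¹' tildeCF n m true σ₁ σ₂ (SqCF n m true)) /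
          volume (⇑ψ ⁻¹' tildeCF n m true σ₁ σ₂ (PRSet n m))
      else
        volume (⇑ψ ⁻¹' tildeCF n m false σ₁ σ₂ (SqCF n m false)) /
          volume (⇑ψ ⁻¹' tildeCF n m false σ₁ σ₂ (PosCF n m false))) ≤
      volume (⇑ψ ⁻¹' tildeCF n m isR σ₁ σ₂ (SqCF n m isR)) /
        volume (⇑ψ ⁻¹' tildeCF n m isR σ₁ σ₂ (PosCF n m isR)) ∧
    volume (⇑ψ ⁻¹' tildeCF n m isR σ₁ σ₂ (SqCF n m isR)) /
        volume (⇑ψ ⁻¹' tildeCF n m isR σ₁ σ₂ (PosCF n m isR)) <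
      ENNReal.ofReal (Real.sqrt ((2 : ℝ) ^ ((28 : ℝ) - (if isR then (1 : ℝ) else 2))) *
          (3 : ℝ) ^ (-(5 : ℝ) / 2) * (5 : ℝ) ^ 2 * (10 : ℝ) ^ ((2 : ℝ) / 9) /
            Real.sqrt (((min n m : ℕ) : ℝ) - 1 / 2)) ^ D := by
  refine ⟨?_, ?_⟩
  · cases isR
    · exact le_rfl
    · exact ENNReal.div_le_div_left (measure_mono (Set.preimage_mono
        (PositiveMaps.tildeCF_mono PositiveMaps.PosCF_subset_PRSet))) _
  · obtain ⟨h44, hsq⟩ := PositiveMaps.DCF_bounds (isR := isR) hn hm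
    rw [← hD] at h44 hsq
    have hvol := PositiveMaps.volume_preimage_SqCF_le hn hm hσ₁ hσ₂ hψ h44 (by exact_mod_cast hsq)
    have hmin : (1 : ℝ) ≤ ((min n m : ℕ) : ℝ) := by
      have : 1 ≤ min n m := by omega
      exact_mod_cast this
    have hlt := PositiveMaps.const_lt (d := if isR then (1 : ℝ) else 2)
      (by split_ifs <;> norm_num) hmin
    have hpos : 0 ≤ 12800 / √((min n m : ℕ) : ℝ) := by positivity
    refine (ENNReal.div_le_of_le_mul hvol).trans_lt ?_
    rw [ENNReal.ofReal_pow hpos]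
    exact ENNReal.pow_lt_pow_left (by omega)
      ((ENNReal.ofReal_lt_ofReal_iff (hpos.trans_lt hlt)).2 hlt)
end
end

section
/- For every biform g ∈ ℝ[x,y]_{k₁,k₂} of bidegree (k₁,k₂): ( ∫_T g² dσ )^{1/2} ≤ 4^{k₁+k₂} · ∫_T |g| dσ, i.e., ‖g‖₂ ≤ 4^{k₁+k₂}·‖g‖₁. -/
open MeasureTheory MvPolynomial

noncomputable section

open Finset in
theorem sum_choose_mul_choose_add_le (s r : ℕ) :
    ∑ k ∈ range (s + 1), s.choose k * (s + 2 * r).choose (k + r) ≤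
      (2 * (s + r)).choose (s + r) := by
  have h := Nat.add_choose_eq s (s + 2 * r) (s + r)
  rw [show s + (s + 2 * r) = 2 * (s + r) by ring, Finset.Nat.sum_antidiagonal_eq_sum_range_succ
    (fun i j => s.choose i * (s + 2 * r).choose j)] at h
  rw [h]
  calc _ = ∑ k ∈ range (s + 1), s.choose k * (s + 2 * r).choose (s + r - k) := by
        refine sum_congr rfl fun k hk => ?_
        have hk : k ≤ s := by simpa [Nat.lt_succ_iff] using hk
        rw [← Nat.choose_symm (n := s + 2 * r) (k := k + r) (by omega)]
        congr 2; omega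
    _ ≤ _ := sum_le_sum_of_subset (range_mono (by omega))

open Finset in
theorem sum_choose_mul_choose_le (a b N : ℕ) :
    ∑ r ∈ range N, a.choose r * b.choose r ≤ (a + b).choose a := by
  have h := Nat.add_choose_eq a b a
  rw [← Finset.Nat.sum_antidiagonal_swap] at h
  simp only [Prod.fst_swap, Prod.snd_swap] at h
  rw [Finset.Nat.sum_antidiagonal_eq_sum_range_succ
    (fun i j => a.choose j * b.choose i)] at h
  rw [h]
  calc _ ≤ ∑ r ∈ range (N + (a + 1)), a.choose r * b.choose r :=
        sum_le_sum_of_subset (range_mono (by omega))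
    _ = ∑ r ∈ range (a + 1), a.choose r * b.choose r := by
        symm
        refine sum_subset (range_mono (by omega)) fun r _ hr => ?_
        rw [Nat.choose_eq_zero_of_lt (by simpa using hr), zero_mul]
    _ = _ := by
        refine sum_congr rfl fun r hr => ?_
        rw [Nat.choose_symm (by simpa [Nat.lt_succ_iff] using hr)]

theorem two_mul_choose_two_mul_le {t : ℕ} (ht : 0 < t) : 2 * (2 * t).choose t ≤ 4 ^ t := by
  obtain ⟨u, rfl⟩ : ∃ u, t = u + 1 := ⟨t - 1, by omega⟩
  have h1 : (2 * (u + 1)).choose (u + 1) = (2 * u + 1).choose u + (2 * u + 1).choose (u + 1) := by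
    rw [show 2 * (u + 1) = (2 * u + 1) + 1 by ring, Nat.choose_succ_succ]
  have h2 : (2 * u + 1).choose (u + 1) = (2 * u + 1).choose u :=
    Nat.choose_symm_of_eq_add (by omega)
  have := Nat.choose_middle_le_pow u
  rw [h1, h2, pow_succ]; omega

open Finset in
/-- The weights produced by the Cauchy-Schwarz inequality sum to less than one. -/
theorem sum_sum_choose_weight_le {s : ℕ} (hs : 0 < s) (N : ℕ) :
    ∑ k ∈ range (s + 1), ∑ r ∈ range N,
      (s.choose k * (s + 2 * r).choose (k + r) : ℝ) / 4 ^ (s + 2 * r) ≤ 2 / 3 := by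
  rw [sum_comm]
  calc _ ≤ ∑ r ∈ range N, (1 / 2 : ℝ) * (1 / 4) ^ r := by
        refine sum_le_sum fun r _ => ?_
        rw [← sum_div, div_le_iff₀ (by positivity)]
        have h1 : (∑ k ∈ range (s + 1), (s.choose k * (s + 2 * r).choose (k + r) : ℝ)) ≤
            (2 * (s + r)).choose (s + r) := by
          exact_mod_cast sum_choose_mul_choose_add_le s r
        have h2 : (2 : ℝ) * (2 * (s + r)).choose (s + r) ≤ 4 ^ (s + r) := by
          exact_mod_cast two_mul_choose_two_mul_le (show 0 < s + r by omega)
        have h3 : (1 / 4 : ℝ) ^ r * 4 ^ (s + 2 * r) = 4 ^ (s + r) := by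
          rw [show s + 2 * r = r + (s + r) by ring, pow_add 4 r, ← mul_assoc, ← mul_pow]; norm_num
        rw [mul_assoc, h3]; linarith
    _ = (1 / 2 : ℝ) * ∑ r ∈ range N, (1 / 4 : ℝ) ^ r := by rw [mul_sum]
    _ ≤ _ := by
        rw [geom_sum_eq (by norm_num)]
        have : (0 : ℝ) ≤ (1 / 4) ^ N := by positivity
        linarith [show ((1 / 4 : ℝ) ^ N - 1) / (1 / 4 - 1) = (1 - (1/4)^N) * (4/3) by ring]

theorem choose_sq_mul_factorial (i j r : ℕ) :
    ((i + j).choose i : ℝ) ^ 2 * (i + r).factorial * (j + r).factorial =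
      (i + j).choose i * (i + r).choose r * (j + r).choose r *
        (r.factorial ^ 2 * (i + j).factorial) := by
  have key (a b : ℕ) : ((a + b).choose b : ℝ) * a.factorial * b.factorial = (a + b).factorial := by
    exact_mod_cast Nat.add_choose_mul_factorial_mul_factorial a b
  have h1 : ((i + j).choose i : ℝ) * i.factorial * j.factorial = (i + j).factorial := by
    rw [Nat.choose_symm_add, key]
  rw [← h1, ← key i r, ← key j r]; ring

open Finset in
theorem sum_sum_shift_le (F : ℕ → ℕ → ℕ → ℝ) (hF : ∀ a b r, 0 ≤ F a b r) (M N : ℕ) :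
    ∑ s ∈ range M, ∑ k ∈ range (s + 1), ∑ r ∈ range N, F (k + r) (s - k + r) r ≤
      ∑ a ∈ range (M + N), ∑ b ∈ range (M + N), ∑ r ∈ range N, F a b r := by
  have e1 : ∀ (r : ℕ), r ∈ range N → ∀ φ : ℕ → ℝ, (∀ a, 0 ≤ φ a) →
      ∑ i ∈ range M, φ (i + r) ≤ ∑ a ∈ range (M + N), φ a := by
    intro r hr φ hφ
    rw [← sum_image (f := φ) (g := fun i => i + r) (by intro x _ y _ h; simpa using h)]
    refine sum_le_sum_of_subset_of_nonneg ?_ fun _ _ _ => hφ _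
    intro x; simp only [mem_image, mem_range] at *; omega
  have e2 : ∀ G : ℕ → ℕ → ℝ, (∀ i j, 0 ≤ G i j) →
      ∑ s ∈ range M, ∑ k ∈ range (s + 1), G k (s - k) ≤ ∑ i ∈ range M, ∑ j ∈ range M, G i j := by
    intro G hG
    rw [sum_sigma', ← sum_product']
    rw [← sum_image (f := fun p : ℕ × ℕ => G p.1 p.2)
      (g := fun x : (Σ _ : ℕ, ℕ) => (x.2, x.1 - x.2))]
    · refine sum_le_sum_of_subset_of_nonneg ?_ fun _ _ _ => hG _ _
      rintro ⟨x, y⟩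
      simp only [mem_image, mem_sigma, mem_range, mem_product, Prod.mk.injEq, Sigma.exists]
      rintro ⟨a, b, h⟩; omega
    · rintro ⟨a, b⟩ h ⟨c, d⟩ h'
      simp only [coe_sigma, Set.mem_sigma_iff, coe_range, Set.mem_Iio, Prod.mk.injEq] at h h' ⊢
      rintro ⟨rfl, h3⟩
      have : a = c := by omega
      subst this; rfl
  calc _ ≤ ∑ i ∈ range M, ∑ j ∈ range M, ∑ r ∈ range N, F (i + r) (j + r) r :=
        e2 (fun i j => ∑ r ∈ range N, F (i + r) (j + r) r) fun i j => sum_nonneg fun r _ => hF _ _ _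
    _ = ∑ r ∈ range N, ∑ i ∈ range M, ∑ j ∈ range M, F (i + r) (j + r) r := by
        rw [sum_comm (s := range N)]
        exact sum_congr rfl fun i _ => sum_comm
    _ ≤ ∑ r ∈ range N, ∑ a ∈ range (M + N), ∑ b ∈ range (M + N), F a b r := by
        refine sum_le_sum fun r hr => ?_
        refine (sum_le_sum fun i _ => e1 r hr (fun b => F (i + r) b r) fun _ => hF _ _ _).trans ?_
        exact e1 r hr (fun a => ∑ b ∈ range (M + N), F a b r) fun _ => sum_nonneg fun _ _ => hF _ _ _
    _ = _ := by
        rw [sum_comm]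
        exact sum_congr rfl fun i _ => sum_comm

open Finset in
theorem sum_sq_contraction_le (m : ℕ → ℝ) (M N : ℕ) :
    ∑ s ∈ range (M + 1), (1 / s.factorial : ℝ) * (∑ k ∈ range (s + 1), ∑ r ∈ range N,
      (s.choose k / r.factorial : ℝ) * (m (k + r) * m (s - k + r))) ^ 2 ≤
      (∑ a ∈ range (M + 1 + N), (4 ^ a / a.factorial : ℝ) * m a ^ 2) ^ 2 := by
  set S := ∑ a ∈ range (M + 1 + N), (4 ^ a / a.factorial : ℝ) * m a ^ 2 with hS
  let Z : ℕ → ℕ → ℝ := fun a b =>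
    if a = 0 ∧ b = 0 then 0
    else ((4 ^ a / a.factorial : ℝ) * m a ^ 2) * ((4 ^ b / b.factorial : ℝ) * m b ^ 2)
  let F : ℕ → ℕ → ℕ → ℝ := fun a b r => (a.choose r * b.choose r : ℝ) / (a + b).choose a * Z a b
  have hZ (a b) : 0 ≤ Z a b := by
    simp only [Z]; split_ifs <;> positivity
  have hF (a b r) : 0 ≤ F a b r := mul_nonneg (by positivity) (hZ a b)
  have hSA : m 0 ^ 2 ≤ S := by
    have := single_le_sum (f := fun a => (4 ^ a / a.factorial : ℝ) * m a ^ 2)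
      (s := range (M + 1 + N)) (fun a _ => by positivity) (mem_range.2 (show 0 < M + 1 + N by omega))
    simpa using this
  have step (s : ℕ) (hs : 0 < s) : (1 / s.factorial : ℝ) *
      (∑ k ∈ range (s + 1), ∑ r ∈ range N,
        (s.choose k / r.factorial : ℝ) * (m (k + r) * m (s - k + r))) ^ 2 ≤
      2 / 3 * ∑ k ∈ range (s + 1), ∑ r ∈ range N, F (k + r) (s - k + r) r := by
    have hf : (0 : ℝ) < s.factorial := by positivity
    rw [one_div, inv_mul_le_iff₀ hf]
    have hcs := sum_sq_le_sum_mul_sum_of_sq_le_mul (range (s + 1) ×ˢ range N)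
      (r := fun x => (s.choose x.1 / x.2.factorial : ℝ) * (m (x.1 + x.2) * m (s - x.1 + x.2)))
      (f := fun x => s.factorial *
        ((s.choose x.1 * (s + 2 * x.2).choose (x.1 + x.2) : ℝ) / 4 ^ (s + 2 * x.2)))
      (g := fun x => F (x.1 + x.2) (s - x.1 + x.2) x.2)
      (fun x _ => by positivity) (fun x _ => hF _ _ _) ?_
    · rw [sum_product, sum_product, sum_product] at hcs
      refine hcs.trans ?_
      have h1 := sum_sum_choose_weight_le hs N
      simp_rw [← mul_sum]
      rw [mul_assoc]
      refine mul_le_mul_of_nonneg_left ?_ hf.le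
      exact mul_le_mul_of_nonneg_right h1 (sum_nonneg fun _ _ => sum_nonneg fun _ _ => hF _ _ _)
    · rintro ⟨k, r⟩ hx
      apply le_of_eq
      simp only [mem_product, mem_range] at hx
      obtain ⟨j, rfl⟩ : ∃ j, s = k + j := ⟨s - k, by omega⟩
      have hne : ¬ (k + r = 0 ∧ j + r = 0) := by omega
      have hc := choose_sq_mul_factorial k j r
      have hpos : (0 : ℝ) < (k + j + 2 * r).choose (k + r) := by
        exact_mod_cast Nat.choose_pos (by omega)
      simp only [F, Z, Nat.add_sub_cancel_left, if_neg hne,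
        show k + r + (j + r) = k + j + 2 * r by ring]
      rw [show k + j + 2 * r = (k + r) + (j + r) by ring] at *
      rw [pow_add 4 (k + r)]
      field_simp
      linear_combination (m (k + r) ^ 2 * m (j + r) ^ 2) * hc
  have h0 : (∑ r ∈ range N, (1 / r.factorial : ℝ) * (m r * m r)) ≤ m 0 ^ 2 + (S - m 0 ^ 2) / 4 := by
    calc _ ≤ ∑ r ∈ range (M + 1 + N), (1 / r.factorial : ℝ) * (m r * m r) :=
          sum_le_sum_of_subset_of_nonneg (range_mono (by omega)) fun r _ _ =>
            mul_nonneg (by positivity) (mul_self_nonneg _)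
      _ ≤ _ := by
        rw [hS, show M + 1 + N = M + N + 1 by ring, sum_range_succ', sum_range_succ']
        have : ∑ k ∈ range (M + N), (1 / (k + 1).factorial : ℝ) * (m (k + 1) * m (k + 1)) ≤
            (∑ k ∈ range (M + N), (4 ^ (k + 1) / (k + 1).factorial : ℝ) * m (k + 1) ^ 2) / 4 := by
          rw [sum_div]
          refine sum_le_sum fun k _ => ?_
          have h4 : (1 : ℝ) ≤ 4 ^ k := one_le_pow₀ (by norm_num)
          have h5 : (0 : ℝ) ≤ (1 / (k + 1).factorial : ℝ) * (m (k + 1) * m (k + 1)) :=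
            mul_nonneg (by positivity) (mul_self_nonneg _)
          calc _ ≤ 4 ^ k * ((1 / (k + 1).factorial : ℝ) * (m (k + 1) * m (k + 1))) :=
                le_mul_of_one_le_left h5 h4
            _ = _ := by rw [pow_succ]; ring
        simp only [Nat.factorial_zero, Nat.cast_one, pow_zero]
        linarith
  have h0' : (0 : ℝ) ≤ ∑ r ∈ range N, (1 / r.factorial : ℝ) * (m r * m r) :=
    sum_nonneg fun r _ => mul_nonneg (by positivity) (mul_self_nonneg _)
  have hrest : ∑ s ∈ range M, ∑ k ∈ range (s + 1 + 1), ∑ r ∈ range N, F (k + r) (s + 1 - k + r) r ≤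
      S ^ 2 - (m 0 ^ 2) ^ 2 := by
    have h1 := sum_sum_shift_le F hF (M + 1) N
    rw [sum_range_succ'] at h1
    have h2 : ∀ a b, ∑ r ∈ range N, F a b r ≤ Z a b := by
      intro a b
      simp only [F]
      rw [← sum_mul, ← sum_div]
      refine mul_le_of_le_one_left (hZ a b) (div_le_one_of_le₀ ?_ (by positivity))
      exact_mod_cast sum_choose_mul_choose_le a b N
    have h3 : ∑ a ∈ range (M + 1 + N), ∑ b ∈ range (M + 1 + N), Z a b = S ^ 2 - (m 0 ^ 2) ^ 2 := by
      have e : ∀ a b, Z a b = ((4 ^ a / a.factorial : ℝ) * m a ^ 2) *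
          ((4 ^ b / b.factorial : ℝ) * m b ^ 2) -
          if a = 0 then (if b = 0 then (m 0 ^ 2) ^ 2 else 0) else 0 := by
        intro a b
        by_cases ha : a = 0 <;> by_cases hb : b = 0 <;> simp [Z, ha, hb]
        ring
      simp_rw [e, sum_sub_distrib]
      rw [hS, sq (∑ a ∈ _, _), sum_mul_sum]
      simp
    have h4 : 0 ≤ ∑ k ∈ range (0 + 1), ∑ r ∈ range N, F (k + r) (0 - k + r) r :=
      sum_nonneg fun _ _ => sum_nonneg fun _ _ => hF _ _ _
    rw [← h3]
    refine le_trans ?_ (sum_le_sum fun a _ => sum_le_sum fun b _ => h2 a b)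
    linarith
  rw [sum_range_succ']
  have h5 : ∑ s ∈ range M, (1 / (s + 1).factorial : ℝ) *
      (∑ k ∈ range (s + 1 + 1), ∑ r ∈ range N,
        ((s + 1).choose k / r.factorial : ℝ) * (m (k + r) * m (s + 1 - k + r))) ^ 2 ≤
      2 / 3 * (S ^ 2 - (m 0 ^ 2) ^ 2) := by
    refine (sum_le_sum fun s _ => step (s + 1) (by omega)).trans ?_
    rw [← mul_sum]
    linarith
  have h6 : (∑ r ∈ range N, (1 / r.factorial : ℝ) * (m r * m r)) ^ 2 ≤
      (m 0 ^ 2 + (S - m 0 ^ 2) / 4) ^ 2 := pow_le_pow_left₀ h0' h0 2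
  simp only [Nat.factorial_zero, zero_add, range_one, sum_singleton, Nat.choose_self, Nat.cast_one,
    Nat.sub_self, one_mul, div_one] at h5 h6 ⊢
  nlinarith [mul_nonneg (sub_nonneg.2 hSA) (sub_nonneg.2 hSA),
    mul_nonneg (sub_nonneg.2 hSA) (sq_nonneg (m 0))]

theorem integrable_eval_gaussianReal (p : Polynomial ℝ) :
    Integrable (fun y => p.eval y) (ProbabilityTheory.gaussianReal 0 1) := by
  induction p using Polynomial.induction_on' with
  | add p q hp hq => simpa using! hp.add hq
  | monomial k a =>
    simp only [Polynomial.eval_monomial]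
    refine Integrable.const_mul ?_ a
    have h := ProbabilityTheory.memLp_id_gaussianReal' (μ := 0) (v := 1) k (by simp)
    refine (h.integrable_norm_pow' (p := k)).mono (by fun_prop) ?_
    simp

theorem integral_X_mul_eval_gaussianReal (p : Polynomial ℝ) :
    ∫ y, y * p.eval y ∂(ProbabilityTheory.gaussianReal 0 1) =
      ∫ y, p.derivative.eval y ∂(ProbabilityTheory.gaussianReal 0 1) := by
  have h_int (q : Polynomial ℝ) :
      Integrable (fun y => q.eval y * ProbabilityTheory.gaussianPDFReal 0 1 y) := by
    have h := integrable_eval_gaussianReal q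
    rw [ProbabilityTheory.gaussianReal_of_var_ne_zero 0 one_ne_zero,
      integrable_withDensity_iff (by fun_prop) (by simp [ProbabilityTheory.gaussianPDF])] at h
    simpa [ProbabilityTheory.toReal_gaussianPDF] using h
  have hd (y : ℝ) : HasDerivAt (fun y => ProbabilityTheory.gaussianPDFReal 0 1 y)
      (-(y * ProbabilityTheory.gaussianPDFReal 0 1 y)) y := by
    have h1 : HasDerivAt (fun y : ℝ => -(y - 0) ^ 2 / (2 * ((1 : NNReal) : ℝ))) (-y) y := by
      have := (((hasDerivAt_id y).sub_const 0).pow 2).neg.div_const (2 * ((1 : NNReal) : ℝ))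
      convert! this using 1
      simp; ring
    have h2 := h1.exp.const_mul (√(2 * Real.pi * ((1 : NNReal) : ℝ)))⁻¹
    rw [ProbabilityTheory.gaussianPDFReal_def]
    convert! h2 using 1
    ring
  rw [ProbabilityTheory.integral_gaussianReal_eq_integral_smul one_ne_zero,
    ProbabilityTheory.integral_gaussianReal_eq_integral_smul one_ne_zero]
  have h := integral_mul_deriv_eq_deriv_mul_of_integrable
    (u := fun y => p.eval y) (u' := fun y => p.derivative.eval y)
    (v := fun y => ProbabilityTheory.gaussianPDFReal 0 1 y)
    (v' := fun y => -(y * ProbabilityTheory.gaussianPDFReal 0 1 y))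
    (fun y _ => p.hasDerivAt y) (fun y _ => hd y) ?_ (h_int _) (h_int _)
  · simp only [mul_neg, integral_neg, neg_inj] at h
    convert h using 1 <;> refine integral_congr_ae (.of_forall fun y => ?_) <;>
      simp only [smul_eq_mul] <;> ring
  · have := (h_int (Polynomial.X * p)).neg
    refine this.congr (.of_forall fun y => ?_)
    simp; ring

/-- Integration of real polynomials against the standard Gaussian measure. -/
def gaussianFunctional : Polynomial ℝ →ₗ[ℝ] ℝ where
  toFun p := ∫ y, p.eval y ∂(ProbabilityTheory.gaussianReal 0 1)
  map_add' p q := by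
    simpa using integral_add (integrable_eval_gaussianReal p) (integrable_eval_gaussianReal q)
  map_smul' c p := by simp [integral_const_mul]

theorem gaussianFunctional_apply (p : Polynomial ℝ) :
    gaussianFunctional p = ∫ y, p.eval y ∂(ProbabilityTheory.gaussianReal 0 1) := rfl

theorem gaussianFunctional_X_mul (p : Polynomial ℝ) :
    gaussianFunctional (Polynomial.X * p) = gaussianFunctional p.derivative := by
  simpa [gaussianFunctional_apply] using integral_X_mul_eval_gaussianReal p

theorem gaussianFunctional_C (a : ℝ) : gaussianFunctional (Polynomial.C a) = a := by
  simp [gaussianFunctional_apply]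

open Polynomial Finset in
theorem iterate_derivative_X_mul_eq (p : ℝ[X]) (r : ℕ) :
    derivative^[r] (Polynomial.X * p) = Polynomial.X * derivative^[r] p + (r : ℝ) • derivative^[r - 1] p := by
  induction r with
  | zero => simp
  | succ r ih =>
    rw [Function.iterate_succ_apply', ih, Function.iterate_succ_apply' derivative r p]
    rcases r with _ | r
    · simp [add_comm]
    · simp only [derivative_add, derivative_mul, derivative_X, derivative_smul, Nat.add_sub_cancel]
      rw [← Function.iterate_succ_apply' derivative r p, Nat.succ_eq_add_one]
      push_cast
      simp only [add_smul, one_smul]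
      ring

open Polynomial Finset in
theorem gaussianFunctional_mul (N : ℕ) (p q : ℝ[X]) (hp : p.degree < N) :
    gaussianFunctional (p * q) = ∑ r ∈ range N, (1 / r.factorial : ℝ) *
      (gaussianFunctional (derivative^[r] p) * gaussianFunctional (derivative^[r] q)) := by
  induction N generalizing p q with
  | zero =>
    have : p = 0 := by simpa using hp
    simp [this]
  | succ N ih =>
    set u := p.divX with hu
    have hpu : p = Polynomial.X * u + Polynomial.C (p.coeff 0) := by rw [mul_comm, hu, divX_mul_X_add]
    have hudeg : u.degree < N := by
      rw [degree_lt_iff_coeff_zero] at hp ⊢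
      intro k hk
      rw [hu, coeff_divX]
      exact hp _ (by omega)
    have hC : gaussianFunctional (Polynomial.C (p.coeff 0) * q) = ∑ r ∈ range (N + 1), (1 / r.factorial : ℝ) *
        (gaussianFunctional (derivative^[r] (Polynomial.C (p.coeff 0))) *
          gaussianFunctional (derivative^[r] q)) := by
      rw [sum_eq_single_of_mem 0 (by simp)]
      · simp [gaussianFunctional_C, ← Polynomial.smul_eq_C_mul]
      · intro r _ hr
        rw [iterate_derivative_C (Nat.pos_of_ne_zero hr)]; simp
    have hX : gaussianFunctional (Polynomial.X * u * q) = ∑ r ∈ range (N + 1), (1 / r.factorial : ℝ) *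
        (gaussianFunctional (derivative^[r] (Polynomial.X * u)) *
          gaussianFunctional (derivative^[r] q)) := by
      rw [mul_assoc, gaussianFunctional_X_mul, derivative_mul, map_add,
        ih _ _ ((degree_derivative_le).trans_lt hudeg), ih _ _ hudeg]
      simp_rw [iterate_derivative_X_mul_eq, map_add, gaussianFunctional_X_mul, map_smul,
        add_mul, mul_add, sum_add_distrib, ← Function.iterate_succ_apply',
        ← Function.iterate_succ_apply]
      congr 1
      · rw [sum_range_succ]
        rw [iterate_derivative_eq_zero_of_degree_lt (k := N + 1) (P := u)
          (hudeg.trans (by exact_mod_cast Nat.lt_succ_self N))]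
        simp
      · rw [sum_range_succ']
        simp only [Nat.cast_zero, zero_smul, zero_mul, mul_zero, add_zero, Nat.add_sub_cancel]
        refine sum_congr rfl fun r _ => ?_
        rw [Nat.factorial_succ]
        push_cast
        rw [smul_eq_mul]
        field_simp
    conv_lhs => rw [hpu, add_mul, map_add, hC, hX, ← sum_add_distrib]
    conv_rhs => rw [hpu]
    refine sum_congr rfl fun r _ => ?_
    rw [iterate_map_add derivative, map_add]; ring

open Polynomial Finset in
/-- One-dimensional Gaussian hypercontractivity. -/
theorem gaussianFunctional_pow_four_le (q : ℝ[X]) (N : ℕ) (hq : q.natDegree < N) :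
    gaussianFunctional (q ^ 4) ≤ (∑ a ∈ range (2 * N + 1 + N), (4 ^ a / a.factorial : ℝ) *
      gaussianFunctional (derivative^[a] q) ^ 2) ^ 2 := by
  have h1 : (q * q).degree < ((2 * N + 1 : ℕ) : WithBot ℕ) := by
    refine degree_le_natDegree.trans_lt ?_
    have := natDegree_mul_le (p := q) (q := q)
    exact_mod_cast (show (q * q).natDegree < 2 * N + 1 by omega)
  refine le_of_eq_of_le ?_ (sum_sq_contraction_le (fun a => gaussianFunctional (derivative^[a] q)) (2 * N) N)
  rw [show q ^ 4 = (q * q) * (q * q) by ring, gaussianFunctional_mul _ _ _ h1]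
  refine sum_congr rfl fun s _ => ?_
  rw [← sq]
  congr 2
  rw [iterate_derivative_mul, map_sum]
  refine sum_congr rfl fun k hk => ?_
  have h2 : (derivative^[s - k] q).degree < (N : WithBot ℕ) := by
    refine degree_le_natDegree.trans_lt ?_
    have := natDegree_iterate_derivative q (s - k)
    exact_mod_cast (show (derivative^[s - k] q).natDegree < N by omega)
  rw [map_nsmul, gaussianFunctional_mul _ _ _ h2, nsmul_eq_mul, mul_sum]
  refine sum_congr rfl fun r _ => ?_
  rw [← Function.iterate_add_apply, ← Function.iterate_add_apply, add_comm r, add_comm r]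
  ring

theorem sq_integral_mul_le {Ω : Type*} [MeasurableSpace Ω] {μ : Measure Ω} {f g : Ω → ℝ}
    (hf : Integrable (fun x => f x ^ 2) μ) (hg : Integrable (fun x => g x ^ 2) μ)
    (hfg : Integrable (fun x => f x * g x) μ) :
    (∫ x, f x * g x ∂μ) ^ 2 ≤ (∫ x, f x ^ 2 ∂μ) * ∫ x, g x ^ 2 ∂μ := by
  have h (t : ℝ) : 0 ≤ (∫ x, f x ^ 2 ∂μ) * (t * t) + (2 * ∫ x, f x * g x ∂μ) * t +
      ∫ x, g x ^ 2 ∂μ := by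
    have h0 : 0 ≤ ∫ x, (t * f x + g x) ^ 2 ∂μ := integral_nonneg fun x => sq_nonneg _
    have e : (fun x => (t * f x + g x) ^ 2) =
        fun x => (t * t * f x ^ 2 + 2 * t * (f x * g x)) + g x ^ 2 := by funext x; ring
    rw [e, integral_add (f := fun x => t * t * f x ^ 2 + 2 * t * (f x * g x))
      ((hf.const_mul _).add (hfg.const_mul _)) hg,
      integral_add (hf.const_mul _) (hfg.const_mul _), integral_const_mul,
      integral_const_mul] at h0
    linarith
  have := discrim_le_zero h
  rw [discrim] at this
  linarith

theorem integral_sq_mul_sq_le {Ω : Type*} [MeasurableSpace Ω] {μ : Measure Ω} {f g : Ω → ℝ}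
    (hf : Integrable (fun x => f x ^ 4) μ) (hg : Integrable (fun x => g x ^ 4) μ)
    (hfg : Integrable (fun x => f x ^ 2 * g x ^ 2) μ) {α β : ℝ} (hα : 0 ≤ α) (hβ : 0 ≤ β)
    (hfα : ∫ x, f x ^ 4 ∂μ ≤ α ^ 2) (hgβ : ∫ x, g x ^ 4 ∂μ ≤ β ^ 2) :
    ∫ x, f x ^ 2 * g x ^ 2 ∂μ ≤ α * β := by
  have h := sq_integral_mul_le (μ := μ) (f := fun x => f x ^ 2) (g := fun x => g x ^ 2)
    (by simpa only [← pow_mul] using hf) (by simpa only [← pow_mul] using hg) hfg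
  simp only [← pow_mul, Nat.reduceMul] at h
  refine le_of_abs_le (abs_le_of_sq_le_sq ?_ (mul_nonneg hα hβ))
  rw [mul_pow]
  exact h.trans (mul_le_mul hfα hgβ (integral_nonneg fun x => by positivity) (by positivity))

/-- The standard Gaussian measure on `ℝⁿ`. -/
abbrev gaussianPi (n : ℕ) : Measure (Fin n → ℝ) :=
  Measure.pi fun _ => ProbabilityTheory.gaussianReal 0 1

theorem integrable_eval_gaussianPi {n : ℕ} (p : MvPolynomial (Fin n) ℝ) :
    Integrable (fun x => eval x p) (gaussianPi n) := by
  induction p using MvPolynomial.induction_on' with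
  | add p q hp hq => simpa using! hp.add hq
  | monomial u a =>
    simp only [eval_monomial, Finsupp.prod_fintype, pow_zero, implies_true]
    refine Integrable.const_mul ?_ a
    refine Integrable.fintype_prod (f := fun i (y : ℝ) => y ^ u i) fun i => ?_
    simpa using integrable_eval_gaussianReal (Polynomial.X ^ u i)

theorem integrable_gaussianPi_of_eval {n : ℕ} {F : (Fin n → ℝ) → ℝ} (p : MvPolynomial (Fin n) ℝ)
    (h : ∀ x, eval x p = F x) : Integrable F (gaussianPi n) :=
  (integrable_eval_gaussianPi p).congr (.of_forall h)

theorem integral_eval_gaussianPi_succ {n : ℕ} (p : MvPolynomial (Fin (n + 1)) ℝ) :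
    ∫ x, eval x p ∂(gaussianPi (n + 1)) =
      ∫ x, gaussianFunctional ((finSuccEquiv ℝ n p).map (eval x)) ∂(gaussianPi n) := by
  have h := (measurePreserving_piFinSuccAbove
    (fun _ : Fin (n + 1) => ProbabilityTheory.gaussianReal 0 1) 0).symm
  have hi := (h.integrable_comp_emb (MeasurableEquiv.measurableEmbedding _)).2
    (integrable_eval_gaussianPi p)
  rw [← h.integral_comp']
  refine (integral_prod_symm _ hi).trans ?_
  refine integral_congr_ae (.of_forall fun x => ?_)
  simp only [gaussianFunctional_apply]
  refine integral_congr_ae (.of_forall fun y => ?_)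
  simp [← eval_eq_eval_mv_eval', MeasurableEquiv.piFinSuccAbove_symm_apply, Fin.insertNthEquiv]

/-- The coefficient polynomials of `p` in the Hermite expansion in the first variable. -/
def hermiteCoeff {n : ℕ} (p : MvPolynomial (Fin (n + 1)) ℝ) (k a : ℕ) : MvPolynomial (Fin n) ℝ :=
  ∑ j ∈ Finset.range (k + 1),
    C (gaussianFunctional (Polynomial.derivative^[a] (Polynomial.X ^ j))) *
      (finSuccEquiv ℝ n p).coeff j

theorem natDegree_finSuccEquiv_le {n k : ℕ} {p : MvPolynomial (Fin (n + 1)) ℝ}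
    (hp : p.totalDegree ≤ k) : (finSuccEquiv ℝ n p).natDegree ≤ k := by
  rw [natDegree_finSuccEquiv]
  exact (degreeOf_le_totalDegree p 0).trans hp

theorem eval_hermiteCoeff {n k : ℕ} {p : MvPolynomial (Fin (n + 1)) ℝ} (hp : p.totalDegree ≤ k)
    (a : ℕ) (x : Fin n → ℝ) :
    eval x (hermiteCoeff p k a) =
      gaussianFunctional (Polynomial.derivative^[a] ((finSuccEquiv ℝ n p).map (eval x))) := by
  have hd : ((finSuccEquiv ℝ n p).map (eval x)).natDegree < k + 1 :=
    Nat.lt_succ_of_le (Polynomial.natDegree_map_le.trans (natDegree_finSuccEquiv_le hp))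
  rw [Polynomial.as_sum_range' _ _ hd, Polynomial.iterate_derivative_sum, map_sum,
    hermiteCoeff, map_sum]
  refine Finset.sum_congr rfl fun j _ => ?_
  rw [← Polynomial.C_mul_X_pow_eq_monomial, ← Polynomial.smul_eq_C_mul,
    Polynomial.iterate_derivative_smul, map_smul, map_mul, eval_C, Polynomial.coeff_map]
  simp [mul_comm]

theorem totalDegree_hermiteCoeff_le {n k : ℕ} {p : MvPolynomial (Fin (n + 1)) ℝ}
    (hp : p.totalDegree ≤ k) (a : ℕ) : (hermiteCoeff p k a).totalDegree ≤ k - a := by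
  refine totalDegree_finsetSum_le fun j _ => ?_
  by_cases hj : j < a
  · rw [Polynomial.iterate_derivative_eq_zero (by simpa using hj)]
    simp
  · refine (totalDegree_mul _ _).trans ?_
    rw [totalDegree_C, zero_add]
    by_cases h0 : (finSuccEquiv ℝ n p).coeff j = 0
    · simp [h0]
    · have := totalDegree_coeff_finSuccEquiv_add_le p j h0
      omega

theorem hermiteCoeff_eq_zero {n k a : ℕ} (p : MvPolynomial (Fin (n + 1)) ℝ) (ha : k < a) :
    hermiteCoeff p k a = 0 := by
  refine Finset.sum_eq_zero fun j hj => ?_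
  rw [Finset.mem_range] at hj
  rw [Polynomial.iterate_derivative_eq_zero (by rw [Polynomial.natDegree_X_pow]; omega)]
  simp

open Finset in
/-- Gaussian hypercontractivity for polynomials of degree at most `k`. -/
theorem integral_eval_pow_four_gaussianPi_le {n : ℕ} (k : ℕ) (p : MvPolynomial (Fin n) ℝ)
    (hp : p.totalDegree ≤ k) :
    ∫ x, eval x p ^ 4 ∂(gaussianPi n) ≤ 16 ^ k * (∫ x, eval x p ^ 2 ∂(gaussianPi n)) ^ 2 := by
  induction n generalizing k with
  | zero =>
    have h (f : (Fin 0 → ℝ) → ℝ) : ∫ x, f x ∂(gaussianPi 0) = f 0 := by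
      have : f = fun _ => f 0 := by
        funext x; rw [Subsingleton.elim x 0]
      rw [this]; simp
    rw [h, h]
    have h1 : (1 : ℝ) ≤ 16 ^ k := one_le_pow₀ (by norm_num)
    have h2 : 0 ≤ eval 0 p ^ 4 := by positivity
    nlinarith
  | succ n ih =>
    set f := hermiteCoeff p k
    set L := 2 * (k + 1) + 1 + (k + 1)
    set J : ℕ → ℝ := fun a => ∫ x, eval x (f a) ^ 2 ∂(gaussianPi n) with hJ
    have hJ0 (a) : 0 ≤ J a := integral_nonneg fun x => sq_nonneg _
    have hdeg (x : Fin n → ℝ) : ((finSuccEquiv ℝ n p).map (eval x)).natDegree < k + 1 :=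
      Nat.lt_succ_of_le (Polynomial.natDegree_map_le.trans (natDegree_finSuccEquiv_le hp))
    have hcross (a b : ℕ) : ∫ x, eval x (f a) ^ 2 * eval x (f b) ^ 2 ∂(gaussianPi n) ≤
        (4 ^ (k - a) * J a) * (4 ^ (k - b) * J b) := by
      have hi (c : ℕ) : ∫ x, eval x (f c) ^ 4 ∂(gaussianPi n) ≤ (4 ^ (k - c) * J c) ^ 2 := by
        refine (ih (k - c) (f c) (totalDegree_hermiteCoeff_le hp c)).trans_eq ?_
        rw [mul_pow, ← pow_mul, mul_comm _ 2, pow_mul]; norm_num [hJ]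
      refine integral_sq_mul_sq_le ?_ ?_ ?_ (mul_nonneg (by positivity) (hJ0 a))
        (mul_nonneg (by positivity) (hJ0 b)) (hi a) (hi b)
      · exact integrable_gaussianPi_of_eval (f a ^ 4) (by simp)
      · exact integrable_gaussianPi_of_eval (f b ^ 4) (by simp)
      · exact integrable_gaussianPi_of_eval (f a ^ 2 * f b ^ 2) (by simp)
    have h2 : ∫ x, eval x p ^ 2 ∂(gaussianPi (n + 1)) =
        ∑ a ∈ range L, (1 / a.factorial : ℝ) * J a := by
      have h := integral_eval_gaussianPi_succ (p ^ 2)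
      simp only [map_pow, Polynomial.map_pow] at h
      rw [h]
      simp only [hJ, ← integral_const_mul]
      rw [← integral_finsetSum]
      · refine integral_congr_ae (.of_forall fun x => ?_)
        simp only
        rw [sq, gaussianFunctional_mul L]
        · refine sum_congr rfl fun a _ => ?_
          rw [eval_hermiteCoeff hp, sq]
        · refine Polynomial.degree_le_natDegree.trans_lt ?_
          have := hdeg x
          exact_mod_cast (show _ < L by omega)
      · intro a _
        exact (integrable_gaussianPi_of_eval (f a ^ 2) (by simp)).const_mul (1 / a.factorial : ℝ)
    have h4 : ∫ x, eval x p ^ 4 ∂(gaussianPi (n + 1)) ≤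
        ∑ a ∈ range L, ∑ b ∈ range L, (4 ^ a / a.factorial * (4 ^ b / b.factorial) : ℝ) *
          ∫ x, eval x (f a) ^ 2 * eval x (f b) ^ 2 ∂(gaussianPi n) := by
      have h := integral_eval_gaussianPi_succ (p ^ 4)
      simp only [map_pow, Polynomial.map_pow] at h
      rw [h]
      have h_int (a b : ℕ) : Integrable (fun x => (4 ^ a / a.factorial * (4 ^ b / b.factorial) : ℝ) *
          (eval x (f a) ^ 2 * eval x (f b) ^ 2)) (gaussianPi n) := by
        exact (integrable_gaussianPi_of_eval (f a ^ 2 * f b ^ 2) (by simp)).const_mul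
          (4 ^ a / a.factorial * (4 ^ b / b.factorial) : ℝ)
      simp only [← integral_const_mul]
      simp_rw [← integral_finsetSum (range L) fun b _ => h_int _ b]
      rw [← integral_finsetSum _ fun a _ => integrable_finsetSum _ fun b _ => h_int a b]
      refine integral_mono_of_nonneg (.of_forall fun x => ?_)
        (integrable_finsetSum _ fun a _ => integrable_finsetSum _ fun b _ => h_int a b)
        (.of_forall fun x => ?_)
      · simp only [Pi.zero_apply, gaussianFunctional_apply, Polynomial.eval_pow]
        exact integral_nonneg fun y => by positivity
      · refine (gaussianFunctional_pow_four_le _ (k + 1) (hdeg x)).trans_eq ?_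
        rw [sq, sum_mul_sum]
        refine sum_congr rfl fun a _ => sum_congr rfl fun b _ => ?_
        rw [eval_hermiteCoeff hp, eval_hermiteCoeff hp]
        ring
    have h5 (a : ℕ) : (4 ^ a / a.factorial : ℝ) * (4 ^ (k - a) * J a) =
        4 ^ k * ((1 / a.factorial : ℝ) * J a) := by
      by_cases ha : a ≤ k
      · rw [show (4 : ℝ) ^ k = 4 ^ a * 4 ^ (k - a) by rw [← pow_add]; congr 1; omega]
        ring
      · have : J a = 0 := by
          simp [hJ, f, hermiteCoeff_eq_zero p (not_le.1 ha)]
        simp [this]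
    calc _ ≤ _ := h4
      _ ≤ ∑ a ∈ range L, ∑ b ∈ range L, (4 ^ a / a.factorial * (4 ^ b / b.factorial) : ℝ) *
          ((4 ^ (k - a) * J a) * (4 ^ (k - b) * J b)) :=
        sum_le_sum fun a _ => sum_le_sum fun b _ =>
          mul_le_mul_of_nonneg_left (hcross a b) (by positivity)
      _ = (∑ a ∈ range L, (4 ^ a / a.factorial : ℝ) * (4 ^ (k - a) * J a)) ^ 2 := by
        rw [sq, sum_mul_sum]
        exact sum_congr rfl fun a _ => sum_congr rfl fun b _ => by ring
      _ = _ := by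
        simp_rw [h5]
        rw [← mul_sum, h2, mul_pow, ← pow_mul, mul_comm k 2, pow_mul]
        norm_num

theorem dotProduct_self_nonneg_real {n : ℕ} (v : Fin n → ℝ) : 0 ≤ v ⬝ᵥ v :=
  Finset.sum_nonneg fun _ _ => mul_self_nonneg _

open Matrix in
/-- Householder reflections act transitively on vectors of equal length. -/
theorem exists_orthogonal_mulVec_eq {n : ℕ} {v w : Fin n → ℝ} (h : v ⬝ᵥ v = w ⬝ᵥ w) :
    ∃ Q : Matrix (Fin n) (Fin n) ℝ, Q * Q.transpose = 1 ∧ v ᵥ* Q = w := by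
  by_cases hvw : v = w
  · exact ⟨1, by simp, by simp [hvw]⟩
  set u := v - w
  have hu : u ⬝ᵥ u ≠ 0 := fun h0 => hvw (sub_eq_zero.1 (dotProduct_self_eq_zero.1 h0))
  have huv : 2 * (v ⬝ᵥ u) = u ⬝ᵥ u := by
    simp only [u, dotProduct_sub, sub_dotProduct, h, dotProduct_comm w v]
    ring
  refine ⟨1 - (2 / (u ⬝ᵥ u)) • vecMulVec u u, ?_, ?_⟩
  · rw [transpose_sub, transpose_smul, transpose_vecMulVec, transpose_one, sub_mul, mul_sub,
      mul_sub, one_mul, one_mul, mul_one, smul_mul_smul, vecMulVec_mul_vecMulVec,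
      vecMulVec_smul, smul_smul]
    rw [show 2 / (u ⬝ᵥ u) * (2 / (u ⬝ᵥ u)) * (u ⬝ᵥ u) = 2 / (u ⬝ᵥ u) + 2 / (u ⬝ᵥ u) by
      field_simp; norm_num, add_smul]
    abel
  · rw [vecMul_sub, vecMul_one, vecMul_smul, vecMul_vecMulVec, smul_smul,
      show 2 / (u ⬝ᵥ u) * (v ⬝ᵥ u) = 1 by rw [← huv]; field_simp; simp [← huv] at hu; field_simp]
    simp [u]

namespace BiformPaper.IsSphereMeasure

variable {n : ℕ} {σ : Measure (Fin n → ℝ)}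

open Matrix

theorem integral_exp_dotProduct_eq (hσ : IsSphereMeasure n σ) {v w : Fin n → ℝ}
    (h : v ⬝ᵥ v = w ⬝ᵥ w) :
    ∫ x, Complex.exp ((v ⬝ᵥ x : ℝ) * Complex.I) ∂σ =
      ∫ x, Complex.exp ((w ⬝ᵥ x : ℝ) * Complex.I) ∂σ := by
  obtain ⟨Q, hQ, rfl⟩ := exists_orthogonal_mulVec_eq h
  have hc : Continuous fun x : Fin n → ℝ => Complex.exp ((v ⬝ᵥ x : ℝ) * Complex.I) := by
    fun_prop
  conv_lhs => rw [← hσ.invariant Q hQ]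
  rw [integral_map (by fun_prop) hc.aestronglyMeasurable]
  simp only [dotProduct_mulVec]

theorem ae_dotProduct_self (hσ : IsSphereMeasure n σ) : ∀ᵐ x ∂σ, x ⬝ᵥ x = 1 := by
  refine Filter.mem_of_superset (mem_ae_iff.2 hσ.onSphere) fun x hx => ?_
  simpa [unitSphere, dotProduct, sq] using hx

end BiformPaper.IsSphereMeasure

open Matrix in
theorem integral_exp_dotProduct_gaussianPi {n : ℕ} (s : Fin n → ℝ) :
    ∫ z, Complex.exp ((s ⬝ᵥ z : ℝ) * Complex.I) ∂(gaussianPi n) =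
      Complex.exp (-((s ⬝ᵥ s : ℝ) : ℂ) / 2) := by
  have h (z : Fin n → ℝ) : Complex.exp ((s ⬝ᵥ z : ℝ) * Complex.I) =
      ∏ i, Complex.exp ((s i * z i : ℝ) * Complex.I) := by
    rw [← Complex.exp_sum, dotProduct, Complex.ofReal_sum, Finset.sum_mul]
  have h1 (t : ℝ) : ∫ y, Complex.exp ((t * y : ℝ) * Complex.I)
      ∂(ProbabilityTheory.gaussianReal 0 1) = Complex.exp (-((t * t : ℝ) : ℂ) / 2) := by
    have := ProbabilityTheory.charFun_gaussianReal (μ := 0) (v := 1) t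
    rw [charFun_apply_real] at this
    simp only [Complex.ofReal_mul]
    rw [this]
    congr 1
    push_cast
    ring
  simp_rw [h]
  rw [integral_fintype_prod_eq_prod
    (f := fun i (y : ℝ) => Complex.exp ((s i * y : ℝ) * Complex.I))]
  simp_rw [h1]
  rw [← Complex.exp_sum, dotProduct, Complex.ofReal_sum, ← Finset.sum_neg_distrib,
    Finset.sum_div]

open Matrix in
/-- A standard Gaussian vector is a uniformly distributed direction scaled by an independent
radius. -/
theorem BiformPaper.IsSphereMeasure.map_smul_gaussianPi_prod {n : ℕ} {σ : Measure (Fin n → ℝ)}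
    (hσ : IsSphereMeasure n σ) :
    ((gaussianPi n).prod σ).map (fun q => √(q.1 ⬝ᵥ q.1) • q.2) = gaussianPi n := by
  have := hσ.prob
  have hm : Measurable fun q : (Fin n → ℝ) × (Fin n → ℝ) => √(q.1 ⬝ᵥ q.1) • q.2 := by
    fun_prop
  have := Measure.isProbabilityMeasure_map (μ := (gaussianPi n).prod σ) hm.aemeasurable
  refine Measure.ext_of_charFunDual (funext fun L => ?_)
  obtain ⟨t, ht⟩ : ∃ t : Fin n → ℝ, ∀ v, L v = t ⬝ᵥ v := by
    refine ⟨fun i => L (Pi.single i 1), fun v => ?_⟩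
    conv_lhs => rw [pi_eq_sum_univ' v]
    simp [dotProduct, mul_comm]
  have h_int {f : (Fin n → ℝ) × (Fin n → ℝ) → ℝ} (hf : Continuous f) :
      Integrable (fun q => Complex.exp (f q * Complex.I)) ((gaussianPi n).prod σ) :=
    Integrable.of_bound (C := 1) (by fun_prop) (.of_forall fun q => by
      rw [Complex.norm_exp_ofReal_mul_I])
  simp only [charFunDual_apply, ht, integral_exp_dotProduct_gaussianPi]
  rw [integral_map hm.aemeasurable (by fun_prop), integral_prod _ (h_int (by fun_prop))]
  have h1 (z : Fin n → ℝ) :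
      ∫ x, Complex.exp ((t ⬝ᵥ (√(z ⬝ᵥ z) • x) : ℝ) * Complex.I) ∂σ =
      ∫ x, Complex.exp (((√(t ⬝ᵥ t) • x) ⬝ᵥ z : ℝ) * Complex.I) ∂σ := by
    have := hσ.integral_exp_dotProduct_eq (v := √(z ⬝ᵥ z) • t) (w := √(t ⬝ᵥ t) • z) (by
      simp only [dotProduct_smul, smul_dotProduct, smul_eq_mul, ← mul_assoc]
      rw [Real.mul_self_sqrt (dotProduct_self_nonneg_real z),
        Real.mul_self_sqrt (dotProduct_self_nonneg_real t), mul_comm])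
    simpa only [dotProduct_smul, smul_dotProduct, smul_eq_mul, dotProduct_comm z] using this
  simp only [h1]
  rw [integral_integral_swap (h_int (f := fun q => (√(t ⬝ᵥ t) • q.2) ⬝ᵥ q.1) (by fun_prop))]
  simp only [integral_exp_dotProduct_gaussianPi]
  rw [integral_congr_ae (g := fun _ => Complex.exp (-((t ⬝ᵥ t : ℝ) : ℂ) / 2))]
  · simp
  · filter_upwards [hσ.ae_dotProduct_self] with x hx
    simp only [dotProduct_smul, smul_dotProduct, smul_eq_mul, hx,
      mul_one, Real.mul_self_sqrt (dotProduct_self_nonneg_real t)]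

theorem MvPolynomial.IsHomogeneous.eval_smul_eq {ι : Type*} {p : MvPolynomial ι ℝ} {k : ℕ}
    (hp : p.IsHomogeneous k) (c : ℝ) (x : ι → ℝ) : eval (c • x) p = c ^ k * eval x p := by
  simp only [eval_eq, Finset.mul_sum]
  refine Finset.sum_congr rfl fun d hd => ?_
  simp only [Pi.smul_apply, smul_eq_mul, mul_pow, Finset.prod_mul_distrib,
    Finset.prod_pow_eq_pow_sum]
  rw [← hp.degree_eq_sum_deg_support hd]
  ring

theorem integral_radius_pow_pos {n : ℕ} (hn : 0 < n) (k : ℕ) :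
    0 < ∫ z, (z ⬝ᵥ z) ^ k ∂(gaussianPi n) := by
  have hi : Integrable (fun z : Fin n → ℝ => (z ⬝ᵥ z) ^ k) (gaussianPi n) :=
    integrable_gaussianPi_of_eval ((∑ i, X i * X i) ^ k) (by simp [dotProduct])
  have h0 : 0 ≤ fun z : Fin n → ℝ => (z ⬝ᵥ z) ^ k := fun z =>
    pow_nonneg (dotProduct_self_nonneg_real z) k
  refine (integral_nonneg h0).lt_of_ne' fun h => ?_
  rw [integral_eq_zero_iff_of_nonneg h0 hi] at h
  have := Fin.pos_iff_nonempty.1 hn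
  have := ProbabilityTheory.nullSingletonClass_gaussianReal (μ := 0) (v := 1) one_ne_zero
  have h1 : ∀ᵐ z ∂(gaussianPi n), z ≠ 0 := compl_mem_ae_iff.2 (measure_singleton 0)
  obtain ⟨z, hz, hz1⟩ := (h.and h1).exists
  exact hz1 (dotProduct_self_eq_zero.1 (eq_zero_of_pow_eq_zero hz))

namespace BiformPaper.IsSphereMeasure

variable {n : ℕ} {σ : Measure (Fin n → ℝ)}

theorem integral_eval_gaussianPi (hσ : IsSphereMeasure n σ) {k : ℕ} {p : MvPolynomial (Fin n) ℝ}
    (hp : p.IsHomogeneous (2 * k)) :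
    ∫ z, eval z p ∂(gaussianPi n) =
      (∫ z, (z ⬝ᵥ z) ^ k ∂(gaussianPi n)) * ∫ x, eval x p ∂σ := by
  have := hσ.prob
  have hc : Continuous fun z : Fin n → ℝ => eval z p := MvPolynomial.continuous_eval p
  conv_lhs => rw [← hσ.map_smul_gaussianPi_prod]
  rw [integral_map (by fun_prop) hc.aestronglyMeasurable, ← integral_prod_mul]
  simp only [hp.eval_smul_eq, pow_mul, Real.sq_sqrt (dotProduct_self_nonneg_real _)]

/-- Hypercontractivity for homogeneous polynomials on the sphere. -/
theorem integral_eval_pow_four_le (hσ : IsSphereMeasure n σ) (hn : 0 < n) {k : ℕ}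
    {p : MvPolynomial (Fin n) ℝ} (hp : p.IsHomogeneous k) :
    ∫ x, eval x p ^ 4 ∂σ ≤ 16 ^ k * (∫ x, eval x p ^ 2 ∂σ) ^ 2 := by
  have h := integral_eval_pow_four_gaussianPi_le k p hp.totalDegree_le
  have h4 := hσ.integral_eval_gaussianPi (k := 2 * k) (p := p ^ 4) (by
    convert hp.pow 4 using 1; ring)
  have h2 := hσ.integral_eval_gaussianPi (k := k) (p := p ^ 2) (by
    convert hp.pow 2 using 1; ring)
  simp only [map_pow] at h4 h2
  have hCS : (∫ z, (z ⬝ᵥ z) ^ k ∂(gaussianPi n)) ^ 2 ≤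
      ∫ z, (z ⬝ᵥ z) ^ (2 * k) ∂(gaussianPi n) := by
    have := sq_integral_mul_le (μ := gaussianPi n) (f := fun z => (z ⬝ᵥ z) ^ k) (g := fun _ => 1)
      (integrable_gaussianPi_of_eval (((∑ i, X i * X i) ^ k) ^ 2) (by simp [dotProduct]))
      (by simp) (integrable_gaussianPi_of_eval ((∑ i, X i * X i) ^ k) (by simp [dotProduct]))
    simpa [← pow_mul, mul_comm] using this
  rw [h4, h2, mul_pow] at h
  refine le_of_mul_le_mul_left (h.trans ?_) (integral_radius_pow_pos hn (2 * k))
  calc _ = (∫ z, (z ⬝ᵥ z) ^ k ∂(gaussianPi n)) ^ 2 * (16 ^ k * (∫ x, eval x p ^ 2 ∂σ) ^ 2) := by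
        ring
    _ ≤ _ := mul_le_mul_of_nonneg_right hCS (by positivity)

end BiformPaper.IsSphereMeasure

theorem MvPolynomial.IsWeightedHomogeneous.isHomogeneous_bind₁ {ι τ : Type*} {e : ι → ℕ} {k : ℕ}
    {p : MvPolynomial ι ℝ} (hp : p.IsWeightedHomogeneous e k) {ψ : ι → MvPolynomial τ ℝ}
    (hψ : ∀ i, (ψ i).IsHomogeneous (e i)) : (bind₁ ψ p).IsHomogeneous k := by
  rw [p.as_sum, map_sum]
  refine IsHomogeneous.sum _ _ _ fun d hd => ?_
  rw [bind₁_monomial, ← zero_add k]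
  refine (isHomogeneous_C _ _).mul ?_
  rw [← hp (mem_support_iff.1 hd), Finsupp.weight_apply, Finsupp.sum]
  refine IsHomogeneous.prod _ _ _ fun i _ => ?_
  rw [smul_eq_mul, mul_comm]
  exact (hψ i).pow _

theorem MvPolynomial.IsWeightedHomogeneous.map_weight {ι M N : Type*} [AddCommMonoid M]
    [AddCommMonoid N] {w : ι → M} {k : M} {p : MvPolynomial ι ℝ}
    (hp : p.IsWeightedHomogeneous w k) (φ : M →+ N) :
    p.IsWeightedHomogeneous (fun i => φ (w i)) (φ k) := by
  intro d hd
  rw [← hp hd, Finsupp.weight_apply, Finsupp.weight_apply, map_finsuppSum]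
  simp

namespace BiformPaper

variable {n m k₁ k₂ : ℕ} {g : MvPolynomial (Fin n ⊕ Fin m) ℝ}

theorem exists_isHomogeneous_eval_right (hg : g ∈ Biform n m k₁ k₂) (x : Fin n → ℝ) :
    ∃ p : MvPolynomial (Fin m) ℝ, p.IsHomogeneous k₂ ∧ ∀ y, eval y p = beval g x y := by
  refine ⟨bind₁ (Sum.elim (fun i => C (x i)) X) g,
    (hg.map_weight (AddMonoidHom.snd ℕ ℕ)).isHomogeneous_bind₁ ?_, fun y => ?_⟩
  · rintro (i | j)
    · exact isHomogeneous_C _ _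
    · exact isHomogeneous_X _ _
  · rw [beval, ← MvPolynomial.coe_aeval_eq_eval, ← MvPolynomial.coe_aeval_eq_eval]
    simp only [RingHom.coe_coe, aeval_bind₁]
    congr 2
    funext i
    cases i <;> simp

theorem exists_isHomogeneous_eval_left (hg : g ∈ Biform n m k₁ k₂) (y : Fin m → ℝ) :
    ∃ p : MvPolynomial (Fin n) ℝ, p.IsHomogeneous k₁ ∧ ∀ x, eval x p = beval g x y := by
  refine ⟨bind₁ (Sum.elim X fun i => C (y i)) g,
    (hg.map_weight (AddMonoidHom.fst ℕ ℕ)).isHomogeneous_bind₁ ?_, fun x => ?_⟩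
  · rintro (i | j)
    · exact isHomogeneous_X _ _
    · exact isHomogeneous_C _ _
  · rw [beval, ← MvPolynomial.coe_aeval_eq_eval, ← MvPolynomial.coe_aeval_eq_eval]
    simp only [RingHom.coe_coe, aeval_bind₁]
    congr 2
    funext i
    cases i <;> simp

theorem continuous_beval (g : MvPolynomial (Fin n ⊕ Fin m) ℝ) :
    Continuous fun q : (Fin n → ℝ) × (Fin m → ℝ) => beval g q.1 q.2 := by
  refine (MvPolynomial.continuous_eval g).comp (continuous_pi fun i => ?_)
  cases i <;> simp only [Sum.elim_inl, Sum.elim_inr] <;> fun_prop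

theorem isCompact_unitSphere (n : ℕ) : IsCompact (unitSphere n) := by
  refine Metric.isCompact_of_isClosed_isBounded
    (isClosed_eq (by fun_prop) continuous_const) ?_
  refine (Metric.isBounded_closedBall (x := (0 : Fin n → ℝ)) (r := 1)).subset fun x hx => ?_
  rw [mem_closedBall_zero_iff, pi_norm_le_iff_of_nonneg zero_le_one]
  intro i
  rw [Real.norm_eq_abs, ← sq_le_one_iff_abs_le_one, ← show ∑ i, x i ^ 2 = 1 from hx]
  exact Finset.single_le_sum (f := fun i => x i ^ 2) (fun i _ => sq_nonneg _) (Finset.mem_univ i)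

namespace IsSphereMeasure

variable {σ₁ : Measure (Fin n → ℝ)} {σ₂ : Measure (Fin m → ℝ)}

theorem restrict_unitSphere (h₁ : IsSphereMeasure n σ₁) : σ₁.restrict (unitSphere n) = σ₁ :=
  Measure.restrict_eq_self_of_ae_mem (mem_ae_iff.2 h₁.onSphere)

theorem integrable_of_continuous (h₁ : IsSphereMeasure n σ₁) {F : (Fin n → ℝ) → ℝ}
    (hF : Continuous F) : Integrable F σ₁ := by
  have := h₁.prob
  have := hF.continuousOn.integrableOn_compact (μ := σ₁) (isCompact_unitSphere n)
  rwa [IntegrableOn, h₁.restrict_unitSphere] at this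

theorem integrable_prod_of_continuous (h₁ : IsSphereMeasure n σ₁) (h₂ : IsSphereMeasure m σ₂)
    {F : (Fin n → ℝ) × (Fin m → ℝ) → ℝ} (hF : Continuous F) : Integrable F (σ₁.prod σ₂) := by
  have := h₁.prob
  have := h₂.prob
  have := hF.continuousOn.integrableOn_compact (μ := σ₁.prod σ₂)
    ((isCompact_unitSphere n).prod (isCompact_unitSphere m))
  rwa [IntegrableOn, ← Measure.prod_restrict, h₁.restrict_unitSphere,
    h₂.restrict_unitSphere] at this

theorem continuous_integral (h₂ : IsSphereMeasure m σ₂) {F : (Fin n → ℝ) × (Fin m → ℝ) → ℝ}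
    (hF : Continuous F) : Continuous fun x => ∫ y, F (x, y) ∂σ₂ := by
  have := h₂.prob
  have := continuous_parametric_integral_of_continuous (μ := σ₂)
    (f := fun x y => F (x, y)) hF (isCompact_unitSphere m)
  rwa [h₂.restrict_unitSphere] at this

/-- Tensorization of the comparison of fourth and second moments. -/
theorem integral_integral_pow_four_le (h₁ : IsSphereMeasure n σ₁) (h₂ : IsSphereMeasure m σ₂)
    {F : (Fin n → ℝ) × (Fin m → ℝ) → ℝ} (hF : Continuous F) {c₁ c₂ : ℝ} (hc₁ : 0 ≤ c₁)
    (hF₁ : ∀ y, ∫ x, F (x, y) ^ 4 ∂σ₁ ≤ c₁ ^ 2 * (∫ x, F (x, y) ^ 2 ∂σ₁) ^ 2)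
    (hF₂ : ∀ x, ∫ y, F (x, y) ^ 4 ∂σ₂ ≤ c₂ ^ 2 * (∫ y, F (x, y) ^ 2 ∂σ₂) ^ 2) :
    ∫ x, ∫ y, F (x, y) ^ 4 ∂σ₂ ∂σ₁ ≤ (c₁ * c₂) ^ 2 * (∫ x, ∫ y, F (x, y) ^ 2 ∂σ₂ ∂σ₁) ^ 2 := by
  have := h₁.prob
  have := h₂.prob
  set W : (Fin n → ℝ) → ℝ := fun x => ∫ y, F (x, y) ^ 2 ∂σ₂
  have hW : Continuous W := h₂.continuous_integral (F := fun q => F q ^ 2) (by fun_prop)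
  set V : (Fin m → ℝ) → ℝ := fun y => ∫ x, F (x, y) ^ 2 ∂σ₁
  have hV : Continuous V :=
    h₁.continuous_integral (F := fun q : (Fin m → ℝ) × (Fin n → ℝ) => F (q.2, q.1) ^ 2)
      (by fun_prop)
  have hV0 (y) : 0 ≤ V y := integral_nonneg fun x => sq_nonneg _
  set Q := ∫ x, W x ^ 2 ∂σ₁ with hQ
  have hQ0 : 0 ≤ Q := integral_nonneg fun x => sq_nonneg _
  have hV' : ∫ y, V y ∂σ₂ = ∫ x, W x ∂σ₁ := by
    refine integral_integral_swap (f := fun y x => F (x, y) ^ 2) ?_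
    exact h₂.integrable_prod_of_continuous h₁
      (F := fun q : (Fin m → ℝ) × (Fin n → ℝ) => F (q.2, q.1) ^ 2) (by fun_prop)
  have h4 : ∫ x, ∫ y, F (x, y) ^ 4 ∂σ₂ ∂σ₁ ≤ c₂ ^ 2 * Q := by
    rw [hQ, ← integral_const_mul]
    exact integral_mono
      (h₁.integrable_of_continuous (h₂.continuous_integral (F := fun q => F q ^ 4) (by fun_prop)))
      (h₁.integrable_of_continuous (by fun_prop)) hF₂
  have hQ1 : Q = ∫ y, ∫ x, W x * F (x, y) ^ 2 ∂σ₁ ∂σ₂ := by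
    rw [← integral_integral_swap (f := fun x y => W x * F (x, y) ^ 2)
      (h₁.integrable_prod_of_continuous h₂ (F := fun q => W q.1 * F q ^ 2) (by fun_prop))]
    simp only [integral_const_mul, hQ, sq (W _)]
    rfl
  have hy (y) : ∫ x, W x * F (x, y) ^ 2 ∂σ₁ ≤ √Q * c₁ * V y := by
    refine le_of_abs_le (abs_le_of_sq_le_sq ?_ (by have := hV0 y; positivity))
    refine (sq_integral_mul_le (h₁.integrable_of_continuous (by fun_prop))
      (h₁.integrable_of_continuous (by fun_prop))
      (h₁.integrable_of_continuous (by fun_prop))).trans ?_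
    simp only [← pow_mul, Nat.reduceMul]
    rw [mul_pow, mul_pow, Real.sq_sqrt hQ0, mul_assoc]
    exact mul_le_mul_of_nonneg_left (hF₁ y) hQ0
  have hQ2 : Q ≤ √Q * c₁ * ∫ x, W x ∂σ₁ := by
    rw [← hV', ← integral_const_mul]
    conv_lhs => rw [hQ1]
    refine integral_mono (h₂.integrable_of_continuous ?_)
      (h₂.integrable_of_continuous (by fun_prop)) hy
    exact h₁.continuous_integral
      (F := fun q : (Fin m → ℝ) × (Fin n → ℝ) => W q.2 * F (q.2, q.1) ^ 2) (by fun_prop)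
  have hQ3 : Q ≤ (c₁ * ∫ x, W x ∂σ₁) ^ 2 := by
    rcases hQ0.eq_or_lt with h | h
    · rw [← h]; positivity
    · have hs := Real.sqrt_pos.2 h
      have : √Q ≤ c₁ * ∫ x, W x ∂σ₁ := by
        refine le_of_mul_le_mul_left ?_ hs
        rwa [Real.mul_self_sqrt hQ0, ← mul_assoc]
      calc Q = √Q ^ 2 := (Real.sq_sqrt hQ0).symm
        _ ≤ _ := pow_le_pow_left₀ hs.le this 2
  calc _ ≤ _ := h4
    _ ≤ c₂ ^ 2 * (c₁ * ∫ x, W x ∂σ₁) ^ 2 := mul_le_mul_of_nonneg_left hQ3 (sq_nonneg _)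
    _ = _ := by ring

end IsSphereMeasure

end BiformPaper

/-- A bound of the fourth moment by the second yields a bound of the second moment by the first. -/
theorem sqrt_integral_sq_le {Ω : Type*} [MeasurableSpace Ω] {μ : Measure Ω} {f : Ω → ℝ}
    (h1 : Integrable f μ) (h2 : Integrable (fun x => f x ^ 2) μ)
    (h4 : Integrable (fun x => f x ^ 4) μ) {c : ℝ} (hc : 0 < c)
    (h : ∫ x, f x ^ 4 ∂μ ≤ c ^ 2 * (∫ x, f x ^ 2 ∂μ) ^ 2) :
    √(∫ x, f x ^ 2 ∂μ) ≤ c * ∫ x, |f x| ∂μ := by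
  set B := ∫ x, f x ^ 2 ∂μ
  set M := ∫ x, |f x| ∂μ
  have hM : 0 ≤ M := integral_nonneg fun x => abs_nonneg _
  have hB : 0 ≤ B := integral_nonneg fun x => sq_nonneg _
  rcases hB.eq_or_lt with h0 | h0
  · rw [← h0, Real.sqrt_zero]; positivity
  set s := √B
  have hs : 0 < s := Real.sqrt_pos.2 h0
  have hsB : s ^ 2 = B := Real.sq_sqrt hB
  have key : ∫ x, 3 * (c * s) ^ 2 * f x ^ 2 ∂μ ≤
      ∫ x, (2 * (c * s) ^ 3 * |f x| + f x ^ 4) ∂μ := by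
    refine integral_mono (h2.const_mul _) ((h1.abs.const_mul _).add h4) fun x => ?_
    have hd : 0 ≤ |f x| * (|f x| - c * s) ^ 2 * (|f x| + 2 * (c * s)) := by positivity
    have e2 : f x ^ 2 = |f x| ^ 2 := (sq_abs _).symm
    have e4 : f x ^ 4 = |f x| ^ 4 := by
      rw [show 4 = 2 * 2 from rfl, pow_mul, pow_mul, e2]
    simp only [e2, e4]
    nlinarith
  rw [integral_add (h1.abs.const_mul _) h4, integral_const_mul, integral_const_mul] at key
  change 3 * (c * s) ^ 2 * B ≤ 2 * (c * s) ^ 3 * M + _ at key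
  have : 2 * (c ^ 2 * s ^ 3) * s ≤ 2 * (c ^ 2 * s ^ 3) * (c * M) := by
    rw [← hsB] at key h
    nlinarith
  exact le_of_mul_le_mul_left this (by positivity)

open BiformPaper in
/-- **Lemma (reverse Hölder inequality for biforms).** For every biform
`g ∈ ℝ[x,y]_{k₁,k₂}` of bidegree `(k₁,k₂)`:
`(∫_T g² dσ)^{1/2} ≤ 4^{k₁+k₂} · ∫_T |g| dσ`, i.e. `‖g‖₂ ≤ 4^{k₁+k₂}·‖g‖₁`. -/
theorem statement13 (n m k₁ k₂ : ℕ) (hn : 0 < n) (hm : 0 < m) (hk₁ : 0 < k₁) (hk₂ : 0 < k₂)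
    (σ₁ : Measure (Fin n → ℝ)) (σ₂ : Measure (Fin m → ℝ))
    (hσ₁ : IsSphereMeasure n σ₁) (hσ₂ : IsSphereMeasure m σ₂)
    (g : MvPolynomial (Fin n ⊕ Fin m) ℝ) (hg : g ∈ Biform n m k₁ k₂) :
    Real.sqrt (∫ x, ∫ y, beval g x y ^ 2 ∂σ₂ ∂σ₁) ≤
      (4 : ℝ) ^ (k₁ + k₂) * ∫ x, ∫ y, |beval g x y| ∂σ₂ ∂σ₁ := by
  have := hσ₁.prob
  have := hσ₂.prob
  have hc := continuous_beval g
  have hpow (k : ℕ) : Continuous fun q : (Fin n → ℝ) × (Fin m → ℝ) => beval g q.1 q.2 ^ k :=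
    Continuous.pow hc k
  have hsq (k : ℕ) : ((4 : ℝ) ^ k) ^ 2 = 16 ^ k := by
    rw [← pow_mul, mul_comm, pow_mul]; norm_num
  have h4 := hσ₁.integral_integral_pow_four_le hσ₂ hc (c₁ := 4 ^ k₁) (c₂ := 4 ^ k₂)
    (by positivity)
    (fun y => by
      obtain ⟨p, hp, he⟩ := exists_isHomogeneous_eval_left hg y
      simpa only [← he, hsq] using hσ₁.integral_eval_pow_four_le hn hp)
    (fun x => by
      obtain ⟨p, hp, he⟩ := exists_isHomogeneous_eval_right hg x
      simpa only [← he, hsq] using hσ₂.integral_eval_pow_four_le hm hp)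
  have hi {F : (Fin n → ℝ) × (Fin m → ℝ) → ℝ} (hF : Continuous F) :=
    hσ₁.integrable_prod_of_continuous hσ₂ hF
  rw [← pow_add] at h4
  simp only [integral_integral (f := fun x y => beval g x y ^ 4) (hi (hpow 4)),
    integral_integral (f := fun x y => beval g x y ^ 2) (hi (hpow 2))] at h4
  rw [integral_integral (f := fun x y => beval g x y ^ 2) (hi (hpow 2)),
    integral_integral (f := fun x y => |beval g x y|) (hi hc.abs)]
  exact sqrt_integral_sq_le (hi hc) (hi (hpow 2)) (hi (hpow 4)) (by positivity) h4
end
end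

section
/- A linear map Φ : 𝕊_n → 𝕊_m is completely positive if and only if the associated biform p_Φ(x,y) = yᵀ·Φ(x·xᵀ)·y is a finite sum of squares of real polynomials in the variables x₁,…,x_n, y₁,…,y_m. -/
open MeasureTheory Matrix

noncomputable section

namespace PosMapPaper

/-- The real vector space `𝕊_n` of symmetric `n × n` real matrices. -/
def Sym (n : ℕ) : Submodule ℝ (Matrix (Fin n) (Fin n) ℝ) where
  carrier := {A | A.IsSymm}
  add_mem' := fun ha hb => ha.add hb
  zero_mem' := Matrix.isSymm_zero
  smul_mem' := fun c _ hA => hA.smul c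

/-- A linear map `Φ : 𝕊_n → 𝕊_m` is positive if it maps positive semidefinite matrices
to positive semidefinite matrices. -/
def IsPositiveMap {n m : ℕ} (Φ : Sym n →ₗ[ℝ] Sym m) : Prop :=
  ∀ A : Sym n, Matrix.PosSemidef (A : Matrix (Fin n) (Fin n) ℝ) →
    Matrix.PosSemidef (Φ A : Matrix (Fin m) (Fin m) ℝ)

/-- A linear map `Φ : 𝕊_n → 𝕊_m` is completely positive if for every `k ≥ 1` the
ampliation `Φ^{(k)} : M_k(ℝ) ⊗ 𝕊_n → M_k(ℝ) ⊗ 𝕊_m`, `M ⊗ A ↦ M ⊗ Φ(A)`, is positive.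
Here elements of `M_k(ℝ) ⊗ 𝕊_n` are identified (via the Kronecker product) with `k × k`
block matrices whose `(a,b)` block is the symmetric matrix `S a b`. -/
def IsCPMap {n m : ℕ} (Φ : Sym n →ₗ[ℝ] Sym m) : Prop :=
  ∀ (k : ℕ) (S : Fin k → Fin k → Sym n),
    Matrix.PosSemidef (Matrix.of fun p q : Fin k × Fin n =>
      (S p.1 q.1 : Matrix (Fin n) (Fin n) ℝ) p.2 q.2) →
    Matrix.PosSemidef (Matrix.of fun p q : Fin k × Fin m =>
      (Φ (S p.1 q.1) : Matrix (Fin m) (Fin m) ℝ) p.2 q.2)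

lemma vecMulVec_isSymm {n : ℕ} (x : Fin n → ℝ) : (Matrix.vecMulVec x x).IsSymm := by
  ext i j
  simp [Matrix.vecMulVec_apply, mul_comm]

/-- The rank-one symmetric matrix `x·xᵀ`. -/
def xxT {n : ℕ} (x : Fin n → ℝ) : Sym n := ⟨Matrix.vecMulVec x x, vecMulVec_isSymm x⟩

/-- The biform `p_Φ(x, y) = yᵀ · Φ(x·xᵀ) · y` associated to `Φ : 𝕊_n → 𝕊_m`. -/
def pPhi {n m : ℕ} (Φ : Sym n →ₗ[ℝ] Sym m) (x : Fin n → ℝ) (y : Fin m → ℝ) : ℝ :=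
  y ⬝ᵥ ((Φ (xxT x) : Matrix (Fin m) (Fin m) ℝ) *ᵥ y)

end PosMapPaper

namespace PosMapPaper

/-- A linear functional on square matrices that is nonnegative on all matrices `z·zᵀ` is a sum of
squares of linear forms in `z`. -/
lemma exists_sum_sq_of_nonneg_vecMulVec {ι : Type*} [Fintype ι] [DecidableEq ι]
    (g : Matrix ι ι ℝ →ₗ[ℝ] ℝ) (hg : ∀ z : ι → ℝ, 0 ≤ g (vecMulVec z z)) :
    ∃ (N : ℕ) (v : Fin N → ι → ℝ), ∀ z, g (vecMulVec z z) = ∑ i, (v i ⬝ᵥ z) ^ 2 := by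
  set C : Matrix ι ι ℝ := of fun a b => (g (single a b 1) + g (single b a 1)) / 2 with hC
  have key (z : ι → ℝ) : z ⬝ᵥ (C *ᵥ z) = g (vecMulVec z z) := by
    have h1 : g (vecMulVec z z) = ∑ a, ∑ b, z a * z b * g (single a b 1) := by
      conv_lhs => rw [matrix_eq_sum_single (vecMulVec z z)]
      simp only [map_sum]
      refine Finset.sum_congr rfl fun a _ => Finset.sum_congr rfl fun b _ => ?_
      rw [← smul_eq_mul (z a * z b), ← map_smul, smul_single, vecMulVec_apply, smul_eq_mul, mul_one]
    have h2 : g (vecMulVec z z) = ∑ a, ∑ b, z a * z b * g (single b a 1) := by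
      rw [h1, Finset.sum_comm]
      exact Finset.sum_congr rfl fun a _ => Finset.sum_congr rfl fun b _ => by ring
    have h3 : z ⬝ᵥ (C *ᵥ z) =
        (∑ a, ∑ b, z a * z b * g (single a b 1) + ∑ a, ∑ b, z a * z b * g (single b a 1)) / 2 := by
      simp only [dotProduct, mulVec, hC, of_apply, Finset.mul_sum, ← Finset.sum_add_distrib,
        Finset.sum_div]
      exact Finset.sum_congr rfl fun a _ => Finset.sum_congr rfl fun b _ => by ring
    rw [h3, ← h1, ← h2]
    ring
  have hpsd : C.PosSemidef := by
    refine .of_dotProduct_mulVec_nonneg ?_ fun z => ?_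
    · ext a b
      simp [hC, add_comm]
    · rw [star_trivial, key]
      exact hg z
  obtain ⟨N, v, hv⟩ := posSemidef_iff_eq_sum_vecMulVec.mp hpsd
  refine ⟨N, v, fun z => ?_⟩
  rw [← key, hv, sum_mulVec, dotProduct_sum]
  refine Finset.sum_congr rfl fun i _ => ?_
  rw [vecMulVec_mulVec, star_trivial, dotProduct_smul, dotProduct_comm z]
  simp [pow_two]

/-- Block matrices all of whose blocks are symmetric. -/
def symBlocks (n m : ℕ) : Submodule ℝ (Matrix (Fin m × Fin n) (Fin m × Fin n) ℝ) where
  carrier := {M | ∀ a b i j, M (a, i) (b, j) = M (a, j) (b, i)}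
  add_mem' hA hB a b i j := by simp [hA a b i j, hB a b i j]
  zero_mem' := by simp
  smul_mem' c A hA a b i j := by simp [hA a b i j]

/-- The block at position `(a, b)` of a matrix with symmetric blocks. -/
def symBlock {n m : ℕ} (a b : Fin m) : symBlocks n m →ₗ[ℝ] Sym n where
  toFun M := ⟨of fun i j => M.1 (a, i) (b, j), by ext i j; exact M.2 a b j i⟩
  map_add' _ _ := rfl
  map_smul' _ _ := rfl

lemma symBlock_apply {n m : ℕ} (a b : Fin m) (M : symBlocks n m) (i j : Fin n) :
    (symBlock a b M).1 i j = M.1 (a, i) (b, j) := rfl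

/-- The functional `M ↦ ∑ a b, Φ(M_{ab})_{ab}` on matrices with symmetric blocks `M_{ab}`. -/
def blockFunctional {n m : ℕ} (Φ : Sym n →ₗ[ℝ] Sym m) : symBlocks n m →ₗ[ℝ] ℝ where
  toFun M := ∑ a, ∑ b, (Φ (symBlock a b M)).1 a b
  map_add' A B := by simp [Finset.sum_add_distrib]
  map_smul' c A := by simp [Finset.mul_sum]

/-- The cone of (not necessarily symmetric) matrices with nonnegative quadratic form. -/
def nonnegFormCone (ι : Type*) [Fintype ι] : PointedCone ℝ (Matrix ι ι ℝ) where
  carrier := {M | ∀ v : ι → ℝ, 0 ≤ v ⬝ᵥ (M *ᵥ v)}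
  add_mem' hA hB v := by
    rw [add_mulVec, dotProduct_add]
    exact add_nonneg (hA v) (hB v)
  zero_mem' := by simp
  smul_mem' c A hA v := by
    change 0 ≤ v ⬝ᵥ (((c : ℝ) • A) *ᵥ v)
    rw [smul_mulVec, dotProduct_smul]
    exact mul_nonneg c.2 (hA v)

lemma exists_smul_one_add_mem_nonnegFormCone {ι : Type*} [Fintype ι] [DecidableEq ι]
    (M : Matrix ι ι ℝ) : ∃ c : ℝ, c • (1 : Matrix ι ι ℝ) + M ∈ nonnegFormCone ι := by
  refine ⟨∑ a, ∑ b, |M a b|, fun v => ?_⟩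
  have hv (a : ι) : v a ^ 2 ≤ v ⬝ᵥ v := by
    rw [dotProduct, pow_two]
    exact Finset.single_le_sum (f := fun i => v i * v i) (fun i _ => mul_self_nonneg (v i))
      (Finset.mem_univ a)
  rw [add_mulVec, smul_mulVec, one_mulVec, dotProduct_add, dotProduct_smul, smul_eq_mul]
  have h : v ⬝ᵥ (M *ᵥ v) = ∑ a, ∑ b, v a * (M a b * v b) := by
    simp [dotProduct, mulVec, Finset.mul_sum]
  rw [h]
  simp only [Finset.sum_mul, ← Finset.sum_add_distrib]
  refine Finset.sum_nonneg fun a _ => Finset.sum_nonneg fun b _ => ?_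
  have h1 : |v a * v b| ≤ v ⬝ᵥ v := by
    rw [abs_le]
    constructor <;> nlinarith [hv a, hv b, sq_nonneg (v a + v b), sq_nonneg (v a - v b)]
  have h2 : |v a * (M a b * v b)| ≤ |M a b| * (v ⬝ᵥ v) := by
    rw [mul_left_comm, abs_mul]
    exact mul_le_mul_of_nonneg_left h1 (abs_nonneg _)
  linarith [neg_abs_le (v a * (M a b * v b))]

lemma blockFunctional_nonneg {n m : ℕ} {Φ : Sym n →ₗ[ℝ] Sym m} (hΦ : IsCPMap Φ)
    (M : symBlocks n m) (hM : M.1 ∈ nonnegFormCone (Fin m × Fin n)) :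
    0 ≤ blockFunctional Φ M := by
  have hpsd := hΦ m (fun a b => symBlock a b M + symBlock b a M) <| by
    have : (of fun p q : Fin m × Fin n =>
        (symBlock p.1 q.1 M + symBlock q.1 p.1 M : Sym n).1 p.2 q.2) = M.1 + M.1ᵀ := by
      ext ⟨a, i⟩ ⟨b, j⟩
      simp [symBlock_apply, M.2 b a i j]
    rw [this]
    refine .of_dotProduct_mulVec_nonneg ?_ fun v => ?_
    · ext i j
      simp [add_comm]
    · have h : v ⬝ᵥ (M.1ᵀ *ᵥ v) = v ⬝ᵥ (M.1 *ᵥ v) := by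
        rw [mulVec_transpose, dotProduct_comm, dotProduct_mulVec]
      rw [star_trivial, add_mulVec, dotProduct_add, h]
      exact add_nonneg (hM v) (hM v)
  have h := hpsd.dotProduct_mulVec_nonneg fun p => if p.1 = p.2 then 1 else 0
  have hsymm (A : Sym m) (a b : Fin m) : A.1 a b = A.1 b a := A.2.apply b a
  have h2 : ∑ a, ∑ b, (Φ (symBlock b a M)).1 a b = blockFunctional Φ M := by
    rw [Finset.sum_comm]
    exact Finset.sum_congr rfl fun a _ => Finset.sum_congr rfl fun b _ => hsymm _ _ _
  have h3 : ∑ a, ∑ b, (Φ (symBlock a b M)).1 a b = blockFunctional Φ M := rfl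
  simp [dotProduct, mulVec, Fintype.sum_prod_type, Finset.sum_add_distrib, h2, h3] at h
  exact h

lemma exists_sum_sq_of_isCPMap {n m : ℕ} {Φ : Sym n →ₗ[ℝ] Sym m} (hΦ : IsCPMap Φ) :
    ∃ (N : ℕ) (q : Fin N → MvPolynomial (Fin n ⊕ Fin m) ℝ),
      ∀ (x : Fin n → ℝ) (y : Fin m → ℝ),
        pPhi Φ x y = ∑ i, (MvPolynomial.eval (Sum.elim x y) (q i)) ^ 2 := by
  obtain ⟨g, hgf, hg⟩ := riesz_extension (nonnegFormCone (Fin m × Fin n))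
    ⟨symBlocks n m, blockFunctional Φ⟩ (fun M hM => blockFunctional_nonneg hΦ M hM) fun M => by
      obtain ⟨c, hc⟩ := exists_smul_one_add_mem_nonnegFormCone M
      refine ⟨⟨c • 1, Submodule.smul_mem _ c fun a b i j => ?_⟩, hc⟩
      simp [one_apply, eq_comm]
  obtain ⟨N, v, hv⟩ := exists_sum_sq_of_nonneg_vecMulVec g fun z => hg _ fun v => by
    rw [vecMulVec_mulVec, dotProduct_comm v]
    simp [mul_self_nonneg]
  refine ⟨N, fun i => ∑ p : Fin m × Fin n, MvPolynomial.C (v i p) *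
    (MvPolynomial.X (Sum.inr p.1) * MvPolynomial.X (Sum.inl p.2)), fun x y => ?_⟩
  set z : Fin m × Fin n → ℝ := fun p => y p.1 * x p.2 with hz
  have hmem : vecMulVec z z ∈ symBlocks n m := fun a b i j => by
    simp only [vecMulVec_apply, hz]
    ring
  have hblock (a b : Fin m) : symBlock a b ⟨_, hmem⟩ = (y a * y b) • xxT x := by
    ext i j
    simp only [symBlock_apply, xxT, vecMulVec_apply, hz, Submodule.coe_smul, Matrix.smul_apply,
      smul_eq_mul]
    ring
  have hp : pPhi Φ x y = g (vecMulVec z z) := by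
    rw [hgf ⟨_, hmem⟩]
    change _ = ∑ a, ∑ b, (Φ (symBlock a b ⟨_, hmem⟩)).1 a b
    simp only [hblock, map_smul, pPhi, dotProduct, mulVec, Finset.mul_sum]
    refine Finset.sum_congr rfl fun a _ => Finset.sum_congr rfl fun b _ => ?_
    simp only [Submodule.coe_smul, Matrix.smul_apply, smul_eq_mul]
    ring
  rw [hp, hv]
  simp [dotProduct, hz]

/-- The derivative of a polynomial along a line. -/
lemma hasDerivAt_eval_add_mul {σ : Type*} [Fintype σ] (p : MvPolynomial σ ℝ) (a v : σ → ℝ) :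
    HasDerivAt (fun s : ℝ => MvPolynomial.eval (fun k => a k + s * v k) p)
      (∑ k, v k * MvPolynomial.eval a (MvPolynomial.pderiv k p)) 0 := by
  classical
  induction p using MvPolynomial.induction_on with
  | C c => simpa using hasDerivAt_const (0 : ℝ) c
  | add p q hp hq =>
    simpa [mul_add, Finset.sum_add_distrib] using hp.fun_add hq
  | mul_X p i hp =>
    have hX : HasDerivAt (fun s : ℝ => a i + s * v i) (v i) 0 := by
      simpa using ((hasDerivAt_id (0 : ℝ)).mul_const (v i)).const_add (a i)
    simp only [map_mul, MvPolynomial.eval_X]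
    refine (hp.fun_mul hX).congr_deriv ?_
    simp [Derivation.leibniz, MvPolynomial.pderiv_X, Pi.single_apply, mul_add,
      Finset.sum_add_distrib, Finset.sum_mul, apply_ite]
    rw [add_comm, mul_comm (v i)]
    congr 1
    exact Finset.sum_congr rfl fun k _ => by ring

lemma eq_sum_deriv_sq {ι : Type*} [Fintype ι] {f : ι → ℝ → ℝ} {f' : ι → ℝ} {c : ℝ}
    (hf : ∀ i, HasDerivAt (f i) (f' i) 0) (h : ∀ s, s ^ 2 * c = ∑ i, f i s ^ 2) :
    c = ∑ i, f' i ^ 2 := by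
  have h0 (i : ι) : f i 0 = 0 := by
    have := (Finset.sum_eq_zero_iff_of_nonneg fun i _ => sq_nonneg (f i 0)).mp
      (by simpa using (h 0).symm) i (Finset.mem_univ i)
    simpa using this
  have hlim : Filter.Tendsto (fun s : ℝ => ∑ i, (s⁻¹ * f i s) ^ 2) (nhdsWithin 0 {0}ᶜ)
      (nhds (∑ i, f' i ^ 2)) := by
    refine tendsto_finsetSum _ fun i _ => Filter.Tendsto.pow ?_ 2
    simpa [h0] using hasDerivAt_iff_tendsto_slope_zero.mp (hf i)
  refine tendsto_nhds_unique (tendsto_const_nhds.congr' ?_) hlim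
  filter_upwards [self_mem_nhdsWithin] with s hs
  have hs : s ≠ 0 := hs
  simp only [mul_pow]
  rw [← Finset.mul_sum, ← h s]
  field_simp

lemma pPhi_smul_left {n m : ℕ} (Φ : Sym n →ₗ[ℝ] Sym m) (s : ℝ) (x : Fin n → ℝ) (y : Fin m → ℝ) :
    pPhi Φ (s • x) y = s ^ 2 * pPhi Φ x y := by
  have : xxT (s • x) = s ^ 2 • xxT x := by
    ext i j
    simp only [xxT, vecMulVec_apply, Pi.smul_apply, smul_eq_mul, Submodule.coe_smul,
      Matrix.smul_apply]
    ring
  simp [pPhi, this, smul_mulVec]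

lemma pPhi_smul_right {n m : ℕ} (Φ : Sym n →ₗ[ℝ] Sym m) (s : ℝ) (x : Fin n → ℝ) (y : Fin m → ℝ) :
    pPhi Φ x (s • y) = s ^ 2 * pPhi Φ x y := by
  simp only [pPhi, mulVec_smul, smul_dotProduct, dotProduct_smul, smul_eq_mul]
  ring

/-- If `p_Φ` is a sum of squares of polynomials, it is a sum of squares of bilinear forms. -/
lemma exists_bilinear_sum_sq {n m N : ℕ} {Φ : Sym n →ₗ[ℝ] Sym m}
    {q : Fin N → MvPolynomial (Fin n ⊕ Fin m) ℝ}
    (hq : ∀ (x : Fin n → ℝ) (y : Fin m → ℝ),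
      pPhi Φ x y = ∑ i, (MvPolynomial.eval (Sum.elim x y) (q i)) ^ 2) :
    ∃ V : Fin N → Matrix (Fin m) (Fin n) ℝ,
      ∀ (x : Fin n → ℝ) (y : Fin m → ℝ), pPhi Φ x y = ∑ i, (y ⬝ᵥ (V i *ᵥ x)) ^ 2 := by
  have hx (x : Fin n → ℝ) (y : Fin m → ℝ) : pPhi Φ x y = ∑ i, (MvPolynomial.eval (Sum.elim 0 y)
      (∑ j, MvPolynomial.C (x j) * MvPolynomial.pderiv (Sum.inl j) (q i))) ^ 2 := by
    refine eq_sum_deriv_sq (f := fun i s => MvPolynomial.eval (Sum.elim (s • x) y) (q i))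
      (fun i => ?_) fun s => by rw [← pPhi_smul_left, hq]
    convert hasDerivAt_eval_add_mul (q i) (Sum.elim 0 y) (Sum.elim x 0) using 1
    · ext s
      congr 2
      ext (j | k) <;> simp
    · simp
  refine ⟨fun i => of fun k j => MvPolynomial.eval 0
    (MvPolynomial.pderiv (Sum.inr k) (MvPolynomial.pderiv (Sum.inl j) (q i))), fun x y => ?_⟩
  refine eq_sum_deriv_sq (f := fun i s => MvPolynomial.eval (Sum.elim 0 (s • y))
      (∑ j, MvPolynomial.C (x j) * MvPolynomial.pderiv (Sum.inl j) (q i)))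
      (fun i => ?_) fun s => by rw [← pPhi_smul_right, hx]
  convert hasDerivAt_eval_add_mul
    (∑ j, MvPolynomial.C (x j) * MvPolynomial.pderiv (Sum.inl j) (q i)) 0 (Sum.elim 0 y) using 1
  · ext s
    congr 2
    ext (j | k) <;> simp
  · simp [dotProduct, mulVec, mul_comm]

/-- A linear map on symmetric matrices is determined by its biform. -/
lemma eq_of_pPhi_eq {n m : ℕ} {Φ Ψ : Sym n →ₗ[ℝ] Sym m} (h : ∀ x y, pPhi Φ x y = pPhi Ψ x y) :
    Φ = Ψ := by
  have polar (A : Sym m) (k l : Fin m) : A.1 k l = ((Pi.single k 1 + Pi.single l 1) ⬝ᵥ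
      (A.1 *ᵥ (Pi.single k 1 + Pi.single l 1)) - Pi.single k 1 ⬝ᵥ (A.1 *ᵥ Pi.single k 1)
      - Pi.single l 1 ⬝ᵥ (A.1 *ᵥ Pi.single l 1)) / 2 := by
    have := A.2.apply k l
    simp [mulVec_add, this]
    ring
  have hrank (x : Fin n → ℝ) : Φ (xxT x) = Ψ (xxT x) := by
    ext k l
    rw [polar, polar (Ψ (xxT x))]
    simp only [pPhi] at h
    rw [h, h, h]
  have hdecomp (A : Sym n) : A = ∑ i, ∑ j, (A.1 i j / 2) •
      (xxT (Pi.single i 1 + Pi.single j 1) - xxT (Pi.single i 1) - xxT (Pi.single j 1)) := by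
    ext k l
    have hA := A.2.apply k l
    have (i j : Fin n) : (A.1 i j / 2) * ((Pi.single i 1 + Pi.single j 1 : Fin n → ℝ) k *
        (Pi.single i 1 + Pi.single j 1 : Fin n → ℝ) l -
        (Pi.single i 1 : Fin n → ℝ) k * (Pi.single i 1 : Fin n → ℝ) l -
        (Pi.single j 1 : Fin n → ℝ) k * (Pi.single j 1 : Fin n → ℝ) l) =
        (if k = i then if l = j then A.1 i j / 2 else 0 else 0) +
        (if l = i then if k = j then A.1 i j / 2 else 0 else 0) := by
      simp only [Pi.add_apply, Pi.single_apply]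
      split_ifs <;> ring
    simp [xxT, Matrix.sum_apply, vecMulVec_apply, -Pi.add_apply, this, Finset.sum_add_distrib, hA]
  ext1 A
  rw [hdecomp A]
  simp [hrank]

/-- The map `A ↦ ∑ i, Vᵢ·A·Vᵢᵀ` on symmetric matrices. -/
def krausMap {n m N : ℕ} (V : Fin N → Matrix (Fin m) (Fin n) ℝ) : Sym n →ₗ[ℝ] Sym m where
  toFun A := ⟨∑ i, V i * A.1 * (V i)ᵀ, by
    have hA : A.1ᵀ = A.1 := A.2
    change (∑ i, V i * A.1 * (V i)ᵀ)ᵀ = _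
    simp [transpose_sum, hA, Matrix.mul_assoc]⟩
  map_add' A B := by
    ext1
    simp [Matrix.mul_add, Matrix.add_mul, Finset.sum_add_distrib]
  map_smul' c A := by
    ext1
    simp [Finset.smul_sum]

lemma pPhi_krausMap {n m N : ℕ} (V : Fin N → Matrix (Fin m) (Fin n) ℝ) (x : Fin n → ℝ)
    (y : Fin m → ℝ) : pPhi (krausMap V) x y = ∑ i, (y ⬝ᵥ (V i *ᵥ x)) ^ 2 := by
  simp only [pPhi, krausMap, xxT, LinearMap.coe_mk, AddHom.coe_mk, sum_mulVec, dotProduct_sum]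
  refine Finset.sum_congr rfl fun i _ => ?_
  rw [mul_vecMulVec, vecMulVec_mul, vecMul_transpose, vecMulVec_mulVec, dotProduct_comm _ y]
  simp [pow_two]

lemma isCPMap_krausMap {n m N : ℕ} (V : Fin N → Matrix (Fin m) (Fin n) ℝ) :
    IsCPMap (krausMap V) := by
  intro k S hS
  let B (i : Fin N) : Matrix (Fin k × Fin m) (Fin k × Fin n) ℝ :=
    of fun p q => if p.1 = q.1 then V i p.2 q.2 else 0
  convert posSemidef_sum Finset.univ fun i _ => hS.mul_mul_conjTranspose_same (B i) using 1
  ext ⟨a, r⟩ ⟨b, s⟩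
  simp [krausMap, B, Matrix.sum_apply, Matrix.mul_apply, Fintype.sum_prod_type, ite_mul]

end PosMapPaper

open PosMapPaper in
/-- **Proposition (complete positivity of a map versus the associated biform being a sum
of squares).**  A linear map `Φ : 𝕊_n → 𝕊_m` is completely positive if and only if the
associated biform `p_Φ(x,y) = yᵀ·Φ(x·xᵀ)·y` is a finite sum of squares of real
polynomials in the variables `x₁,…,xₙ, y₁,…,y_m`. -/
theorem statement15 (n m : ℕ) (Φ : Sym n →ₗ[ℝ] Sym m) :
    IsCPMap Φ ↔
      ∃ (N : ℕ) (q : Fin N → MvPolynomial (Fin n ⊕ Fin m) ℝ),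
        ∀ (x : Fin n → ℝ) (y : Fin m → ℝ),
          pPhi Φ x y = ∑ i, (MvPolynomial.eval (Sum.elim x y) (q i)) ^ 2 := by
  refine ⟨exists_sum_sq_of_isCPMap, fun ⟨N, q, hq⟩ => ?_⟩
  obtain ⟨V, hV⟩ := exists_bilinear_sum_sq hq
  rw [eq_of_pPhi_eq fun x y => (hV x y).trans (pPhi_krausMap V x y).symm]
  exact isCPMap_krausMap V
end
end
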